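/- arXiv:2409.00380 — 4 statements merged into one kernel-verified Lean document; each statement's English description precedes it below -/
import Mathlib

section
/- Let ζ = e^{πi/6}, let G_28 = F_4 ⊂ GL_4(C) be generated by the four order-2 reflections s(β_1), ..., s(β_4) with roots β_1 = e_1 − e_2, β_2 = e_2 − e_3, β_3 = √2 e_3, β_4 = −(1/√2)(e_1 + e_2 + e_3 + e_4), and let g = s(β_1)s(β_2)s(β_3)s(β_4) be the Coxeter element. Let E be the ζ^3-eigenspace of g^3, a 2-dimensional subspace, N_E = {s ∈ G_28 : s(E) ⊆ E}, and π_E restriction to E. Then there exists a C-linear isomorphism ψ : E → C^2 such that ψ ∘ π_E(N_E) ∘ ψ^{−1} = G_8, where G_8 ⊂ GL_2(C) is generated by r_4 = [[1, 0], [0, i]] and r_4' = (1/2)·[[1+i, −1+i], [−1+i, 1+i]]. In other words, the 4-reflection subquotient of G_28 = F_4 is isomorphic to G_8. -/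
open Matrix MvPolynomial

namespace Paper

noncomputable section

/-- The standard Hermitian inner product `(v, w) = Σ v_i conj(w_i)` on `ℂ^N`. -/
def herm {N : ℕ} (v w : Fin N → ℂ) : ℂ := ∑ i, v i * (starRingEnd ℂ) (w i)

/-- The reflection `s(v, λ) : w ↦ w - (1 - λ) ((w,v)/(v,v)) v` with root `v` and
nontrivial eigenvalue `λ`, as a matrix. -/
def reflMat {N : ℕ} (v : Fin N → ℂ) (lam : ℂ) : Matrix (Fin N) (Fin N) ℂ :=
  Matrix.of fun i j =>
    (if i = j then (1 : ℂ) else 0) - (1 - lam) * v i * (starRingEnd ℂ) (v j) / herm v v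

/-- The monomial matrix `ι(θ, σ)` with `e_i ↦ θ_{σ(i)} e_{σ(i)}`. -/
def monomialMatrix {N : ℕ} (θ : Fin N → ℂ) (σ : Equiv.Perm (Fin N)) :
    Matrix (Fin N) (Fin N) ℂ :=
  Matrix.of fun j i => if j = σ i then θ (σ i) else 0

/-- The imprimitive reflection group `G(m, p, N)`: all monomial `N × N` matrices whose
nonzero entries are `m`-th roots of unity and whose product of nonzero entries is an
`(m/p)`-th root of unity. -/
def Gimp (m p N : ℕ) : Set (Matrix (Fin N) (Fin N) ℂ) :=
  {M | ∃ (θ : Fin N → ℂ) (σ : Equiv.Perm (Fin N)),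
    (∀ i, θ i ^ m = 1) ∧ (∏ i, θ i) ^ (m / p) = 1 ∧ M = monomialMatrix θ σ}

/-- The `μ`-eigenspace of (the linear map of) a matrix. -/
def eigSpace {n : ℕ} (M : Matrix (Fin n) (Fin n) ℂ) (μ : ℂ) : Submodule ℂ (Fin n → ℂ) :=
  Module.End.eigenspace M.mulVecLin μ

/-- The four explicit reflections. -/
def m0 : Matrix (Fin 4) (Fin 4) ℂ := !![0, 1, 0, 0; 1, 0, 0, 0; 0, 0, 1, 0; 0, 0, 0, 1]
def m1 : Matrix (Fin 4) (Fin 4) ℂ := !![1, 0, 0, 0; 0, 0, 1, 0; 0, 1, 0, 0; 0, 0, 0, 1]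
def m2 : Matrix (Fin 4) (Fin 4) ℂ := !![1, 0, 0, 0; 0, 1, 0, 0; 0, 0, -1, 0; 0, 0, 0, 1]
def m3 : Matrix (Fin 4) (Fin 4) ℂ :=
  !![1/2, -1/2, -1/2, -1/2; -1/2, 1/2, -1/2, -1/2; -1/2, -1/2, 1/2, -1/2; -1/2, -1/2, -1/2, 1/2]

/-- Parametrization of the eigenspace, and a left inverse. -/
def matA : Matrix (Fin 4) (Fin 2) ℂ :=
  !![-Complex.I/2, 0; 0, Complex.I/2; 0, 1/2; 1/2, 0]
def matAc : Matrix (Fin 4) (Fin 2) ℂ :=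
  !![Complex.I/2, 0; 0, -Complex.I/2; 0, 1/2; 1/2, 0]
def matS : Matrix (Fin 2) (Fin 4) ℂ := !![Complex.I, 0, 0, 1; 0, -Complex.I, 1, 0]
def matSc : Matrix (Fin 2) (Fin 4) ℂ := !![-Complex.I, 0, 0, 1; 0, Complex.I, 1, 0]
def matJ : Matrix (Fin 4) (Fin 4) ℂ := !![0, 0, 0, 1; 0, 0, -1, 0; 0, 1, 0, 0; -1, 0, 0, 0]
def g8a : Matrix (Fin 2) (Fin 2) ℂ := !![1, 0; 0, Complex.I]
def g8b : Matrix (Fin 2) (Fin 2) ℂ := (1 / 2 : ℂ) • !![1 + Complex.I, -1 + Complex.I;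
      -1 + Complex.I, 1 + Complex.I]

lemma refl0 : reflMat ![1, -1, 0, 0] (-1) = m0 := by
  ext i j
  fin_cases i <;> fin_cases j <;> simp [reflMat, herm, m0, Fin.sum_univ_four] <;> norm_num

lemma refl1 : reflMat ![0, 1, -1, 0] (-1) = m1 := by
  ext i j
  fin_cases i <;> fin_cases j <;> simp [reflMat, herm, m1, Fin.sum_univ_four] <;> norm_num

lemma sq2 : (Real.sqrt 2 : ℂ) * (Real.sqrt 2 : ℂ) = 2 := by
  rw [← Complex.ofReal_mul, Real.mul_self_sqrt (by norm_num)]; norm_num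

lemma sq2' : (Real.sqrt 2 : ℂ)⁻¹ * (Real.sqrt 2 : ℂ)⁻¹ = 1 / 2 := by
  rw [← mul_inv, sq2]; norm_num

lemma refl2 : reflMat ![0, 0, (Real.sqrt 2 : ℂ), 0] (-1) = m2 := by
  ext i j
  fin_cases i <;> fin_cases j <;>
    simp [reflMat, herm, m2, Fin.sum_univ_four, mul_assoc, sq2] <;> norm_num

lemma refl3 : reflMat ![-(1 / (Real.sqrt 2 : ℂ)), -(1 / (Real.sqrt 2 : ℂ)),
      -(1 / (Real.sqrt 2 : ℂ)), -(1 / (Real.sqrt 2 : ℂ))] (-1) = m3 := by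
  ext i j
  fin_cases i <;> fin_cases j <;>
    simp [reflMat, herm, m3, Fin.sum_univ_four, mul_assoc, sq2'] <;> norm_num

lemma SA : matS * matA = 1 := by
  ext i j
  fin_cases i <;> fin_cases j <;>
    simp [matS, matA, Matrix.mul_apply, Fin.sum_univ_four] <;> ring_nf <;> simp <;> norm_num

lemma SAc : matS * matAc = 0 := by
  ext i j
  fin_cases i <;> fin_cases j <;>
    simp [matS, matAc, Matrix.mul_apply, Fin.sum_univ_four] <;> ring_nf <;> simp <;> norm_num

lemma AS_add : matA * matS + matAc * matSc = 1 := by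
  ext i j
  fin_cases i <;> fin_cases j <;>
    simp [matS, matAc, matA, matSc, Matrix.mul_apply, Fin.sum_univ_two] <;> ring_nf <;> simp <;>
    norm_num

lemma JA : matJ * matA = Complex.I • matA := by
  ext i j
  fin_cases i <;> fin_cases j <;>
    simp [matJ, matA, Matrix.mul_apply, Fin.sum_univ_four] <;> ring_nf <;> simp <;> norm_num

lemma AS_J : (2 : ℂ) • (matA * matS) = 1 - Complex.I • matJ := by
  ext i j
  fin_cases i <;> fin_cases j <;>
    simp [matS, matA, matJ, Matrix.mul_apply, Fin.sum_univ_two] <;> ring_nf <;> simp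

lemma cox : m0 * m1 * m2 * m3 = !![1/2, 1/2, -1/2, 1/2; 1/2, -1/2, -1/2, -1/2;
    -1/2, 1/2, -1/2, -1/2; -1/2, -1/2, -1/2, 1/2] := by
  ext i j
  fin_cases i <;> fin_cases j <;>
    simp [m0, m1, m2, m3, Matrix.mul_apply, Fin.sum_univ_four] <;> norm_num

lemma cox3 : (m0 * m1 * m2 * m3) ^ 3 = matJ := by
  rw [cox]
  ext i j
  fin_cases i <;> fin_cases j <;>
    simp [pow_succ, matJ, Matrix.mul_apply, Fin.sum_univ_four] <;> norm_num

lemma lift_a : m1 * m2 * matA = matA * g8a := by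
  ext i j
  fin_cases i <;> fin_cases j <;>
    simp [m1, m2, matA, g8a, Matrix.mul_apply, Fin.sum_univ_four, Fin.sum_univ_two] <;>
    ring_nf <;> simp <;> norm_num

lemma lift_b : m0 * m1 * m2 * m3 * m2 * m1 * matA = matA * g8b := by
  rw [cox]
  ext i j
  fin_cases i <;> fin_cases j <;>
    simp [m1, m2, matA, g8b, Matrix.mul_apply, Fin.sum_univ_four, Fin.sum_univ_two] <;>
    ring_nf <;> simp <;> ring_nf

/-- Integer vectors that are twice a unit root. -/
def PR (a b c d : ℤ) : Prop :=
  a ^ 2 + b ^ 2 + c ^ 2 + d ^ 2 = 4 ∧ a % 2 = b % 2 ∧ b % 2 = c % 2 ∧ c % 2 = d % 2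

def iv (a b c d : ℤ) : Fin 4 → ℂ := ![(a : ℂ), b, c, d]

/-- Property shared by all elements of `G₂₈`. -/
def Good (M : Matrix (Fin 4) (Fin 4) ℂ) : Prop :=
  M.map (starRingEnd ℂ) = M ∧
    ∀ a b c d, PR a b c d → ∃ a' b' c' d', PR a' b' c' d' ∧ M *ᵥ iv a b c d = iv a' b' c' d'

lemma good0 : Good m0 := by
  refine ⟨?_, fun a b c d h => ⟨b, a, c, d, ?_, ?_⟩⟩
  · ext i j; fin_cases i <;> fin_cases j <;> simp [m0]
  · unfold PR at *; refine ⟨by linarith [h.1], ?_⟩; omega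
  · ext i; fin_cases i <;> simp [m0, iv, Matrix.mulVec, dotProduct, Fin.sum_univ_four]

lemma good1 : Good m1 := by
  refine ⟨?_, fun a b c d h => ⟨a, c, b, d, ?_, ?_⟩⟩
  · ext i j; fin_cases i <;> fin_cases j <;> simp [m1]
  · unfold PR at *; refine ⟨by linarith [h.1], ?_⟩; omega
  · ext i; fin_cases i <;> simp [m1, iv, Matrix.mulVec, dotProduct, Fin.sum_univ_four]

lemma good2 : Good m2 := by
  refine ⟨?_, fun a b c d h => ⟨a, b, -c, d, ?_, ?_⟩⟩
  · ext i j; fin_cases i <;> fin_cases j <;> simp [m2]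
  · unfold PR at *; refine ⟨by linarith [h.1], ?_⟩; omega
  · ext i; fin_cases i <;> simp [m2, iv, Matrix.mulVec, dotProduct, Fin.sum_univ_four]

lemma conj2 : (starRingEnd ℂ) 2 = 2 := Complex.conj_ofNat 2

lemma good3 : Good m3 := by
  refine ⟨?_, fun a b c d h => ?_⟩
  · ext i j; fin_cases i <;> fin_cases j <;> simp [m3, conj2]
  · unfold PR at h
    obtain ⟨n, hn⟩ : ∃ n, a + b + c + d = 2 * n := ⟨(a + b + c + d) / 2, by omega⟩
    obtain rfl : d = 2 * n - a - b - c := by linarith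
    refine ⟨a - n, b - n, c - n, (2 * n - a - b - c) - n, ⟨by linarith [h.1], by omega⟩, ?_⟩
    ext i
    fin_cases i <;> simp [m3, iv, Matrix.mulVec, dotProduct, Fin.sum_univ_four] <;> ring

lemma good_one : Good 1 := by
  refine ⟨?_, fun a b c d h => ⟨a, b, c, d, h, by simp⟩⟩
  exact Matrix.map_one _ (map_zero _) (map_one _)

lemma good_mul {M N : Matrix (Fin 4) (Fin 4) ℂ} (hM : Good M) (hN : Good N) : Good (M * N) := by
  refine ⟨by rw [Matrix.map_mul, hM.1, hN.1], fun a b c d h => ?_⟩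
  obtain ⟨a, b, c, d, h, e⟩ := hN.2 _ _ _ _ h
  obtain ⟨a, b, c, d, h, e'⟩ := hM.2 _ _ _ _ h
  exact ⟨a, b, c, d, h, by rw [← Matrix.mulVec_mulVec, e, e']⟩

lemma conjA : matA.map (starRingEnd ℂ) = matAc := by
  ext i j; fin_cases i <;> fin_cases j <;> simp [matA, matAc, conj2]

/-- A real lift intertwines with the projection. -/
lemma intertwine {M : Matrix (Fin 4) (Fin 4) ℂ} {M' : Matrix (Fin 2) (Fin 2) ℂ}
    (hM : Good M) (h : M * matA = matA * M') : matS * M = M' * matS := by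
  have h2 : M * matAc = matAc * M'.map (starRingEnd ℂ) := by
    have := congrArg (fun X => Matrix.map X (starRingEnd ℂ)) h
    simpa only [Matrix.map_mul, hM.1, conjA] using this
  calc matS * M = matS * (M * (matA * matS + matAc * matSc)) := by rw [AS_add, Matrix.mul_one]
    _ = matS * ((M * matA) * matS + (M * matAc) * matSc) := by
        rw [Matrix.mul_add, Matrix.mul_assoc, Matrix.mul_assoc]
    _ = (matS * matA) * M' * matS
        + (matS * matAc) * (M'.map (starRingEnd ℂ)) * matSc := by
        rw [h, h2, Matrix.mul_add]; simp only [Matrix.mul_assoc]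
    _ = M' * matS := by rw [SA, SAc]; simp

def tv (a b c d : ℤ) : Fin 2 → ℂ := ![d + a * Complex.I, c - b * Complex.I]

lemma S_iv (a b c d : ℤ) : matS *ᵥ iv a b c d = tv a b c d := by
  ext i
  fin_cases i <;> simp [matS, iv, tv, Matrix.mulVec, dotProduct, Fin.sum_univ_four] <;> ring

def Stab (M' : Matrix (Fin 2) (Fin 2) ℂ) : Prop :=
  ∀ a b c d, PR a b c d → ∃ a' b' c' d', PR a' b' c' d' ∧ M' *ᵥ tv a b c d = tv a' b' c' d'

lemma stab_of_lift {M : Matrix (Fin 4) (Fin 4) ℂ} {M' : Matrix (Fin 2) (Fin 2) ℂ}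
    (hM : Good M) (h : M * matA = matA * M') : Stab M' := by
  intro a b c d hP
  obtain ⟨a', b', c', d', hP', e⟩ := hM.2 _ _ _ _ hP
  refine ⟨a', b', c', d', hP', ?_⟩
  rw [← S_iv, ← S_iv, Matrix.mulVec_mulVec, ← intertwine hM h, ← Matrix.mulVec_mulVec, e]

lemma stab_mul {M N : Matrix (Fin 2) (Fin 2) ℂ} (hM : Stab M) (hN : Stab N) : Stab (M * N) := by
  intro a b c d h
  obtain ⟨a, b, c, d, h, e⟩ := hN _ _ _ _ h
  obtain ⟨a, b, c, d, h, e'⟩ := hM _ _ _ _ h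
  exact ⟨a, b, c, d, h, by rw [← Matrix.mulVec_mulVec, e, e']⟩

abbrev G8' : Submonoid (Matrix (Fin 2) (Fin 2) ℂ) := Submonoid.closure {g8a, g8b}

lemma a_mem : g8a ∈ G8' := Submonoid.subset_closure (by simp)
lemma b_mem : g8b ∈ G8' := Submonoid.subset_closure (by simp)

lemma b_sq : g8b ^ 2 = !![0, -1; -1, 0] := by
  ext i j
  fin_cases i <;> fin_cases j <;>
    simp [pow_two, g8b, Matrix.mul_apply, Fin.sum_univ_two] <;> ring_nf <;> simp <;> norm_num

lemma a_pow (n : ℕ) : g8a ^ n = !![1, 0; 0, Complex.I ^ n] := by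
  induction n with
  | zero => ext i j; fin_cases i <;> fin_cases j <;> simp
  | succ n ih =>
    rw [pow_succ, ih]
    ext i j
    fin_cases i <;> fin_cases j <;> simp [g8a, Matrix.mul_apply, Fin.sum_univ_two, pow_succ]

lemma a_four : g8a ^ 4 = 1 := by
  rw [a_pow]; ext i j; fin_cases i <;> fin_cases j <;> simp

lemma b_four : g8b ^ 4 = 1 := by
  rw [show (4 : ℕ) = 2 * 2 from rfl, pow_mul, b_sq]
  ext i j
  fin_cases i <;> fin_cases j <;> simp [pow_two, Matrix.mul_apply, Fin.sum_univ_two]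

/-- The swap is in `G₈`. -/
lemma w_mem : (!![0, 1; 1, 0] : Matrix (Fin 2) (Fin 2) ℂ) ∈ G8' := by
  have h : (!![0, 1; 1, 0] : Matrix (Fin 2) (Fin 2) ℂ) = g8a ^ 2 * g8b ^ 2 * g8a ^ 2 := by
    rw [a_pow, b_sq]
    ext i j
    fin_cases i <;> fin_cases j <;> simp [Matrix.mul_apply, Fin.sum_univ_two]
  rw [h]
  exact mul_mem (mul_mem (pow_mem a_mem _) (pow_mem b_mem _)) (pow_mem a_mem _)

/-- All diagonal matrices with powers of `i` are in `G₈`. -/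
lemma diag_mem (k l : ℕ) :
    (!![Complex.I ^ k, 0; 0, Complex.I ^ l] : Matrix (Fin 2) (Fin 2) ℂ) ∈ G8' := by
  have h : (!![Complex.I ^ k, 0; 0, Complex.I ^ l] : Matrix (Fin 2) (Fin 2) ℂ) =
      !![0, 1; 1, 0] * g8a ^ k * !![0, 1; 1, 0] * g8a ^ l := by
    rw [a_pow, a_pow]
    ext i j
    fin_cases i <;> fin_cases j <;> simp [Matrix.mul_apply, Fin.sum_univ_two]
  rw [h]
  exact mul_mem (mul_mem (mul_mem w_mem (pow_mem a_mem _)) w_mem) (pow_mem a_mem _)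

lemma inv_mem {w : Matrix (Fin 2) (Fin 2) ℂ} (hw : w ∈ G8') : ∃ w' ∈ G8', w' * w = 1 := by
  induction hw using Submonoid.closure_induction with
  | mem x hx =>
    rcases hx with rfl | hx
    · exact ⟨g8a ^ 3, pow_mem a_mem _, by rw [← pow_succ, a_four]⟩
    · rw [Set.mem_singleton_iff] at hx
      subst hx
      exact ⟨g8b ^ 3, pow_mem b_mem _, by rw [← pow_succ, b_four]⟩
  | one => exact ⟨1, one_mem _, by simp⟩
  | mul x y _ _ hx hy =>
    obtain ⟨x', hx', ex⟩ := hx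
    obtain ⟨y', hy', ey⟩ := hy
    refine ⟨y' * x', mul_mem hy' hx', ?_⟩
    rw [mul_assoc, ← mul_assoc x', ex, one_mul, ey]

/-- Every unit of `ℤ[i]` is a power of `i`. -/
lemma unit_pow (x y : ℤ) (h : x ^ 2 + y ^ 2 = 1) :
    ∃ k : ℕ, (x : ℂ) + y * Complex.I = Complex.I ^ k := by
  have hx : -1 ≤ x ∧ x ≤ 1 := ⟨by nlinarith [sq_nonneg y], by nlinarith [sq_nonneg y]⟩
  have hy : -1 ≤ y ∧ y ≤ 1 := ⟨by nlinarith [sq_nonneg x], by nlinarith [sq_nonneg x]⟩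
  obtain ⟨h1, h2⟩ := hx
  obtain ⟨h3, h4⟩ := hy
  interval_cases x <;> interval_cases y <;> simp at h
  · exact ⟨2, by simp⟩
  · exact ⟨3, by simp [pow_succ]⟩
  · exact ⟨1, by simp⟩
  · exact ⟨0, by simp⟩

lemma sq_eq_one_or {x : ℤ} (h : x ^ 2 = 1) : x = 1 ∨ x = -1 := by
  have : (x - 1) * (x + 1) = 0 := by linarith
  rcases mul_eq_zero.mp this with h | h
  · left; linarith
  · right; linarith

lemma odd_pow (x y : ℤ) (hx : x ^ 2 = 1) (hy : y ^ 2 = 1) :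
    ∃ k : ℕ, (x : ℂ) + y * Complex.I = (1 + Complex.I) * Complex.I ^ k := by
  rcases sq_eq_one_or hx with rfl | rfl <;> rcases sq_eq_one_or hy with rfl | rfl
  · exact ⟨0, by simp⟩
  · exact ⟨3, by simp [pow_succ]; ring_nf; simp; ring⟩
  · exact ⟨1, by simp; ring_nf; simp; ring⟩
  · exact ⟨2, by simp; ring⟩

lemma PR_cases {a b c d : ℤ} (h : PR a b c d) :
    (∃ x y : ℤ, x ^ 2 + y ^ 2 = 1 ∧ d = 2 * x ∧ a = 2 * y ∧ b = 0 ∧ c = 0) ∨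
    (∃ x y : ℤ, x ^ 2 + y ^ 2 = 1 ∧ c = 2 * x ∧ b = - (2 * y) ∧ a = 0 ∧ d = 0) ∨
    (a ^ 2 = 1 ∧ b ^ 2 = 1 ∧ c ^ 2 = 1 ∧ d ^ 2 = 1) := by
  obtain ⟨h, h1, h2, h3⟩ := h
  rcases Int.emod_two_eq_zero_or_one a with h0 | h0
  · obtain ⟨a, rfl⟩ : ∃ x, a = 2 * x := ⟨a / 2, by omega⟩
    obtain ⟨b, rfl⟩ : ∃ x, b = 2 * x := ⟨b / 2, by omega⟩
    obtain ⟨c, rfl⟩ : ∃ x, c = 2 * x := ⟨c / 2, by omega⟩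
    obtain ⟨d, rfl⟩ : ∃ x, d = 2 * x := ⟨d / 2, by omega⟩
    have h' : (a ^ 2 + d ^ 2) + (b ^ 2 + c ^ 2) = 1 := by linarith
    have p1 : 0 ≤ a ^ 2 + d ^ 2 := by positivity
    have p2 : 0 ≤ b ^ 2 + c ^ 2 := by positivity
    rcases (by omega : b ^ 2 + c ^ 2 = 0 ∨ a ^ 2 + d ^ 2 = 0) with e | e
    · have eb : b = 0 := by nlinarith [sq_nonneg b, sq_nonneg c]
      have ec : c = 0 := by nlinarith [sq_nonneg b, sq_nonneg c]
      exact Or.inl ⟨d, a, by linarith, rfl, rfl, by simp [eb], by simp [ec]⟩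
    · have eb : a = 0 := by nlinarith [sq_nonneg a, sq_nonneg d]
      have ec : d = 0 := by nlinarith [sq_nonneg a, sq_nonneg d]
      exact Or.inr (Or.inl ⟨c, -b, by linarith, rfl, by ring, by simp [eb], by simp [ec]⟩)
  · have pos : ∀ x : ℤ, x % 2 = 1 → 1 ≤ x ^ 2 := by
      intro x hx
      have : x ≠ 0 := by rintro rfl; simp at hx
      have := pow_pos (abs_pos.mpr this) 2
      rw [sq_abs] at this
      linarith
    have := pos a h0
    have := pos b (by omega)
    have := pos c (by omega)
    have := pos d (by omega)
    right; right
    refine ⟨?_, ?_, ?_, ?_⟩ <;> linarith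

/-- `G₈` is transitive on the roots. -/
lemma trans_root {a b c d : ℤ} (h : PR a b c d) :
    ∃ w ∈ G8', w *ᵥ tv 0 0 0 2 = tv a b c d := by
  rcases PR_cases h with ⟨x, y, hxy, rfl, rfl, rfl, rfl⟩ | ⟨x, y, hxy, rfl, rfl, rfl, rfl⟩ |
    ⟨ha, hb, hc, hd⟩
  · obtain ⟨k, hk⟩ := unit_pow x y hxy
    refine ⟨_, diag_mem k 0, ?_⟩
    rw [← hk]
    ext i
    fin_cases i <;> simp [tv, Matrix.mulVec, dotProduct, Fin.sum_univ_two]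
    ring
  · obtain ⟨k, hk⟩ := unit_pow x y hxy
    refine ⟨_, mul_mem (diag_mem 0 k) w_mem, ?_⟩
    rw [← hk]
    ext i
    fin_cases i <;> simp [tv, Matrix.mulVec, dotProduct, Fin.sum_univ_two, Matrix.mul_apply]
    ring
  · obtain ⟨k, hk⟩ := odd_pow d a hd ha
    obtain ⟨l, hl⟩ := odd_pow c (-b) hc (by simpa using hb)
    refine ⟨_, mul_mem (diag_mem k (l + 3)) b_mem, ?_⟩
    have hl' : (c : ℂ) - b * Complex.I = (1 + Complex.I) * Complex.I ^ l := by
      rw [← hl]; push_cast; ring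
    have hi : Complex.I ^ 3 = - Complex.I := by simp [pow_succ]
    ext i
    fin_cases i
    · simp [tv, g8b, Matrix.mulVec, dotProduct, Fin.sum_univ_two, Matrix.mul_apply, hk]
      ring
    · simp [tv, g8b, Matrix.mulVec, dotProduct, Fin.sum_univ_two, Matrix.mul_apply, hl',
        pow_add, hi]
      linear_combination (-Complex.I ^ l) * Complex.I_mul_I

lemma re_im_ext {a b c d : ℤ} (h : (a : ℂ) + b * Complex.I = c + d * Complex.I) :
    a = c ∧ b = d := by
  have h1 := congrArg Complex.re h
  have h2 := congrArg Complex.im h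
  simp at h1 h2
  exact ⟨by exact_mod_cast h1, by exact_mod_cast h2⟩

/-- The stabilizer of the first basis vector. -/
lemma fix_mem {N : Matrix (Fin 2) (Fin 2) ℂ} (hN : Stab N)
    (h : N *ᵥ tv 0 0 0 2 = tv 0 0 0 2) : N ∈ G8' := by
  obtain ⟨a, b, c, d, hP, e2⟩ := hN 0 0 2 0 (by unfold PR; norm_num)
  obtain ⟨a1, b1, c1, d1, hP1, e3⟩ := hN 1 (-1) 1 1 (by unfold PR; norm_num)
  obtain ⟨a2, b2, c2, d2, hP2, e4⟩ := hN 1 (-1) (-1) 1 (by unfold PR; norm_num)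
  have f00 := congrFun h 0
  have f10 := congrFun h 1
  have f01 := congrFun e2 0
  have f11 := congrFun e2 1
  have g0 := congrFun e3 0
  have g1 := congrFun e3 1
  have k0 := congrFun e4 0
  have k1 := congrFun e4 1
  simp [tv, Matrix.mulVec, dotProduct, Fin.sum_univ_two] at f00 f10 f01 f11 g0 g1 k0 k1
  rw [f00] at g0 k0
  rw [f10] at g1 k1
  have q0 : ((2 + d - a : ℤ) : ℂ) + ((2 + d + a : ℤ) : ℂ) * Complex.I =
      ((2 * d1 : ℤ) : ℂ) + ((2 * a1 : ℤ) : ℂ) * Complex.I := by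
    push_cast
    linear_combination 2 * g0 - (1 + Complex.I) * f01 - a * Complex.I_mul_I
  have q1 : ((c + b : ℤ) : ℂ) + ((c - b : ℤ) : ℂ) * Complex.I =
      ((2 * c1 : ℤ) : ℂ) + ((-(2 * b1) : ℤ) : ℂ) * Complex.I := by
    push_cast
    linear_combination 2 * g1 - (1 + Complex.I) * f11 + b * Complex.I_mul_I
  have p0 : ((2 - d - a : ℤ) : ℂ) + ((2 + d - a : ℤ) : ℂ) * Complex.I =
      ((2 * d2 : ℤ) : ℂ) + ((2 * a2 : ℤ) : ℂ) * Complex.I := by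
    push_cast
    linear_combination 2 * k0 - (-1 + Complex.I) * f01 - a * Complex.I_mul_I
  have p1 : ((b - c : ℤ) : ℂ) + ((c + b : ℤ) : ℂ) * Complex.I =
      ((2 * c2 : ℤ) : ℂ) + ((-(2 * b2) : ℤ) : ℂ) * Complex.I := by
    push_cast
    linear_combination 2 * k1 - (-1 + Complex.I) * f11 + b * Complex.I_mul_I
  obtain ⟨u1, u2⟩ := re_im_ext q0
  obtain ⟨u3, u4⟩ := re_im_ext q1
  obtain ⟨v1, v2⟩ := re_im_ext p0
  obtain ⟨v3, v4⟩ := re_im_ext p1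
  have s1 : (2 * d1) ^ 2 + (2 * a1) ^ 2 + (2 * c1) ^ 2 + (-(2 * b1)) ^ 2 = 16 := by
    linarith [hP1.1]
  have s2 : (2 * d2) ^ 2 + (2 * a2) ^ 2 + (2 * c2) ^ 2 + (-(2 * b2)) ^ 2 = 16 := by
    linarith [hP2.1]
  rw [← u1, ← u2, ← u3, ← u4] at s1
  rw [← v1, ← v2, ← v3, ← v4] at s2
  have hd : d = 0 := by linarith [hP.1]
  have ha : a = 0 := by linarith [hP.1]
  subst hd ha
  rcases PR_cases hP with ⟨x, y, hxy, hx, hy, -, -⟩ | ⟨x, y, hxy, rfl, rfl, -, -⟩ | ⟨h0, -⟩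
  · obtain rfl : x = 0 := by linarith
    obtain rfl : y = 0 := by linarith
    simp at hxy
  · obtain ⟨k, hk⟩ := unit_pow x y hxy
    have hN2 : N = !![Complex.I ^ 0, 0; 0, Complex.I ^ k] := by
      rw [← hk]
      ext i j
      fin_cases i <;> fin_cases j
      · simpa using f00
      · simpa using f01
      · simpa using f10
      · simp
        push_cast at f11
        linear_combination f11 / 2
    rw [hN2]
    exact diag_mem 0 k
  · simp at h0

lemma stab_mem (H : ∀ w ∈ G8', Stab w) {M' : Matrix (Fin 2) (Fin 2) ℂ} (hM : Stab M') :
    M' ∈ G8' := by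
  obtain ⟨a, b, c, d, hP, e⟩ := hM 0 0 0 2 (by unfold PR; norm_num)
  obtain ⟨w, hw, ew⟩ := trans_root hP
  obtain ⟨w', hw', ew'⟩ := inv_mem hw
  have hfix : (w' * M') *ᵥ tv 0 0 0 2 = tv 0 0 0 2 := by
    rw [← Matrix.mulVec_mulVec, e, ← ew, Matrix.mulVec_mulVec, ew', Matrix.one_mulVec]
  have := fix_mem (stab_mul (H _ hw') hM) hfix
  have h2 : M' = w * (w' * M') := by
    rw [← mul_assoc, mul_eq_one_comm.mp ew', one_mul]
  rw [h2]
  exact mul_mem hw this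

lemma zeta3 : (Complex.exp (Real.pi * Complex.I / 6)) ^ 3 = Complex.I := by
  rw [← Complex.exp_nat_mul]
  rw [show ((3 : ℕ) : ℂ) * (Real.pi * Complex.I / 6) = Real.pi / 2 * Complex.I by push_cast; ring]
  exact Complex.exp_pi_div_two_mul_I

/-- The `4`-reflection subquotient of `G₂₈ = F₄` is isomorphic to `G₈`:
with `ζ = e^{πi/6}`, the Coxeter element `g` of `F₄`, and `E` the `ζ^3`-eigenspace of
`g^3` (a `2`-dimensional subspace), there is a `ℂ`-linear isomorphism `ψ : E ≅ ℂ^2`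
conjugating `π_E(N_E)` onto `G₈`. -/
theorem statement_15 (ζ : ℂ) (hζ : ζ = Complex.exp (Real.pi * Complex.I / 6))
    (β : Fin 4 → (Fin 4 → ℂ))
    (hβ0 : β 0 = ![1, -1, 0, 0])
    (hβ1 : β 1 = ![0, 1, -1, 0])
    (hβ2 : β 2 = ![0, 0, (Real.sqrt 2 : ℂ), 0])
    (hβ3 : β 3 = ![-(1 / (Real.sqrt 2 : ℂ)), -(1 / (Real.sqrt 2 : ℂ)),
      -(1 / (Real.sqrt 2 : ℂ)), -(1 / (Real.sqrt 2 : ℂ))])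
    (G28 : Submonoid (Matrix (Fin 4) (Fin 4) ℂ))
    (hG28 : G28 = Submonoid.closure {M | ∃ i : Fin 4, M = reflMat (β i) (-1)})
    (g : Matrix (Fin 4) (Fin 4) ℂ)
    (hg : g = reflMat (β 0) (-1) * reflMat (β 1) (-1) * reflMat (β 2) (-1) *
      reflMat (β 3) (-1))
    (E : Submodule ℂ (Fin 4 → ℂ)) (hE : E = eigSpace (g ^ 3) (ζ ^ 3))
    (r₄ r₄' : Matrix (Fin 2) (Fin 2) ℂ)
    (hr₄ : r₄ = !![1, 0; 0, Complex.I])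
    (hr₄' : r₄' = (1 / 2 : ℂ) • !![1 + Complex.I, -1 + Complex.I;
      -1 + Complex.I, 1 + Complex.I])
    (G8 : Submonoid (Matrix (Fin 2) (Fin 2) ℂ))
    (hG8 : G8 = Submonoid.closure {r₄, r₄'}) :
    Module.finrank ℂ E = 2 ∧
    ∃ Φ : (Fin 2 → ℂ) →ₗ[ℂ] (Fin 4 → ℂ), Function.Injective Φ ∧
      LinearMap.range Φ = E ∧
      (G8 : Set (Matrix (Fin 2) (Fin 2) ℂ)) =
        {M' | ∃ M ∈ G28, (∀ v ∈ E, M.mulVec v ∈ E) ∧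
          ∀ t : Fin 2 → ℂ, M.mulVec (Φ t) = Φ (M'.mulVec t)} := by
  have hs0 : reflMat (β 0) (-1) = m0 := by rw [hβ0, refl0]
  have hs1 : reflMat (β 1) (-1) = m1 := by rw [hβ1, refl1]
  have hs2 : reflMat (β 2) (-1) = m2 := by rw [hβ2, refl2]
  have hs3 : reflMat (β 3) (-1) = m3 := by rw [hβ3, refl3]
  rw [hs0, hs1, hs2, hs3] at hg
  have hgen : ∀ i, reflMat (β i) (-1) ∈ G28 := by
    intro i; rw [hG28]; exact Submonoid.subset_closure ⟨i, rfl⟩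
  have n0 : m0 ∈ G28 := hs0 ▸ hgen 0
  have n1 : m1 ∈ G28 := hs1 ▸ hgen 1
  have n2 : m2 ∈ G28 := hs2 ▸ hgen 2
  have n3 : m3 ∈ G28 := hs3 ▸ hgen 3
  have hgood : ∀ M ∈ G28, Good M := by
    intro M hM
    rw [hG28] at hM
    induction hM using Submonoid.closure_induction with
    | mem x hx =>
      obtain ⟨i, rfl⟩ := hx
      fin_cases i
      · exact hs0 ▸ good0
      · exact hs1 ▸ good1
      · exact hs2 ▸ good2
      · exact hs3 ▸ good3
    | one => exact good_one
    | mul x y _ _ hx hy => exact good_mul hx hy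
  have hG8' : G8 = G8' := by rw [hG8, hr₄, hr₄']; rfl
  have hlift : ∀ M' ∈ G8', ∃ M ∈ G28, M * matA = matA * M' := by
    intro M' hM'
    induction hM' using Submonoid.closure_induction with
    | mem x hx =>
      rcases hx with rfl | hx
      · exact ⟨_, mul_mem n1 n2, lift_a⟩
      · rw [Set.mem_singleton_iff] at hx
        subst hx
        exact ⟨_, mul_mem (mul_mem (mul_mem (mul_mem (mul_mem n0 n1) n2) n3) n2) n1, lift_b⟩
    | one => exact ⟨1, one_mem _, by simp⟩
    | mul x y _ _ hx hy =>
      obtain ⟨X, hX, ex⟩ := hx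
      obtain ⟨Y, hY, ey⟩ := hy
      exact ⟨X * Y, mul_mem hX hY, by
        rw [Matrix.mul_assoc, ey, ← Matrix.mul_assoc, ex, Matrix.mul_assoc]⟩
  have hstab : ∀ w ∈ G8', Stab w := by
    intro w hw
    obtain ⟨M, hM, e⟩ := hlift w hw
    exact stab_of_lift (hgood M hM) e
  have hEv : ∀ v, v ∈ E ↔ matJ *ᵥ v = Complex.I • v := by
    intro v
    rw [hE, hg, cox3, hζ, zeta3, eigSpace, Module.End.mem_eigenspace_iff, Matrix.mulVecLin_apply]
  have hinj : Function.Injective matA.mulVecLin := by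
    intro s t hst
    have := congrArg (fun v => matS *ᵥ v) hst
    simpa [Matrix.mulVec_mulVec, SA] using this
  have hrange : LinearMap.range matA.mulVecLin = E := by
    ext v
    rw [hEv]
    constructor
    · rintro ⟨t, rfl⟩
      rw [Matrix.mulVecLin_apply, Matrix.mulVec_mulVec, JA, Matrix.smul_mulVec]
    · intro hv
      refine ⟨matS *ᵥ v, ?_⟩
      rw [Matrix.mulVecLin_apply, Matrix.mulVec_mulVec]
      have h2 : ((2 : ℂ) • (matA * matS)) *ᵥ v = (2 : ℂ) • v := by
        rw [AS_J, Matrix.sub_mulVec, Matrix.smul_mulVec, hv, Matrix.one_mulVec, smul_smul,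
          Complex.I_mul_I, two_smul, neg_smul, one_smul, sub_neg_eq_add]
      rw [Matrix.smul_mulVec] at h2
      exact smul_right_injective _ (two_ne_zero (α := ℂ)) h2
  refine ⟨?_, matA.mulVecLin, hinj, hrange, ?_⟩
  · rw [← hrange, LinearMap.finrank_range_of_inj hinj]; simp
  · ext M'
    rw [SetLike.mem_coe, hG8', Set.mem_ofPred_eq]
    constructor
    · intro hM'
      obtain ⟨M, hM, e⟩ := hlift M' hM'
      have key : ∀ t : Fin 2 → ℂ, M.mulVec (matA.mulVecLin t) = matA.mulVecLin (M'.mulVec t) := by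
        intro t
        simp only [Matrix.mulVecLin_apply, Matrix.mulVec_mulVec, e]
      refine ⟨M, hM, ?_, key⟩
      intro v hv
      rw [← hrange] at hv ⊢
      obtain ⟨t, rfl⟩ := hv
      rw [key]
      exact ⟨_, rfl⟩
    · rintro ⟨M, hM, -, h⟩
      refine stab_mem hstab (stab_of_lift (hgood M hM) ?_)
      apply Matrix.mulVec_injective
      ext1 t
      have := h t
      simpa only [Matrix.mulVecLin_apply, Matrix.mulVec_mulVec] using this

end
end Paper
end

section
/- Let ζ = e^{πi/6}, ω = e^{2πi/3}, let G_25 ⊂ GL_3(C) be generated by the three order-3 reflections s(α_1, ω), s(α_2, ω), s(α_3, ω) with roots α_1 = (0,0,1)^T, α_2 = (ω, ω^2, 1)^T, α_3 = (1,0,0)^T, and let g = s(α_1, ω)s(α_2, ω)s(α_3, ω). Let E be the ζ^2-eigenspace of g^2, a 2-dimensional subspace, N_E = {s ∈ G_25 : s(E) ⊆ E}, and π_E restriction to E. Then there exists a C-linear isomorphism ψ : E → C^2 such that ψ ∘ π_E(N_E) ∘ ψ^{−1} = G_5, where G_5 ⊂ GL_2(C) is generated by r_1 = (ω/2)·[[−1−i,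 1−i], [−1−i, −1+i]] and r_2' = (ω/2)·[[−1+i, 1−i], [−1−i, −1−i]]. In other words, the 6-reflection subquotient of G_25 is isomorphic to G_5. -/
open Matrix MvPolynomial

namespace Paper

noncomputable section

/-! Explicit elements of `G₂₅`, as functions of `w = ω`. -/

def s0 (w : ℂ) : Matrix (Fin 3) (Fin 3) ℂ :=
  !![1, 0, 0;
    0, 1, 0;
    0, 0, w]

def s1 (w : ℂ) : Matrix (Fin 3) (Fin 3) ℂ :=
  !![2/3 + 1/3*w, 2/3 + 1/3*w, -1/3 - 2/3*w;
    -1/3 - 2/3*w, 2/3 + 1/3*w, 2/3 + 1/3*w;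
    2/3 + 1/3*w, -1/3 - 2/3*w, 2/3 + 1/3*w]

def s2 (w : ℂ) : Matrix (Fin 3) (Fin 3) ℂ :=
  !![w, 0, 0;
    0, 1, 0;
    0, 0, 1]

def s00 (w : ℂ) : Matrix (Fin 3) (Fin 3) ℂ :=
  !![1, 0, 0;
    0, 1, 0;
    0, 0, -1 - w]

def s11 (w : ℂ) : Matrix (Fin 3) (Fin 3) ℂ :=
  !![1/3 - 1/3*w, 1/3 + 2/3*w, 1/3 - 1/3*w;
    1/3 - 1/3*w, 1/3 - 1/3*w, 1/3 + 2/3*w;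
    1/3 + 2/3*w, 1/3 - 1/3*w, 1/3 - 1/3*w]

def s22 (w : ℂ) : Matrix (Fin 3) (Fin 3) ℂ :=
  !![-1 - w, 0, 0;
    0, 1, 0;
    0, 0, 1]

def na (w : ℂ) : Matrix (Fin 3) (Fin 3) ℂ :=
  !![-1 - w, 0, 0;
    0, 1, 0;
    0, 0, -1 - w]

def nb (w : ℂ) : Matrix (Fin 3) (Fin 3) ℂ :=
  !![1/3 - 1/3*w, 1/3 + 2/3*w, -2/3 - 1/3*w;
    1/3 - 1/3*w, 1/3 - 1/3*w, 1/3 - 1/3*w;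
    -2/3 - 1/3*w, 1/3 + 2/3*w, 1/3 - 1/3*w]

def t1 (w : ℂ) : Matrix (Fin 3) (Fin 3) ℂ :=
  !![1/3 - 1/3*w, 1/3 + 2/3*w, -2/3 - 1/3*w;
    1/3 - 1/3*w, 1/3 - 1/3*w, 1/3 - 1/3*w;
    1/3 + 2/3*w, 1/3 - 1/3*w, -2/3 - 1/3*w]

def naa (w : ℂ) : Matrix (Fin 3) (Fin 3) ℂ :=
  !![w, 0, 0;
    0, 1, 0;
    0, 0, w]

def nab (w : ℂ) : Matrix (Fin 3) (Fin 3) ℂ :=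
  !![-2/3 - 1/3*w, 1/3 - 1/3*w, 1/3 + 2/3*w;
    1/3 - 1/3*w, 1/3 - 1/3*w, 1/3 - 1/3*w;
    1/3 + 2/3*w, 1/3 - 1/3*w, -2/3 - 1/3*w]

def nba (w : ℂ) : Matrix (Fin 3) (Fin 3) ℂ :=
  !![-2/3 - 1/3*w, 1/3 + 2/3*w, 1/3 + 2/3*w;
    -2/3 - 1/3*w, 1/3 - 1/3*w, -2/3 - 1/3*w;
    1/3 + 2/3*w, 1/3 + 2/3*w, -2/3 - 1/3*w]

def nbb (w : ℂ) : Matrix (Fin 3) (Fin 3) ℂ :=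
  !![2/3 + 1/3*w, 2/3 + 1/3*w, -1/3 + 1/3*w;
    -1/3 - 2/3*w, 2/3 + 1/3*w, -1/3 - 2/3*w;
    -1/3 + 1/3*w, 2/3 + 1/3*w, 2/3 + 1/3*w]

def nbab (w : ℂ) : Matrix (Fin 3) (Fin 3) ℂ :=
  !![0, 0, 1 + w;
    0, -w, 0;
    1 + w, 0, 0]

def nabb (w : ℂ) : Matrix (Fin 3) (Fin 3) ℂ :=
  !![-1/3 - 2/3*w, -1/3 - 2/3*w, 2/3 + 1/3*w;
    -1/3 - 2/3*w, 2/3 + 1/3*w, -1/3 - 2/3*w;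
    2/3 + 1/3*w, -1/3 - 2/3*w, -1/3 - 2/3*w]

def nbabbab (w : ℂ) : Matrix (Fin 3) (Fin 3) ℂ :=
  !![w, 0, 0;
    0, -1 - w, 0;
    0, 0, w]

def nbba (w : ℂ) : Matrix (Fin 3) (Fin 3) ℂ :=
  !![-1/3 - 2/3*w, 2/3 + 1/3*w, 2/3 + 1/3*w;
    -1/3 + 1/3*w, 2/3 + 1/3*w, -1/3 + 1/3*w;
    2/3 + 1/3*w, 2/3 + 1/3*w, -1/3 - 2/3*w]

def nbbaab (w : ℂ) : Matrix (Fin 3) (Fin 3) ℂ :=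
  !![1/3 + 2/3*w, 1/3 - 1/3*w, 1/3 - 1/3*w;
    1/3 - 1/3*w, 1/3 + 2/3*w, 1/3 - 1/3*w;
    1/3 - 1/3*w, 1/3 - 1/3*w, 1/3 + 2/3*w]

def nbbabbaab (w : ℂ) : Matrix (Fin 3) (Fin 3) ℂ :=
  !![1, 0, 0;
    0, w, 0;
    0, 0, 1]

def nabbabb (w : ℂ) : Matrix (Fin 3) (Fin 3) ℂ :=
  !![-1/3 + 1/3*w, -1/3 - 2/3*w, -1/3 - 2/3*w;
    -1/3 - 2/3*w, -1/3 + 1/3*w, -1/3 - 2/3*w;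
    -1/3 - 2/3*w, -1/3 - 2/3*w, -1/3 + 1/3*w]

def naabba (w : ℂ) : Matrix (Fin 3) (Fin 3) ℂ :=
  !![2/3 + 1/3*w, -1/3 + 1/3*w, -1/3 + 1/3*w;
    -1/3 + 1/3*w, 2/3 + 1/3*w, -1/3 + 1/3*w;
    -1/3 + 1/3*w, -1/3 + 1/3*w, 2/3 + 1/3*w]

def nbaab (w : ℂ) : Matrix (Fin 3) (Fin 3) ℂ :=
  !![1/3 + 2/3*w, 1/3 + 2/3*w, 1/3 - 1/3*w;
    1/3 - 1/3*w, -2/3 - 1/3*w, 1/3 - 1/3*w;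
    1/3 - 1/3*w, 1/3 + 2/3*w, 1/3 + 2/3*w]

def x0 (_w : ℂ) : Matrix (Fin 3) (Fin 3) ℂ := 1

def x1 (w : ℂ) : Matrix (Fin 3) (Fin 3) ℂ :=
  !![-1 - w, 0, 0;
    0, w, 0;
    0, 0, 1]

def x2 (w : ℂ) : Matrix (Fin 3) (Fin 3) ℂ :=
  !![0, 0, w;
    w, 0, 0;
    0, w, 0]

def x3 (w : ℂ) : Matrix (Fin 3) (Fin 3) ℂ :=
  !![w, 0, 0;
    0, -1 - w, 0;
    0, 0, 1]

def x4 (w : ℂ) : Matrix (Fin 3) (Fin 3) ℂ :=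
  !![0, 1, 0;
    0, 0, -1 - w;
    w, 0, 0]

def x5 (w : ℂ) : Matrix (Fin 3) (Fin 3) ℂ :=
  !![0, -1 - w, 0;
    0, 0, -1 - w;
    -1 - w, 0, 0]

def x6 (w : ℂ) : Matrix (Fin 3) (Fin 3) ℂ :=
  !![0, 0, w;
    1, 0, 0;
    0, -1 - w, 0]

def x7 (w : ℂ) : Matrix (Fin 3) (Fin 3) ℂ :=
  !![0, w, 0;
    0, 0, -1 - w;
    1, 0, 0]

def x8 (w : ℂ) : Matrix (Fin 3) (Fin 3) ℂ :=
  !![0, 0, w;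
    -1 - w, 0, 0;
    0, 1, 0]

/-- Coset representatives of the stabilizer of `E`. -/
def repX (w : ℂ) : Fin 9 → Matrix (Fin 3) (Fin 3) ℂ :=
  ![x0 w, x1 w, x2 w, x3 w, x4 w, x5 w, x6 w, x7 w, x8 w]

/-- The four Schreier generators. -/
def schr (w : ℂ) : Fin 4 → Matrix (Fin 3) (Fin 3) ℂ :=
  ![nbabbab w, nbbabbaab w, nabbabb w, naabba w]

/-- The matrix of the embedding `ℂ² → ℂ³` with image `E`. -/
def embB (w : ℂ) : Matrix (Fin 3) (Fin 2) ℂ :=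
  !![(-1 - w + Complex.I + Complex.I * w) / 2, (1 + w + Complex.I - Complex.I * w) / 2;
    -w - Complex.I - Complex.I * w, 1;
    (-1 - w + Complex.I + Complex.I * w) / 2, (1 + w + Complex.I - Complex.I * w) / 2]

/-- A left inverse of `embB`. -/
def embL (w : ℂ) : Matrix (Fin 2) (Fin 3) ℂ :=
  !![(1 + 2 * w - Complex.I + Complex.I * w) / 3, (1 + 2 * w - Complex.I - 2 * Complex.I * w) / 6, 0;
    (-2 * Complex.I - Complex.I * w) / 3, (3 + Complex.I + 2 * Complex.I * w) / 6, 0]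

/-- The first generator of the rank two group. -/
def gr1 (w : ℂ) : Matrix (Fin 2) (Fin 2) ℂ :=
  (w / 2) • !![-1 - Complex.I, 1 - Complex.I; -1 - Complex.I, -1 + Complex.I]

/-- The second generator of the rank two group. -/
def gr2 (w : ℂ) : Matrix (Fin 2) (Fin 2) ℂ :=
  (w / 2) • !![-1 + Complex.I, 1 - Complex.I; -1 - Complex.I, -1 - Complex.I]

lemma prods {w : ℂ} (h : w ^ 2 + w + 1 = 0) :
    s0 w * s0 w = s00 w ∧
    s1 w * s1 w = s11 w ∧
    s2 w * s2 w = s22 w ∧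
    s22 w * s00 w = na w ∧
    s11 w * s00 w = t1 w ∧
    s0 w * t1 w = nb w ∧
    na w * na w = naa w ∧
    na w * nb w = nab w ∧
    nb w * na w = nba w ∧
    nb w * nb w = nbb w ∧
    nba w * nb w = nbab w ∧
    na w * nbb w = nabb w ∧
    nbab w * nbab w = nbabbab w ∧
    nbb w * na w = nbba w ∧
    nba w * nab w = nbaab w ∧
    nb w * nbaab w = nbbaab w ∧
    nbba w * nbbaab w = nbbabbaab w ∧
    nabb w * nabb w = nabbabb w ∧
    naa w * nbba w = naabba w := by
  refine ⟨?_, ?_, ?_, ?_, ?_, ?_, ?_, ?_, ?_, ?_, ?_, ?_, ?_, ?_, ?_, ?_, ?_, ?_, ?_⟩ <;> ext i j <;> fin_cases i <;> fin_cases j <;>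
    simp [Matrix.mul_apply, Fin.sum_univ_three, na, naa, naabba, nab, nabb, nabbabb, nb, nba, nbaab, nbab, nbabbab, nbb, nbba, nbbaab, nbbabbaab, s0, s00, s1, s11, s2, s22, t1] <;> grind

lemma step0 {w : ℂ} (h : w ^ 2 + w + 1 = 0) (j : Fin 9) :
    s0 w * repX w j = repX w ((![1, 3, 2, 0, 5, 7, 6, 4, 8] : Fin 9 → Fin 9) j) *
      schr w ((![0, 0, 1, 0, 1, 1, 1, 1, 1] : Fin 9 → Fin 4) j) := by
  fin_cases j <;> ext i j <;> fin_cases i <;> fin_cases j <;>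
    simp [repX, schr, Matrix.mul_apply, Fin.sum_univ_three, s0, x0, x1, x2, x3, x4, x5, x6, x7, x8,
      nbabbab, nbbabbaab, nabbabb, naabba] <;> grind

lemma step1 {w : ℂ} (h : w ^ 2 + w + 1 = 0) (j : Fin 9) :
    s1 w * repX w j = repX w ((![2, 4, 5, 3, 6, 0, 1, 7, 8] : Fin 9 → Fin 9) j) *
      schr w ((![2, 2, 2, 3, 2, 2, 2, 3, 3] : Fin 9 → Fin 4) j) := by
  fin_cases j <;> ext i j <;> fin_cases i <;> fin_cases j <;>
    simp [repX, schr, Matrix.mul_apply, Fin.sum_univ_three, s1, x0, x1, x2, x3, x4, x5, x6, x7, x8,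
      nbabbab, nbbabbaab, nabbabb, naabba] <;> grind

lemma step2 {w : ℂ} (h : w ^ 2 + w + 1 = 0) (j : Fin 9) :
    s2 w * repX w j = repX w ((![3, 0, 6, 1, 4, 5, 8, 7, 2] : Fin 9 → Fin 9) j) *
      schr w ((![1, 1, 0, 1, 1, 1, 0, 1, 0] : Fin 9 → Fin 4) j) := by
  fin_cases j <;> ext i j <;> fin_cases i <;> fin_cases j <;>
    simp [repX, schr, Matrix.mul_apply, Fin.sum_univ_three, s2, x0, x1, x2, x3, x4, x5, x6, x7, x8,
      nbabbab, nbbabbaab, nabbabb, naabba] <;> grind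

lemma omega_facts (ζ ω : ℂ) (hζ : ζ = Complex.exp (Real.pi * Complex.I / 6))
    (hω : ω = Complex.exp (2 * Real.pi * Complex.I / 3)) :
    ω ^ 2 + ω + 1 = 0 ∧ ζ ^ 2 = 1 + ω ∧ (starRingEnd ℂ) ω = -1 - ω := by
  have key : Complex.exp (Real.pi * Complex.I / 3) = 1 / 2 + (Real.sqrt 3 / 2 : ℝ) * Complex.I := by
    have : (Real.pi * Complex.I / 3 : ℂ) = ((Real.pi / 3 : ℝ) : ℂ) * Complex.I := by
      push_cast; ring
    rw [this, Complex.exp_mul_I, ← Complex.ofReal_cos, ← Complex.ofReal_sin,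
      Real.cos_pi_div_three, Real.sin_pi_div_three]
    push_cast; ring
  have h3 : ((Real.sqrt 3 : ℝ) : ℂ) ^ 2 = 3 := by
    rw [← Complex.ofReal_pow, Real.sq_sqrt (by norm_num)]; norm_num
  have hI := Complex.I_sq
  have e1 : ζ ^ 2 = 1 / 2 + (Real.sqrt 3 / 2 : ℝ) * Complex.I := by
    rw [hζ, ← Complex.exp_nat_mul, ← key]; congr 1; push_cast; ring
  have e2 : ω = -1 / 2 + (Real.sqrt 3 / 2 : ℝ) * Complex.I := by
    have : ω = Complex.exp (Real.pi * Complex.I / 3) ^ 2 := by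
      rw [hω, ← Complex.exp_nat_mul]; congr 1; push_cast; ring
    rw [this, key]
    push_cast
    grind
  refine ⟨?_, ?_, ?_⟩
  · rw [e2]; push_cast; grind
  · rw [e1, e2]; ring
  · rw [e2]
    simp only [map_add, map_mul, Complex.conj_I, Complex.conj_ofReal, map_div₀, map_neg, map_one,
      map_ofNat]
    ring

lemma refl_facts {w : ℂ} (h : w ^ 2 + w + 1 = 0) (hc : (starRingEnd ℂ) w = -1 - w) :
    reflMat ![0, 0, 1] w = s0 w ∧ reflMat ![w, w ^ 2, 1] w = s1 w ∧
      reflMat ![1, 0, 0] w = s2 w := by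
  have h3 : herm ![w, w ^ 2, 1] ![w, w ^ 2, 1] = 3 := by
    simp [herm, Fin.sum_univ_three, hc]
    grind
  refine ⟨?_, ?_, ?_⟩
  · ext i j
    fin_cases i <;> fin_cases j <;> simp [reflMat, herm, Fin.sum_univ_three, s0]
  · ext i j
    fin_cases i <;> fin_cases j <;> simp [reflMat, h3, hc, s1] <;> grind
  · ext i j
    fin_cases i <;> fin_cases j <;> simp [reflMat, herm, Fin.sum_univ_three, s2]

lemma g_sq {w : ℂ} (h : w ^ 2 + w + 1 = 0) :
    (s0 w * s1 w * s2 w) ^ 2 = !![0, 0, 1 + w; 0, 1 + w, 0; 1 + w, 0, 0] := by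
  rw [pow_two]
  ext i j
  fin_cases i <;> fin_cases j <;>
    simp [Matrix.mul_apply, Fin.sum_univ_three, s0, s1, s2] <;> grind

lemma emb_left {w : ℂ} (h : w ^ 2 + w + 1 = 0) : embL w * embB w = 1 := by
  have hI := Complex.I_sq
  ext i j
  fin_cases i <;> fin_cases j <;>
    simp [Matrix.mul_apply, Fin.sum_univ_three, embL, embB] <;> grind

lemma emb_right {w : ℂ} (h : w ^ 2 + w + 1 = 0) (v : Fin 3 → ℂ) (hv : v 0 = v 2) :
    embB w *ᵥ (embL w *ᵥ v) = v := by
  have hI := Complex.I_sq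
  ext i
  fin_cases i <;>
    simp [Matrix.mulVec, dotProduct, Fin.sum_univ_three, embL, embB] <;> grind

lemma inter {w : ℂ} (h : w ^ 2 + w + 1 = 0) :
    na w * embB w = embB w * gr1 w ∧ nb w * embB w = embB w * gr2 w := by
  have hI := Complex.I_sq
  constructor <;> ext i j <;> fin_cases i <;> fin_cases j <;>
    simp [Matrix.mul_apply, Fin.sum_univ_three, na, nb, gr1, gr2, embB] <;> grind

lemma dets {w : ℂ} (h : w ^ 2 + w + 1 = 0) : (gr1 w).det ≠ 0 ∧ (gr2 w).det ≠ 0 := by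
  have hI := Complex.I_sq
  have hw : w ≠ 0 := by rintro rfl; norm_num at h
  have h1 : (gr1 w).det = w ^ 2 := by
    simp [Matrix.det_fin_two, gr1]; grind
  have h2 : (gr2 w).det = w ^ 2 := by
    simp [Matrix.det_fin_two, gr2]; grind
  rw [h1, h2]
  exact ⟨pow_ne_zero 2 hw, pow_ne_zero 2 hw⟩

/-- Only the trivial representative preserves `E`. -/
lemma rep_stab {w : ℂ} (h : w ^ 2 + w + 1 = 0) (j : Fin 9)
    (h1 : repX w j 0 1 = repX w j 2 1)
    (h2 : repX w j 0 0 + repX w j 0 2 = repX w j 2 0 + repX w j 2 2) : repX w j = 1 := by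
  fin_cases j <;> simp [repX, x0, x1, x2, x3, x4, x5, x6, x7, x8] at h1 h2 ⊢ <;> grind

/-- The words in `na`, `nb`. -/
def subH (w : ℂ) : Submonoid (Matrix (Fin 3) (Fin 3) ℂ) := Submonoid.closure {na w, nb w}

lemma schr_mem {w : ℂ} (h : w ^ 2 + w + 1 = 0) (j : Fin 4) : schr w j ∈ subH w := by
  have ha : na w ∈ subH w := Submonoid.subset_closure (by simp)
  have hb : nb w ∈ subH w := Submonoid.subset_closure (by simp)
  obtain ⟨-, -, -, -, -, -, paa, pab, pba, pbb, pbab, pabb, p1, pbba, pbaab, pbbaab, p2, p3, p4⟩ :=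
    prods h
  have hbab : nbab w ∈ subH w := by
    rw [← pbab, ← pba]; exact mul_mem (mul_mem hb ha) hb
  have habb : nabb w ∈ subH w := by
    rw [← pabb, ← pbb]; exact mul_mem ha (mul_mem hb hb)
  have hbba : nbba w ∈ subH w := by
    rw [← pbba, ← pbb]; exact mul_mem (mul_mem hb hb) ha
  have hbbaab : nbbaab w ∈ subH w := by
    rw [← pbbaab, ← pbaab, ← pba, ← pab]
    exact mul_mem hb (mul_mem (mul_mem hb ha) (mul_mem ha hb))
  fin_cases j
  · change nbabbab w ∈ _
    rw [← p1]; exact mul_mem hbab hbab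
  · change nbbabbaab w ∈ _
    rw [← p2]; exact mul_mem hbba hbbaab
  · change nabbabb w ∈ _
    rw [← p3]; exact mul_mem habb habb
  · change naabba w ∈ _
    rw [← p4, ← paa]; exact mul_mem (mul_mem ha ha) hbba

lemma subH_inter {w : ℂ} (h : w ^ 2 + w + 1 = 0) {n : Matrix (Fin 3) (Fin 3) ℂ}
    (hn : n ∈ subH w) : ∃ M' ∈ Submonoid.closure {gr1 w, gr2 w}, M'.det ≠ 0 ∧
      n * embB w = embB w * M' := by
  induction hn using Submonoid.closure_induction with
  | mem x hx =>
    rcases hx with rfl | rfl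
    · exact ⟨gr1 w, Submonoid.subset_closure (by simp), (dets h).1, (inter h).1⟩
    · exact ⟨gr2 w, Submonoid.subset_closure (by simp), (dets h).2, (inter h).2⟩
  | one => exact ⟨1, one_mem _, by simp, by simp⟩
  | mul x y _ _ hx hy =>
    obtain ⟨a, ha, da, ea⟩ := hx
    obtain ⟨b, hb, db, eb⟩ := hy
    refine ⟨a * b, mul_mem ha hb, by rw [Matrix.det_mul]; exact mul_ne_zero da db, ?_⟩
    rw [Matrix.mul_assoc, eb, ← Matrix.mul_assoc, ea, Matrix.mul_assoc]

lemma lift_inter {w : ℂ} (h : w ^ 2 + w + 1 = 0) {M' : Matrix (Fin 2) (Fin 2) ℂ}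
    (hM : M' ∈ Submonoid.closure {gr1 w, gr2 w}) :
    ∃ n ∈ subH w, n * embB w = embB w * M' := by
  induction hM using Submonoid.closure_induction with
  | mem x hx =>
    rcases hx with rfl | rfl
    · exact ⟨na w, Submonoid.subset_closure (by simp), (inter h).1⟩
    · exact ⟨nb w, Submonoid.subset_closure (by simp), (inter h).2⟩
  | one => exact ⟨1, one_mem _, by simp⟩
  | mul x y _ _ hx hy =>
    obtain ⟨a, ha, ea⟩ := hx
    obtain ⟨b, hb, eb⟩ := hy
    refine ⟨a * b, mul_mem ha hb, ?_⟩
    rw [Matrix.mul_assoc, eb, ← Matrix.mul_assoc, ea, Matrix.mul_assoc]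

lemma subH_le {w : ℂ} (h : w ^ 2 + w + 1 = 0) :
    subH w ≤ Submonoid.closure {s0 w, s1 w, s2 w} := by
  have h0 : s0 w ∈ Submonoid.closure {s0 w, s1 w, s2 w} := Submonoid.subset_closure (by simp)
  have h1 : s1 w ∈ Submonoid.closure {s0 w, s1 w, s2 w} := Submonoid.subset_closure (by simp)
  have h2 : s2 w ∈ Submonoid.closure {s0 w, s1 w, s2 w} := Submonoid.subset_closure (by simp)
  obtain ⟨p00, p11, p22, pna, pt, pnb, -⟩ := prods h
  rw [subH, Submonoid.closure_le]
  rintro x (rfl | rfl)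
  · rw [SetLike.mem_coe, ← pna, ← p22, ← p00]
    exact mul_mem (mul_mem h2 h2) (mul_mem h0 h0)
  · rw [SetLike.mem_coe, ← pnb, ← pt, ← p11, ← p00]
    exact mul_mem h0 (mul_mem (mul_mem h1 h1) (mul_mem h0 h0))

lemma cosets {w : ℂ} (h : w ^ 2 + w + 1 = 0) {M : Matrix (Fin 3) (Fin 3) ℂ}
    (hM : M ∈ Submonoid.closure {s0 w, s1 w, s2 w}) :
    ∃ j, ∃ n ∈ subH w, M = repX w j * n := by
  induction hM using Submonoid.closure_induction_left with
  | one => exact ⟨0, 1, one_mem _, by simp [repX, x0]⟩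
  | mul_left x hx y _ ih =>
    obtain ⟨j, n, hn, rfl⟩ := ih
    have : ∃ k l, x * repX w j = repX w k * schr w l := by
      rcases hx with rfl | rfl | rfl
      · exact ⟨_, _, step0 h j⟩
      · exact ⟨_, _, step1 h j⟩
      · exact ⟨_, _, step2 h j⟩
    obtain ⟨k, l, e⟩ := this
    refine ⟨k, schr w l * n, mul_mem (schr_mem h l) hn, ?_⟩
    rw [← Matrix.mul_assoc, e, Matrix.mul_assoc]

/-- An element of `G₂₅` preserving `{v | v 0 = v 2}` lies in `subH`. -/
lemma stab_mem_s16 {w : ℂ} (h : w ^ 2 + w + 1 = 0) {M : Matrix (Fin 3) (Fin 3) ℂ}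
    (hM : M ∈ Submonoid.closure {s0 w, s1 w, s2 w})
    (hs : ∀ v : Fin 3 → ℂ, v 0 = v 2 → (M *ᵥ v) 0 = (M *ᵥ v) 2) : M ∈ subH w := by
  obtain ⟨j, n, hn, rfl⟩ := cosets h hM
  obtain ⟨M', -, hd, e⟩ := subH_inter h hn
  have hx : ∀ v : Fin 3 → ℂ, v 0 = v 2 → (repX w j *ᵥ v) 0 = (repX w j *ᵥ v) 2 := by
    intro v hv
    have hu : IsUnit M'.det := isUnit_iff_ne_zero.mpr hd
    have e2 : n *ᵥ (embB w *ᵥ (M'⁻¹ *ᵥ (embL w *ᵥ v))) = v := by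
      rw [Matrix.mulVec_mulVec, e, Matrix.mulVec_mulVec, Matrix.mul_assoc,
        Matrix.mul_nonsing_inv _ hu, Matrix.mul_one]
      exact emb_right h v hv
    have := hs (embB w *ᵥ (M'⁻¹ *ᵥ (embL w *ᵥ v))) (by
      simp [Matrix.mulVec, dotProduct, Fin.sum_univ_three, embB])
    rwa [← Matrix.mulVec_mulVec, e2] at this
  have h1 := hx ![0, 1, 0] (by simp)
  have h2 := hx ![1, 0, 1] (by simp)
  rw [rep_stab h j (by simpa [Matrix.mulVec, dotProduct, Fin.sum_univ_three] using h1)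
    (by simpa [Matrix.mulVec, dotProduct, Fin.sum_univ_three] using h2), Matrix.one_mul]
  exact hn

/-- The `6`-reflection subquotient of `G₂₅` is isomorphic to `G₅`:
with `ζ = e^{πi/6}`, `ω = e^{2πi/3}`, `g` the product of the three generating order-3
reflections of `G₂₅`, and `E` the `ζ^2`-eigenspace of `g^2` (a `2`-dimensional
subspace), there is a `ℂ`-linear isomorphism `ψ : E ≅ ℂ^2` conjugating `π_E(N_E)`
onto `G₅`. -/
theorem statement_16 (ζ ω : ℂ) (hζ : ζ = Complex.exp (Real.pi * Complex.I / 6))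
    (hω : ω = Complex.exp (2 * Real.pi * Complex.I / 3))
    (a : Fin 3 → (Fin 3 → ℂ))
    (ha0 : a 0 = ![0, 0, 1])
    (ha1 : a 1 = ![ω, ω ^ 2, 1])
    (ha2 : a 2 = ![1, 0, 0])
    (G25 : Submonoid (Matrix (Fin 3) (Fin 3) ℂ))
    (hG25 : G25 = Submonoid.closure {M | ∃ i : Fin 3, M = reflMat (a i) ω})
    (g : Matrix (Fin 3) (Fin 3) ℂ)
    (hg : g = reflMat (a 0) ω * reflMat (a 1) ω * reflMat (a 2) ω)
    (E : Submodule ℂ (Fin 3 → ℂ)) (hE : E = eigSpace (g ^ 2) (ζ ^ 2))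
    (r₁ r₂' : Matrix (Fin 2) (Fin 2) ℂ)
    (hr₁ : r₁ = (ω / 2) • !![-1 - Complex.I, 1 - Complex.I;
      -1 - Complex.I, -1 + Complex.I])
    (hr₂' : r₂' = (ω / 2) • !![-1 + Complex.I, 1 - Complex.I;
      -1 - Complex.I, -1 - Complex.I])
    (G5 : Submonoid (Matrix (Fin 2) (Fin 2) ℂ))
    (hG5 : G5 = Submonoid.closure {r₁, r₂'}) :
    Module.finrank ℂ E = 2 ∧
    ∃ Φ : (Fin 2 → ℂ) →ₗ[ℂ] (Fin 3 → ℂ), Function.Injective Φ ∧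
      LinearMap.range Φ = E ∧
      (G5 : Set (Matrix (Fin 2) (Fin 2) ℂ)) =
        {M' | ∃ M ∈ G25, (∀ v ∈ E, M.mulVec v ∈ E) ∧
          ∀ t : Fin 2 → ℂ, M.mulVec (Φ t) = Φ (M'.mulVec t)} := by
  obtain ⟨h, hz, hc⟩ := omega_facts ζ ω hζ hω
  obtain ⟨e0, e1, e2⟩ := refl_facts h hc
  rw [← ha0] at e0
  rw [← ha1] at e1
  rw [← ha2] at e2
  have hG : G25 = Submonoid.closure {s0 ω, s1 ω, s2 ω} := by
    rw [hG25]
    congr 1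
    ext M
    simp [Fin.exists_fin_succ, e0, e1, e2]
  have hw1 : (1 + ω) ≠ 0 := by
    intro h0
    have : (1 : ℂ) = 0 := by linear_combination h - ω * h0
    exact one_ne_zero this
  have hmem : ∀ v, v ∈ E ↔ v 0 = v 2 := by
    intro v
    rw [hE, eigSpace, Module.End.mem_eigenspace_iff, Matrix.mulVecLin_apply, hg, e0, e1, e2,
      g_sq h, hz]
    constructor
    · intro hv
      have := congrFun hv 0
      simp [Matrix.mulVec, dotProduct, Fin.sum_univ_three] at this
      rcases this with this | this
      · exact this.symm
      · exact absurd this hw1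
    · intro hv
      ext i
      fin_cases i <;> simp [Matrix.mulVec, dotProduct, Fin.sum_univ_three, hv]
  have hG5' : G5 = Submonoid.closure {gr1 ω, gr2 ω} := by
    rw [hG5, hr₁, hr₂']; rfl
  have hinj : Function.Injective (embB ω).mulVecLin := by
    intro s t hst
    have := congrArg (fun v => embL ω *ᵥ v) hst
    simpa [Matrix.mulVecLin_apply, Matrix.mulVec_mulVec, emb_left h] using this
  have hrange : LinearMap.range (embB ω).mulVecLin = E := by
    ext v
    rw [hmem, LinearMap.mem_range]
    constructor
    · rintro ⟨t, rfl⟩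
      simp [Matrix.mulVec, dotProduct, embB]
    · intro hv
      exact ⟨embL ω *ᵥ v, emb_right h v hv⟩
  refine ⟨?_, (embB ω).mulVecLin, hinj, hrange, ?_⟩
  · rw [← hrange, LinearMap.finrank_range_of_inj hinj]
    simp
  · ext M'
    rw [hG5', hG]
    constructor
    · intro hM'
      obtain ⟨n, hn, e⟩ := lift_inter h hM'
      have ht : ∀ t : Fin 2 → ℂ, n *ᵥ ((embB ω).mulVecLin t) = (embB ω).mulVecLin (M' *ᵥ t) := by
        intro t
        simp only [Matrix.mulVecLin_apply, Matrix.mulVec_mulVec, e]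
      refine ⟨n, subH_le h hn, ?_, ht⟩
      intro v hv
      rw [← hrange] at hv ⊢
      obtain ⟨t, rfl⟩ := hv
      exact ⟨_, (ht t).symm⟩
    · rintro ⟨M, hM, hs, ht⟩
      have hn := stab_mem_s16 h hM (fun v hv => (hmem _).1 (hs v ((hmem v).2 hv)))
      obtain ⟨M'', hM'', -, e⟩ := subH_inter h hn
      have : M' = M'' := by
        apply Matrix.mulVec_injective
        ext1 t
        apply hinj
        rw [← ht t]
        simp only [Matrix.mulVecLin_apply, Matrix.mulVec_mulVec, e]
      rw [this]
      exact hM''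

end
end Paper
end

section
/- Let ζ = e^{πi/12}, let G_31 ⊂ GL_4(C) be the finite complex reflection group generated by the 60 order-2 reflections s(v) whose roots v are: e_a − i^k e_b (1 ≤ a < b ≤ 4, 0 ≤ k < 4), e_a (1 ≤ a ≤ 4), and the vectors (i^{a_1}, i^{a_2}, i^{a_3}, i^{a_4})^T with a_1 + a_2 + a_3 + a_4 even. Let g = s(e_4) s(e_1 − e_2) s(e_1 + e_4) s(e_1 + i e_2 + e_3 − i e_4) s(e_1 + e_2 + e_3 + e_4). Let E be the ζ^3-eigenspace of g^3, a 2-dimensional subspace, N_E = {s ∈ G_31 : s(E) ⊆ E}, and π_E restriction to E. Then there exists a C-linear isomorphism ψ : E → C^2 such that ψ ∘ π_E(N_E) ∘ ψ^{−1} = G_9, where G_9 ⊂ GL_2(C) is generated by r_3 = (1/√2)·[[1, −1], [−1, −1]] and r_4 = [[1, 0], [0, i]]. In other words, the 8-reflection subquotient of G_31 is isomorphic to G_9. -/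
open Matrix MvPolynomial

namespace Paper

noncomputable section

/-- The 60 roots of `G₃₁`: `e_a - i^k e_b` (`a < b`, `0 ≤ k < 4`), `e_a`, and the
vectors `(i^{t_1}, i^{t_2}, i^{t_3}, i^{t_4})` with `t_1 + t_2 + t_3 + t_4` even
(the `G(4,2,4)`-orbit of `e_1 + e_2 + e_3 + e_4`). -/
def rootsG31 : Set (Fin 4 → ℂ) :=
  {v | ∃ (p q : Fin 4) (k : ℕ), p < q ∧ k < 4 ∧
    v = (Pi.single p 1 : Fin 4 → ℂ) - Complex.I ^ k • (Pi.single q 1 : Fin 4 → ℂ)} ∪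
  {v | ∃ p : Fin 4, v = (Pi.single p 1 : Fin 4 → ℂ)} ∪
  {v | ∃ t : Fin 4 → ℕ, Even (t 0 + t 1 + t 2 + t 3) ∧ v = fun i => Complex.I ^ t i}

open Complex

/-- Explicit form of the reflection as a rank one perturbation. -/
lemma reflMat_eq {N : ℕ} (v : Fin N → ℂ) :
    reflMat v (-1) = 1 - (2 / herm v v) • vecMulVec v (star v) := by
  ext i j
  simp only [reflMat, Matrix.of_apply, Matrix.sub_apply, Matrix.smul_apply, vecMulVec_apply,
    Matrix.one_apply, smul_eq_mul, Pi.star_apply, starRingEnd_apply]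
  ring

lemma herm_eq {N : ℕ} (v : Fin N → ℂ) : star v ⬝ᵥ v = herm v v := by
  simp [herm, dotProduct, mul_comm]

lemma star_herm {N : ℕ} (v : Fin N → ℂ) : star (herm v v) = herm v v := by
  simp [herm, mul_comm]

/-- Reflections are unitary. -/
lemma reflMat_unitary {N : ℕ} (v : Fin N → ℂ) :
    reflMat v (-1) * (reflMat v (-1))ᴴ = 1 := by
  have h1 : (reflMat v (-1))ᴴ = reflMat v (-1) := by
    rw [reflMat_eq, conjTranspose_sub, conjTranspose_one, conjTranspose_smul,
      conjTranspose_vecMulVec, star_star, star_div₀, star_herm]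
    simp
  rw [h1, reflMat_eq]
  have h2 : vecMulVec v (star v) * vecMulVec v (star v) = herm v v • vecMulVec v (star v) := by
    rw [vecMulVec_mul_vecMulVec, herm_eq]
    ext i j; simp [vecMulVec_apply]; ring
  rw [sub_mul, mul_sub, mul_sub, one_mul, mul_one, Matrix.smul_mul, Matrix.mul_smul, Matrix.mul_smul, h2,
    smul_smul, smul_smul, one_mul]
  by_cases h : herm v v = 0
  · simp [h]
  · have : 2 / herm v v * (2 / herm v v) * herm v v = 2 / herm v v + 2 / herm v v := by
      field_simp; norm_num
    rw [this, add_smul]; abel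

/-- Row action of a reflection. -/
lemma vecMul_refl {N : ℕ} (v w : Fin N → ℂ) :
    w ᵥ* reflMat v (-1) = w - (2 / herm v v * (w ⬝ᵥ v)) • star v := by
  rw [reflMat_eq, vecMul_sub, vecMul_one]
  congr 1
  ext j
  simp [vecMul, dotProduct, vecMulVec_apply, Finset.mul_sum, Finset.sum_mul]
  refine Finset.sum_congr rfl fun i _ => by ring

/-- The Gaussian lattice preserved by `G₃₁`. -/
def InL (w : Fin 4 → ℂ) : Prop :=
  ∃ x y : Fin 4 → ℤ, (∀ j, w j = (x j : ℂ) + (y j : ℂ) * I) ∧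
    (∀ j, (x j + y j) % 2 = (x 0 + y 0) % 2) ∧
    (x 0 + x 1 + x 2 + x 3) % 2 = 0 ∧ (y 0 + y 1 + y 2 + y 3) % 2 = 0

lemma InL.sub {v w : Fin 4 → ℂ} (hv : InL v) (hw : InL w) : InL (v - w) := by
  obtain ⟨x, y, h1, h2, h3, h4⟩ := hv
  obtain ⟨x', y', h1', h2', h3', h4'⟩ := hw
  refine ⟨x - x', y - y', fun j => ?_, fun j => ?_, ?_, ?_⟩
  · simp [h1, h1']; ring
  · have := h2 j; have := h2' j
    simp only [Pi.sub_apply]; omega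
  · simp only [Pi.sub_apply]; omega
  · simp only [Pi.sub_apply]; omega

lemma InL.smul {v : Fin 4 → ℂ} (hv : InL v) (a b : ℤ) : InL (((a : ℂ) + (b : ℂ) * I) • v) := by
  obtain ⟨x, y, h1, h2, h3, h4⟩ := hv
  refine ⟨fun j => a * x j - b * y j, fun j => a * y j + b * x j, fun j => ?_, fun j => ?_, ?_, ?_⟩
  · simp only [Pi.smul_apply, smul_eq_mul, h1]; push_cast
    linear_combination (b : ℂ) * (y j) * I_sq
  · have h := h2 j
    obtain ⟨c, hc⟩ : ∃ c, x j + y j = x 0 + y 0 + 2 * c := ⟨(x j + y j - x 0 - y 0) / 2, by omega⟩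
    refine Int.ModEq.symm ((Int.modEq_iff_dvd).2 ⟨(a + b) * c - b * (y j - y 0), ?_⟩)
    linear_combination (a + b) * hc
  · have e1 : (x 0 + x 1 + x 2 + x 3) = 2 * ((x 0 + x 1 + x 2 + x 3) / 2) := by omega
    have e2 : (y 0 + y 1 + y 2 + y 3) = 2 * ((y 0 + y 1 + y 2 + y 3) / 2) := by omega
    refine Int.emod_eq_zero_of_dvd ⟨a * ((x 0 + x 1 + x 2 + x 3) / 2) -
      b * ((y 0 + y 1 + y 2 + y 3) / 2), ?_⟩
    linear_combination a * e1 - b * e2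
  · have e1 : (x 0 + x 1 + x 2 + x 3) = 2 * ((x 0 + x 1 + x 2 + x 3) / 2) := by omega
    have e2 : (y 0 + y 1 + y 2 + y 3) = 2 * ((y 0 + y 1 + y 2 + y 3) / 2) := by omega
    refine Int.emod_eq_zero_of_dvd ⟨a * ((y 0 + y 1 + y 2 + y 3) / 2) +
      b * ((x 0 + x 1 + x 2 + x 3) / 2), ?_⟩
    linear_combination a * e2 + b * e1

/-- Multiplying a Gaussian integer by a power of `I`. -/
lemma mul_I_pow (t : ℕ) (x y : ℤ) : ∃ m n : ℤ,
    ((x : ℂ) + (y : ℂ) * I) * I ^ t = (m : ℂ) + (n : ℂ) * I ∧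
    ((t % 2 = 0 ∧ m % 2 = x % 2 ∧ n % 2 = y % 2) ∨
      (t % 2 = 1 ∧ m % 2 = y % 2 ∧ n % 2 = x % 2)) := by
  induction t with
  | zero => exact ⟨x, y, by simp, by simp⟩
  | succ t ih =>
    obtain ⟨m, n, h, h'⟩ := ih
    refine ⟨-n, m, ?_, by omega⟩
    rw [pow_succ, ← mul_assoc, h]; push_cast
    linear_combination (n : ℂ) * I_sq

lemma conj_I_pow (t : ℕ) : (starRingEnd ℂ) (I ^ t) = I ^ (3 * t) := by
  rw [map_pow, conj_I, pow_mul, I_pow_three]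

lemma I_pow_mul_conj (t : ℕ) : I ^ t * (starRingEnd ℂ) (I ^ t) = 1 := by
  rw [map_pow, conj_I, ← mul_pow]; simp

/-- Reflections of the first kind preserve the lattice. -/
lemma refl_pres1 (p q : Fin 4) (k : ℕ) (hpq : p < q) (w : Fin 4 → ℂ) (hw : InL w) :
    InL (w ᵥ* reflMat ((Pi.single p 1 : Fin 4 → ℂ) -
      Complex.I ^ k • (Pi.single q 1 : Fin 4 → ℂ)) (-1)) := by
  rw [vecMul_refl]
  refine hw.sub ?_
  set v : Fin 4 → ℂ := (Pi.single p 1 : Fin 4 → ℂ) - I ^ k • (Pi.single q 1 : Fin 4 → ℂ) with hv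
  have hne : p ≠ q := hpq.ne
  have hh : herm v v = 2 := by
    have : herm v v = v p * (starRingEnd ℂ) (v p) + v q * (starRingEnd ℂ) (v q) := by
      rw [herm, Fintype.sum_eq_add p q hne]
      rintro x ⟨h1, h2⟩
      simp [hv, h1, h2]
    rw [this]
    have h3 := I_pow_mul_conj k
    simp only [hv, Pi.sub_apply, Pi.smul_apply, Pi.single_eq_same, smul_eq_mul,
      Pi.single_eq_of_ne hne, Pi.single_eq_of_ne hne.symm]
    simp only [mul_zero, sub_zero, map_one, mul_one, zero_sub, map_neg, neg_mul_neg, h3]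
    norm_num
  have hd : w ⬝ᵥ v = w p - w q * I ^ k := by
    simp [hv, dotProduct_sub, dotProduct_smul, mul_comm]
  rw [hh, hd]
  obtain ⟨x, y, h1, h2, -, -⟩ := hw
  obtain ⟨m, n, h5, h6⟩ := mul_I_pow k (x q) (y q)
  obtain ⟨m', n', h7, h8⟩ := mul_I_pow (3 * k) (x p - m) (y p - n)
  have hp := h2 p
  have hq := h2 q
  refine ⟨fun j => if j = p then x p - m else if j = q then -m' else 0,
    fun j => if j = p then y p - n else if j = q then -n' else 0, fun j => ?_, ?_, ?_, ?_⟩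
  · rw [h1 p, h1 q, h5]
    push_cast at h7
    by_cases hj : j = p
    · subst hj
      simp [hv, hne]; ring
    · by_cases hj' : j = q
      · subst hj'
        simp only [hv, Pi.smul_apply, Pi.star_apply, Pi.sub_apply, Pi.single_eq_of_ne hj,
          Pi.single_eq_same, smul_eq_mul, if_neg hj, if_true, mul_one, zero_sub, star_neg]
        rw [← starRingEnd_apply, conj_I_pow]; push_cast
        linear_combination -h7
      · simp [hv, hj, hj']
  · have key : (x p - m + (y p - n)) % 2 = 0 ∧ (-m' + -n') % 2 = 0 := by omega
    intro j
    dsimp only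
    split_ifs <;> omega
  · clear_value v
    fin_cases p <;> fin_cases q <;> simp at hpq <;> simp <;> simp at h6 h8 hp hq <;> omega
  · clear_value v
    fin_cases p <;> fin_cases q <;> simp at hpq <;> simp <;> simp at h6 h8 hp hq <;> omega

lemma refl_pres2 (p : Fin 4) (w : Fin 4 → ℂ) (hw : InL w) :
    InL (w ᵥ* reflMat (Pi.single p 1 : Fin 4 → ℂ) (-1)) := by
  rw [vecMul_refl]
  refine hw.sub ?_
  have hh : herm (Pi.single p 1 : Fin 4 → ℂ) (Pi.single p 1) = 1 := by
    simp [herm, Pi.single_apply]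
  rw [hh]
  obtain ⟨x, y, h1, -, -, -⟩ := hw
  refine ⟨fun j => if j = p then 2 * x p else 0, fun j => if j = p then 2 * y p else 0,
    fun j => ?_, fun j => ?_, ?_, ?_⟩
  · by_cases hj : j = p
    · subst hj; simp [h1]; ring
    · simp [hj]
  · dsimp only
    split_ifs <;> omega
  · fin_cases p <;> simp
  · fin_cases p <;> simp

lemma refl_pres3 (t : Fin 4 → ℕ) (ht : Even (t 0 + t 1 + t 2 + t 3)) (w : Fin 4 → ℂ)
    (hw : InL w) : InL (w ᵥ* reflMat (fun i => I ^ t i) (-1)) := by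
  rw [vecMul_refl]
  refine hw.sub ?_
  have hh : herm (fun i => I ^ t i : Fin 4 → ℂ) (fun i => I ^ t i) = 4 := by
    simp only [herm, I_pow_mul_conj]; simp
  rw [hh]
  have ht' := Nat.even_iff.1 ht
  have hs : InL (star (fun i => I ^ t i : Fin 4 → ℂ)) := by
    choose m n h h' using fun i => mul_I_pow (3 * t i) 1 0
    refine ⟨m, n, fun j => ?_, fun j => ?_, ?_, ?_⟩
    · rw [← h j, Pi.star_apply, ← starRingEnd_apply, conj_I_pow]; simp
    · have := h' j; have := h' 0; omega
    · have := h' 0; have := h' 1; have := h' 2; have := h' 3; omega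
    · have := h' 0; have := h' 1; have := h' 2; have := h' 3; omega
  obtain ⟨x, y, h1, h2, h3, h4⟩ := hw
  choose m n h h' using fun i => mul_I_pow (t i) (x i) (y i)
  have hd : w ⬝ᵥ (fun i => I ^ t i : Fin 4 → ℂ) =
      ((m 0 + m 1 + m 2 + m 3 : ℤ) : ℂ) + ((n 0 + n 1 + n 2 + n 3 : ℤ) : ℂ) * I := by
    simp only [dotProduct, Fin.sum_univ_four, h1, h]; push_cast; ring
  have a0 := h' 0
  have a1 := h' 1
  have a2 := h' 2
  have a3 := h' 3
  have b1 := h2 1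
  have b2 := h2 2
  have b3 := h2 3
  obtain ⟨c, hc⟩ : ∃ c, m 0 + m 1 + m 2 + m 3 = 2 * c :=
    ⟨(m 0 + m 1 + m 2 + m 3) / 2, by omega⟩
  obtain ⟨d, hd'⟩ : ∃ d, n 0 + n 1 + n 2 + n 3 = 2 * d :=
    ⟨(n 0 + n 1 + n 2 + n 3) / 2, by omega⟩
  rw [hd, hc, hd']
  convert hs.smul c d using 2
  push_cast; ring

/-- Elements of `G₃₁` are unitary and preserve the lattice. -/
lemma G31_props (M : Matrix (Fin 4) (Fin 4) ℂ)
    (hM : M ∈ Submonoid.closure {M | ∃ v ∈ rootsG31, M = reflMat v (-1)}) :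
    M * Mᴴ = 1 ∧ ∀ w, InL w → InL (w ᵥ* M) := by
  induction hM using Submonoid.closure_induction with
  | mem M h =>
    obtain ⟨v, hv, rfl⟩ := h
    refine ⟨reflMat_unitary v, fun w hw => ?_⟩
    rcases hv with (⟨p, q, k, hpq, -, rfl⟩ | ⟨p, rfl⟩) | ⟨t, ht, rfl⟩
    · exact refl_pres1 p q k hpq w hw
    · exact refl_pres2 p w hw
    · exact refl_pres3 t ht w hw
  | one => simp
  | mul A B _ _ hA hB =>
    refine ⟨?_, fun w hw => ?_⟩
    · rw [conjTranspose_mul, mul_assoc, ← mul_assoc B, hB.1, one_mul, hA.1]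
    · rw [← vecMul_vecMul]; exact hB.2 _ (hA.2 _ hw)

/-- `√2` as a complex number. -/
def sq2_s17 : ℂ := (Real.sqrt 2 : ℂ)

/-- The slope of the eigenspace. -/
def kk : ℂ := -(1 + sq2_s17)

/-- The primitive eighth root of unity `e^{πi/4}`. -/
def z8 : ℂ := sq2_s17 / 2 * (1 + I)

lemma sq2_sq : sq2_s17 * sq2_s17 = 2 := by
  rw [sq2_s17, ← ofReal_mul, Real.mul_self_sqrt (by norm_num)]; norm_num

lemma sq2_ne : sq2_s17 ≠ 0 := by
  intro h; have := sq2_sq; rw [h] at this; norm_num at this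

lemma conj_sq2 : (starRingEnd ℂ) sq2_s17 = sq2_s17 := by simp [sq2_s17]

lemma conj_kk : (starRingEnd ℂ) kk = kk := by simp [kk, conj_sq2]

lemma kk_sq : kk * kk = 1 - 2 * kk := by
  rw [kk]; linear_combination sq2_sq

lemma kk_ne : kk ≠ 0 := by
  intro h; have := kk_sq; rw [h] at this; norm_num at this

lemma z8_sq : z8 ^ 2 = I := by
  rw [z8]; linear_combination (1 / 4) * (1 + I) ^ 2 * sq2_sq + (1 / 2) * I_sq

lemma z8_pow8 : z8 ^ 8 = 1 := by
  have : z8 ^ 8 = (z8 ^ 2) ^ 4 := by ring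
  rw [this, z8_sq, I_pow_four]

lemma z8_pow4 : z8 ^ 4 = -1 := by
  have : z8 ^ 4 = (z8 ^ 2) ^ 2 := by ring
  rw [this, z8_sq, I_sq]

lemma z8_even (n : ℕ) : z8 ^ (2 * n) = I ^ n := by rw [pow_mul, z8_sq]

lemma z8_ne : z8 ≠ 0 := by
  intro h; have := z8_pow8; rw [h] at this; norm_num at this

lemma one_add_I : 1 + I = sq2_s17 * z8 := by
  rw [z8]; linear_combination (-1 / 2) * (1 + I) * sq2_sq

/-- Real and imaginary parts of powers of `I`. -/
def pr : Fin 4 → ℤ := ![1, 0, -1, 0]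

/-- Imaginary parts of powers of `I`. -/
def pim : Fin 4 → ℤ := ![0, 1, 0, -1]

lemma I_pow_fin (n : Fin 4) : I ^ (n : ℕ) = (pr n : ℂ) + (pim n : ℂ) * I := by
  fin_cases n <;> simp [pr, pim, I_pow_three]

set_option synthInstance.maxSize 2000 in
set_option synthInstance.maxHeartbeats 400000 in
lemma enum4 : ∀ a ∈ Finset.Icc (-2 : ℤ) 2, ∀ b ∈ Finset.Icc (-2 : ℤ) 2,
    ∀ c ∈ Finset.Icc (-2 : ℤ) 2, ∀ d ∈ Finset.Icc (-2 : ℤ) 2,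
    a * a + b * b + c * c + d * d = 4 → (a + b) % 2 = 0 →
    ∃ n m : Fin 4, (a = 2 * pr n ∧ b = 2 * pim n ∧ c = 0 ∧ d = 0) ∨
      (a = 0 ∧ b = 0 ∧ c = 2 * pr n ∧ d = 2 * pim n) ∨
      (a = pr n - pim n ∧ b = pr n + pim n ∧ c = pr (n + m) - pim (n + m) ∧
        d = pr (n + m) + pim (n + m)) ∨ (c + d) % 2 = 1 := by
  decide +kernel

lemma enum2 : ∀ a ∈ Finset.Icc (-2 : ℤ) 2, ∀ b ∈ Finset.Icc (-2 : ℤ) 2,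
    ∀ c ∈ Finset.Icc (-2 : ℤ) 2, ∀ d ∈ Finset.Icc (-2 : ℤ) 2,
    a * a + b * b + c * c + d * d = 2 → (a + b) % 2 = (c + d) % 2 →
    ∃ n m : Fin 4, (a = pr n - pim n ∧ b = pr n + pim n ∧ c = 0 ∧ d = 0) ∨
      (a = 0 ∧ b = 0 ∧ c = pr n - pim n ∧ d = pr n + pim n) ∨
      (a = pr n ∧ b = pim n ∧ c = pr (n + m) ∧ d = pim (n + m)) := by
  decide +kernel

lemma I_pow_add_fin (n m : Fin 4) : I ^ ((n + m : Fin 4) : ℕ) = I ^ (n : ℕ) * I ^ (m : ℕ) := by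
  rw [← pow_add, Fin.val_add, ← I_pow_eq_pow_mod]

/-- The short projections of lattice vectors. -/
lemma rowA (w : Fin 4 → ℂ) (hw : InL w)
    (hn : w 0 * (starRingEnd ℂ) (w 0) + w 1 * (starRingEnd ℂ) (w 1) +
      w 2 * (starRingEnd ℂ) (w 2) + w 3 * (starRingEnd ℂ) (w 3) = 4)
    (hn' : (w 0 + kk * w 2) * (starRingEnd ℂ) (w 0 + kk * w 2) +
      (w 1 + kk * w 3) * (starRingEnd ℂ) (w 1 + kk * w 3) = 4) :
    ∃ n m : ℕ, (w 0 + kk * w 2 = 2 * z8 ^ n ∧ w 1 + kk * w 3 = 0) ∨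
      (w 0 + kk * w 2 = 0 ∧ w 1 + kk * w 3 = 2 * z8 ^ n) ∨
      (w 0 + kk * w 2 = sq2_s17 * z8 ^ n ∧ w 1 + kk * w 3 = sq2_s17 * z8 ^ n * I ^ m) := by
  obtain ⟨x, y, h1, h2, h3, h4⟩ := hw
  have p1 := h2 1
  have p2 := h2 2
  have p3 := h2 3
  simp only [h1, map_add, map_mul, conj_I, conj_kk, map_intCast] at hn hn'
  have e1 : (x 0 * x 0 + y 0 * y 0 + x 1 * x 1 + y 1 * y 1) +
      (x 2 * x 2 + y 2 * y 2 + x 3 * x 3 + y 3 * y 3) = 4 := by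
    have : (((x 0 * x 0 + y 0 * y 0 + x 1 * x 1 + y 1 * y 1) +
      (x 2 * x 2 + y 2 * y 2 + x 3 * x 3 + y 3 * y 3) : ℤ) : ℂ) = ((4 : ℤ) : ℂ) := by
      push_cast
      linear_combination hn + ((y 0 : ℂ) ^ 2 + (y 1 : ℂ) ^ 2 + (y 2 : ℂ) ^ 2 + (y 3 : ℂ) ^ 2) * I_sq
    exact_mod_cast this
  have e2 : x 0 * x 2 + y 0 * y 2 + x 1 * x 3 + y 1 * y 3 =
      x 2 * x 2 + y 2 * y 2 + x 3 * x 3 + y 3 * y 3 := by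
    have : kk * ((x 0 * x 2 + y 0 * y 2 + x 1 * x 3 + y 1 * y 3 -
      (x 2 * x 2 + y 2 * y 2 + x 3 * x 3 + y 3 * y 3) : ℤ) : ℂ) = 0 := by
      have e1' : (((x 0 * x 0 + y 0 * y 0 + x 1 * x 1 + y 1 * y 1) +
        (x 2 * x 2 + y 2 * y 2 + x 3 * x 3 + y 3 * y 3) : ℤ) : ℂ) = ((4 : ℤ) : ℂ) := by rw [e1]
      push_cast at e1' ⊢
      linear_combination (1 / 2) * hn' - (1 / 2) * e1' -
        (1 / 2) * ((x 2 : ℂ) ^ 2 + (y 2 : ℂ) ^ 2 + (x 3 : ℂ) ^ 2 + (y 3 : ℂ) ^ 2) * kk_sq +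
        (1 / 2) * ((y 0 : ℂ) ^ 2 + (y 1 : ℂ) ^ 2 + kk ^ 2 * (y 2 : ℂ) ^ 2 + kk ^ 2 * (y 3 : ℂ) ^ 2 +
          2 * kk * y 0 * y 2 + 2 * kk * y 1 * y 3) * I_sq
    rcases mul_eq_zero.1 this with h | h
    · exact absurd h kk_ne
    · have : x 0 * x 2 + y 0 * y 2 + x 1 * x 3 + y 1 * y 3 -
        (x 2 * x 2 + y 2 * y 2 + x 3 * x 3 + y 3 * y 3) = 0 := by exact_mod_cast h
      linarith
  have e3 : 0 ≤ (x 0 - x 2) * (x 0 - x 2) + (y 0 - y 2) * (y 0 - y 2) +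
      (x 1 - x 3) * (x 1 - x 3) + (y 1 - y 3) * (y 1 - y 3) := by
    have := mul_self_nonneg (x 0 - x 2)
    have := mul_self_nonneg (y 0 - y 2)
    have := mul_self_nonneg (x 1 - x 3)
    have := mul_self_nonneg (y 1 - y 3)
    linarith
  have bd : ∀ a : ℤ, a * a ≤ 4 → a ∈ Finset.Icc (-2 : ℤ) 2 := by
    intro a ha
    rw [Finset.mem_Icc]; constructor <;> nlinarith
  have sx := fun j => mul_self_nonneg (x j)
  have sy := fun j => mul_self_nonneg (y j)
  have z0 : ∀ a : ℤ, a * a ≤ 0 → a = 0 := fun a ha =>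
    mul_self_eq_zero.1 (le_antisymm ha (mul_self_nonneg a))
  have bx0 := bd (x 0) (by linarith [sx 0, sx 1, sx 2, sx 3, sy 0, sy 1, sy 2, sy 3])
  have bdy0 := bd (y 0) (by linarith [sx 0, sx 1, sx 2, sx 3, sy 0, sy 1, sy 2, sy 3])
  have bx1 := bd (x 1) (by linarith [sx 0, sx 1, sx 2, sx 3, sy 0, sy 1, sy 2, sy 3])
  have bdy1 := bd (y 1) (by linarith [sx 0, sx 1, sx 2, sx 3, sy 0, sy 1, sy 2, sy 3])
  obtain ⟨B, hB⟩ : ∃ B, B = x 2 * x 2 + y 2 * y 2 + x 3 * x 3 + y 3 * y 3 := ⟨_, rfl⟩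
  have hB0 : 0 ≤ B := by linarith [sx 2, sx 3, sy 2, sy 3]
  have hB2 : B ≤ 2 := by nlinarith
  have hcases : B = 0 ∨ B = 1 ∨ B = 2 := by omega
  simp only [h1]
  rcases hcases with h | h | h
  · have hx2 := z0 (x 2) (by linarith [sx 2, sx 3, sy 2, sy 3])
    have hx3 := z0 (x 3) (by linarith [sx 2, sx 3, sy 2, sy 3])
    have hy2 := z0 (y 2) (by linarith [sx 2, sx 3, sy 2, sy 3])
    have hy3 := z0 (y 3) (by linarith [sx 2, sx 3, sy 2, sy 3])
    rw [hx2, hy2] at p2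
    obtain ⟨n, m, H⟩ := enum4 _ bx0 _ bdy0 _ bx1 _ bdy1 (by linarith) (by omega)
    have hnn := I_pow_fin n
    have hnm := I_pow_fin (n + m)
    rw [I_pow_add_fin] at hnm
    rw [hx2, hx3, hy2, hy3]
    rcases H with ⟨a, b, c, d⟩ | ⟨a, b, c, d⟩ | ⟨a, b, c, d⟩ | H
    · refine ⟨2 * n, 0, Or.inl ?_⟩
      rw [a, b, c, d, z8_even, hnn]; push_cast; constructor <;> ring
    · refine ⟨2 * n, 0, Or.inr (Or.inl ?_)⟩
      rw [a, b, c, d, z8_even, hnn]; push_cast; constructor <;> ring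
    · refine ⟨2 * n + 1, m, Or.inr (Or.inr ?_)⟩
      rw [a, b, c, d, pow_succ, z8_even]; push_cast
      have e := one_add_I
      constructor
      · linear_combination I ^ (n : ℕ) * e - (1 + I) * hnn - (pim n : ℂ) * I_sq
      · linear_combination I ^ (n : ℕ) * I ^ (m : ℕ) * e - (1 + I) * hnm -
          (pim (n + m) : ℂ) * I_sq
    · omega
  · exfalso
    have q : ∀ a : ℤ, (a * a) % 2 = a % 2 := by
      intro a
      rcases Int.emod_two_eq_zero_or_one a with h | h <;> simp [Int.mul_emod, h]
    have := q (x 2)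
    have := q (x 3)
    have := q (y 2)
    have := q (y 3)
    omega
  · have e3' : (x 0 - x 2) * (x 0 - x 2) + (y 0 - y 2) * (y 0 - y 2) +
      (x 1 - x 3) * (x 1 - x 3) + (y 1 - y 3) * (y 1 - y 3) = 0 := by linarith
    have s1 := mul_self_nonneg (x 0 - x 2)
    have s2 := mul_self_nonneg (y 0 - y 2)
    have s3 := mul_self_nonneg (x 1 - x 3)
    have s4 := mul_self_nonneg (y 1 - y 3)
    have hx2 := z0 (x 0 - x 2) (by linarith)
    have hy2 := z0 (y 0 - y 2) (by linarith)
    have hx3 := z0 (x 1 - x 3) (by linarith)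
    have hy3 := z0 (y 1 - y 3) (by linarith)
    have hx2 : x 2 = x 0 := by omega
    have hy2 : y 2 = y 0 := by omega
    have hx3 : x 3 = x 1 := by omega
    have hy3 : y 3 = y 1 := by omega
    obtain ⟨n, m, H⟩ := enum2 _ bx0 _ bdy0 _ bx1 _ bdy1 (by linarith) (by omega)
    have hnn := I_pow_fin n
    have hnm := I_pow_fin (n + m)
    rw [I_pow_add_fin] at hnm
    rw [hx2, hx3, hy2, hy3]
    have hkk : kk = -(1 + sq2_s17) := rfl
    have e := one_add_I
    have e4 := z8_pow4
    have q2 := sq2_sq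
    rcases H with ⟨a, b, c, d⟩ | ⟨a, b, c, d⟩ | ⟨a, b, c, d⟩
    · refine ⟨2 * n + 5, 0, Or.inl ?_⟩
      rw [a, b, c, d, pow_add, z8_even, hkk]; push_cast
      constructor
      · linear_combination (-sq2_s17) * (I ^ (n : ℕ) * e - (1 + I) * hnn - (pim n : ℂ) * I_sq)
          - I ^ (n : ℕ) * z8 * q2 - 2 * I ^ (n : ℕ) * z8 * e4
      · ring
    · refine ⟨2 * n + 5, 0, Or.inr (Or.inl ?_)⟩
      rw [a, b, c, d, pow_add, z8_even, hkk]; push_cast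
      constructor
      · ring
      · linear_combination (-sq2_s17) * (I ^ (n : ℕ) * e - (1 + I) * hnn - (pim n : ℂ) * I_sq)
          - I ^ (n : ℕ) * z8 * q2 - 2 * I ^ (n : ℕ) * z8 * e4
    · refine ⟨2 * n + 4, m, Or.inr (Or.inr ?_)⟩
      rw [a, b, c, d, pow_add, z8_even, hkk, e4]
      constructor
      · linear_combination sq2_s17 * hnn
      · linear_combination sq2_s17 * hnm

/-- The basis matrix of the eigenspace. -/
def FF : Matrix (Fin 4) (Fin 2) ℂ := !![1, 0; 0, 1; kk, 0; 0, kk]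

/-- First generator of `G₉`. -/
def R3 : Matrix (Fin 2) (Fin 2) ℂ := (1 / sq2_s17) • !![1, -1; -1, -1]

/-- Second generator of `G₉`. -/
def R4 : Matrix (Fin 2) (Fin 2) ℂ := !![1, 0; 0, I]

/-- The group `G₉`. -/
def GG9 : Submonoid (Matrix (Fin 2) (Fin 2) ℂ) := Submonoid.closure {R3, R4}

/-- The group `G₃₁`. -/
def GG31 : Submonoid (Matrix (Fin 4) (Fin 4) ℂ) :=
  Submonoid.closure {M | ∃ v ∈ rootsG31, M = reflMat v (-1)}

lemma R3_eq : R3 = !![sq2_s17 / 2, -sq2_s17 / 2; -sq2_s17 / 2, -sq2_s17 / 2] := by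
  have h : 1 / sq2_s17 = sq2_s17 / 2 := by
    rw [div_eq_div_iff sq2_ne two_ne_zero, sq2_sq, one_mul]
  rw [R3, h]; ext i j; fin_cases i <;> fin_cases j <;> simp <;> ring

lemma FF_sq : FFᴴ * FF = (1 + kk * kk) • (1 : Matrix (Fin 2) (Fin 2) ℂ) := by
  have : star kk = kk := conj_kk
  ext i j
  fin_cases i <;> fin_cases j <;>
    simp [FF, Matrix.mul_apply, Fin.sum_univ_four, conj_kk]

lemma ind_unitary {M : Matrix (Fin 4) (Fin 4) ℂ} {M' : Matrix (Fin 2) (Fin 2) ℂ}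
    (hM : M * Mᴴ = 1) (h : M * FF = FF * M') : M' * M'ᴴ = 1 := by
  have hM2 : Mᴴ * M = 1 := mul_eq_one_comm.1 hM
  have e : (FF * M')ᴴ * (FF * M') = FFᴴ * FF := by
    rw [← h, conjTranspose_mul, Matrix.mul_assoc, ← Matrix.mul_assoc Mᴴ, hM2, Matrix.one_mul]
  rw [conjTranspose_mul, Matrix.mul_assoc, ← Matrix.mul_assoc FFᴴ, FF_sq] at e
  have hk : 1 + kk * kk ≠ 0 := by
    intro h0
    have h1 := kk_sq
    have h2 : kk = 1 := by linear_combination (1 / 2 : ℂ) * h1 - (1 / 2 : ℂ) * h0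
    rw [h2] at h0; norm_num at h0
  rw [smul_mul_assoc, one_mul, mul_smul_comm] at e
  have := smul_right_injective _ hk e
  exact mul_eq_one_comm.1 this

/-- The row analysis applied to a lattice vector supported in the first two coordinates. -/
lemma row_form {M : Matrix (Fin 4) (Fin 4) ℂ} {M' : Matrix (Fin 2) (Fin 2) ℂ}
    (hM : M ∈ GG31) (h : M * FF = FF * M') (a b : ℂ) (hL : InL ![a, b, 0, 0])
    (hab : a * (starRingEnd ℂ) a + b * (starRingEnd ℂ) b = 4) :
    ∃ n m : ℕ,
      ((![a, b] ᵥ* M') 0 = 2 * z8 ^ n ∧ (![a, b] ᵥ* M') 1 = 0) ∨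
      ((![a, b] ᵥ* M') 0 = 0 ∧ (![a, b] ᵥ* M') 1 = 2 * z8 ^ n) ∨
      ((![a, b] ᵥ* M') 0 = sq2_s17 * z8 ^ n ∧ (![a, b] ᵥ* M') 1 = sq2_s17 * z8 ^ n * I ^ m) := by
  obtain ⟨hu, hl⟩ := G31_props M hM
  have hu' := ind_unitary hu h
  have hw := hl _ hL
  have e0 : ![a, b] ᵥ* M' = (![a, b, 0, 0] ᵥ* M) ᵥ* FF := by
    rw [vecMul_vecMul, h, ← vecMul_vecMul]
    congr 1
    ext j; fin_cases j <;> simp [vecMul, dotProduct, Fin.sum_univ_four, FF]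
  have norm_pres : ∀ (n : ℕ) (u : Fin n → ℂ) (A : Matrix (Fin n) (Fin n) ℂ), A * Aᴴ = 1 →
      (u ᵥ* A) ⬝ᵥ star (u ᵥ* A) = u ⬝ᵥ star u := by
    intro n u A hA
    rw [star_vecMul, dotProduct_mulVec, vecMul_vecMul, hA, vecMul_one]
  have n1 := norm_pres 4 ![a, b, 0, 0] M hu
  have n2 := norm_pres 2 ![a, b] M' hu'
  have c0 : (![a, b] ᵥ* M') 0 = (![a, b, 0, 0] ᵥ* M) 0 + kk * (![a, b, 0, 0] ᵥ* M) 2 := by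
    rw [e0]
    generalize ![a, b, 0, 0] ᵥ* M = w
    simp [vecMul, dotProduct, Fin.sum_univ_four, FF, mul_comm]
  have c1 : (![a, b] ᵥ* M') 1 = (![a, b, 0, 0] ᵥ* M) 1 + kk * (![a, b, 0, 0] ᵥ* M) 3 := by
    rw [e0]
    generalize ![a, b, 0, 0] ᵥ* M = w
    simp [vecMul, dotProduct, Fin.sum_univ_four, FF, mul_comm]
  rw [c0, c1]
  refine rowA _ hw ?_ ?_
  · generalize ![a, b, 0, 0] ᵥ* M = w at *
    simp [dotProduct, Fin.sum_univ_four] at n1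
    rw [← hab]; linear_combination n1
  · rw [← c0, ← c1]
    generalize ![a, b] ᵥ* M' = w at *
    simp [dotProduct, Fin.sum_univ_two] at n2
    rw [← hab]; linear_combination n2

lemma InL_e0 : InL ![2, 0, 0, 0] := by
  refine ⟨![2, 0, 0, 0], 0, fun j => ?_, fun j => ?_, ?_, ?_⟩
  · fin_cases j <;> simp
  · fin_cases j <;> simp
  · simp
  · simp

lemma InL_e01 : InL ![1 + I, 1 + I, 0, 0] := by
  refine ⟨![1, 1, 0, 0], ![1, 1, 0, 0], fun j => ?_, fun j => ?_, ?_, ?_⟩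
  · fin_cases j <;> simp
  · fin_cases j <;> simp
  · simp
  · simp

lemma R4_pow (m : ℕ) : R4 ^ m = !![1, 0; 0, I ^ m] := by
  induction m with
  | zero => simp [Matrix.one_fin_two]
  | succ m ih => rw [pow_succ, ih, R4]; ext i j; fin_cases i <;> fin_cases j <;> simp [pow_succ]

/-- Induced elements whose first row is `(1, 0)` are powers of `r₄`. -/
lemma fix_row {M : Matrix (Fin 4) (Fin 4) ℂ} {M' : Matrix (Fin 2) (Fin 2) ℂ}
    (hM : M ∈ GG31) (h : M * FF = FF * M') (h00 : M' 0 0 = 1) (h01 : M' 0 1 = 0) :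
    M' ∈ GG9 := by
  have hu := ind_unitary (G31_props M hM).1 h
  have h10 : M' 1 0 = 0 := by
    have := congrFun (congrFun hu 1) 0
    simpa [Matrix.mul_apply, Fin.sum_univ_two, h00, h01] using this
  obtain ⟨n, m, H⟩ := row_form hM h _ _ InL_e01 (by
    simp only [map_add, map_one, conj_I]; linear_combination (-2) * I_sq)
  have hne : (1 : ℂ) + I ≠ 0 := by
    intro h0; have := congrArg re h0; simp at this
  have v0 : (![1 + I, 1 + I] ᵥ* M') 0 = 1 + I := by
    simp [vecMul, dotProduct, Fin.sum_univ_two, h00, h10]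
  have v1 : (![1 + I, 1 + I] ᵥ* M') 1 = (1 + I) * M' 1 1 := by
    simp [vecMul, dotProduct, Fin.sum_univ_two, h01]
  rw [v0, v1] at H
  have h11 : ∃ m : ℕ, M' 1 1 = I ^ m := by
    rcases H with ⟨a, b⟩ | ⟨a, b⟩ | ⟨a, b⟩
    · exfalso
      have hd : M' 1 1 = 0 := by simpa [hne] using b
      have := congrFun (congrFun hu 1) 1
      simp [Matrix.mul_apply, Fin.sum_univ_two, h10, hd] at this
    · exact absurd a hne
    · refine ⟨m, ?_⟩
      rw [← a] at b
      exact mul_left_cancel₀ hne b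
  obtain ⟨m, hm⟩ := h11
  have : M' = R4 ^ m := by
    rw [R4_pow]; ext i j; fin_cases i <;> fin_cases j <;> simp [h00, h01, h10, hm]
  rw [this]
  exact pow_mem (Submonoid.subset_closure (by simp)) m

lemma R3_mem : R3 ∈ GG9 := Submonoid.subset_closure (by simp)
lemma R4_mem : R4 ∈ GG9 := Submonoid.subset_closure (by simp)

/-- The Hadamard matrix lies in `G₉`. -/
lemma had_mem : !![sq2_s17 / 2, sq2_s17 / 2; sq2_s17 / 2, -sq2_s17 / 2] ∈ GG9 := by
  have : !![sq2_s17 / 2, sq2_s17 / 2; sq2_s17 / 2, -sq2_s17 / 2] = R4 ^ 2 * R3 * R4 ^ 2 := by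
    rw [R4_pow, R3_eq]
    ext i j; fin_cases i <;> fin_cases j <;> simp <;> ring
  rw [this]
  exact mul_mem (mul_mem (pow_mem R4_mem 2) R3_mem) (pow_mem R4_mem 2)

/-- The scalar `ζ₈` lies in `G₉`. -/
lemma z8_mem : !![z8, 0; 0, z8] ∈ GG9 := by
  have : !![z8, 0; 0, z8] = (R3 * R4) * (R3 * R4) * (R3 * R4) := by
    have q3 : sq2_s17 ^ 3 = 2 * sq2_s17 := by linear_combination sq2_s17 * sq2_sq
    have i3 : I ^ 3 = -I := I_pow_three
    rw [R4, R3_eq, z8]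
    ext i j; fin_cases i <;> fin_cases j <;> simp <;> ring_nf <;>
      simp only [q3, i3, I_sq] <;> ring
  rw [this]
  have := mul_mem R3_mem R4_mem
  exact mul_mem (mul_mem this this) this

lemma z8_pow_mem (n : ℕ) : !![z8 ^ n, 0; 0, z8 ^ n] ∈ GG9 := by
  have : !![z8 ^ n, 0; 0, z8 ^ n] = !![z8, 0; 0, z8] ^ n := by
    induction n with
    | zero => simp [Matrix.one_fin_two]
    | succ n ih => rw [pow_succ !![z8, 0; 0, z8] n, ← ih]; ext i j; fin_cases i <;> fin_cases j <;> simp [pow_succ]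
  rw [this]; exact pow_mem z8_mem n

lemma swap_mem : !![0, 1; 1, 0] ∈ GG9 := by
  have : (!![0, 1; 1, 0] : Matrix (Fin 2) (Fin 2) ℂ) =
      !![sq2_s17 / 2, sq2_s17 / 2; sq2_s17 / 2, -sq2_s17 / 2] * R4 ^ 2 *
        !![sq2_s17 / 2, sq2_s17 / 2; sq2_s17 / 2, -sq2_s17 / 2] := by
    have q2 : sq2_s17 ^ 2 = 2 := by rw [sq, sq2_sq]
    rw [R4_pow]
    ext i j; fin_cases i <;> fin_cases j <;> simp <;> ring_nf <;> simp only [q2] <;> norm_num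
  rw [this]
  exact mul_mem (mul_mem had_mem (pow_mem R4_mem 2)) had_mem

/-- The three possible first rows can be moved to `(1, 0)`. -/
lemma row_move (a b : ℂ) (n m : ℕ)
    (H : (2 * a = 2 * z8 ^ n ∧ 2 * b = 0) ∨ (2 * a = 0 ∧ 2 * b = 2 * z8 ^ n) ∨
      (2 * a = sq2_s17 * z8 ^ n ∧ 2 * b = sq2_s17 * z8 ^ n * I ^ m)) :
    ∃ D ∈ GG9, ∃ D' ∈ GG9, D * D' = 1 ∧ (![a, b] ᵥ* D) 0 = 1 ∧ (![a, b] ᵥ* D) 1 = 0 := by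
  have hz : z8 ^ n * z8 ^ (7 * n) = 1 := by
    rw [← pow_add, show n + 7 * n = 8 * n by ring, pow_mul, z8_pow8, one_pow]
  have hz' : z8 ^ (7 * n) * z8 ^ n = 1 := by rw [mul_comm, hz]
  have hi : I ^ m * I ^ (3 * m) = 1 := by
    rw [← pow_add, show m + 3 * m = 4 * m by ring, pow_mul, I_pow_four, one_pow]
  have hi' : I ^ (3 * m) * I ^ m = 1 := by rw [mul_comm, hi]
  have q2 : sq2_s17 * sq2_s17 = 2 := sq2_sq
  have hs : !![z8 ^ (7 * n), 0; 0, z8 ^ (7 * n)] * !![z8 ^ n, 0; 0, z8 ^ n] = 1 := by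
    rw [Matrix.one_fin_two]
    ext i j; fin_cases i <;> fin_cases j <;> simp [hz']
  rcases H with ⟨h1, h2⟩ | ⟨h1, h2⟩ | ⟨h1, h2⟩
  · have ha : a = z8 ^ n := by linear_combination h1 / 2
    have hb : b = 0 := by linear_combination h2 / 2
    refine ⟨_, z8_pow_mem (7 * n), _, z8_pow_mem n, hs, ?_, ?_⟩
    · simp [vecMul, dotProduct, Fin.sum_univ_two, ha, hz]
    · simp [vecMul, dotProduct, Fin.sum_univ_two, hb]
  · have ha : a = 0 := by linear_combination h1 / 2
    have hb : b = z8 ^ n := by linear_combination h2 / 2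
    refine ⟨_, mul_mem (z8_pow_mem (7 * n)) swap_mem, _, mul_mem swap_mem (z8_pow_mem n),
      ?_, ?_, ?_⟩
    · have : (!![0, 1; 1, 0] : Matrix (Fin 2) (Fin 2) ℂ) * !![0, 1; 1, 0] = 1 := by
        simp [Matrix.one_fin_two]
      rw [mul_assoc, ← mul_assoc !![0, 1; 1, 0] !![0, 1; 1, 0], this, one_mul, hs]
    · simp [vecMul, dotProduct, Fin.sum_univ_two, ha, hb, hz]
    · simp [vecMul, dotProduct, Fin.sum_univ_two, ha]
  · have ha : a = sq2_s17 / 2 * z8 ^ n := by linear_combination h1 / 2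
    have hb : b = sq2_s17 / 2 * z8 ^ n * I ^ m := by linear_combination h2 / 2
    refine ⟨_, mul_mem (z8_pow_mem (7 * n)) (mul_mem (pow_mem R4_mem (3 * m)) had_mem), _,
      mul_mem (mul_mem had_mem (pow_mem R4_mem m)) (z8_pow_mem n), ?_, ?_, ?_⟩
    · have e1 : !![sq2_s17 / 2, sq2_s17 / 2; sq2_s17 / 2, -sq2_s17 / 2] *
          !![sq2_s17 / 2, sq2_s17 / 2; sq2_s17 / 2, -sq2_s17 / 2] = 1 := by
        have q2 : sq2_s17 ^ 2 = 2 := by rw [sq, sq2_sq]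
        rw [Matrix.one_fin_two]
        ext i j; fin_cases i <;> fin_cases j <;> simp <;> ring_nf <;> simp only [q2] <;> norm_num
      have e2 : R4 ^ (3 * m) * R4 ^ m = 1 := by
        rw [R4_pow, R4_pow, Matrix.one_fin_two]
        ext i j; fin_cases i <;> fin_cases j <;> simp [hi']
      calc _ = !![z8 ^ (7 * n), 0; 0, z8 ^ (7 * n)] * (R4 ^ (3 * m) *
          (!![sq2_s17 / 2, sq2_s17 / 2; sq2_s17 / 2, -sq2_s17 / 2] *
          !![sq2_s17 / 2, sq2_s17 / 2; sq2_s17 / 2, -sq2_s17 / 2]) * R4 ^ m) * !![z8 ^ n, 0; 0, z8 ^ n] := by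
            simp only [mul_assoc]
        _ = 1 := by rw [e1, mul_one, e2, mul_one, hs]
    · rw [R4_pow]
      simp [vecMul, dotProduct, Fin.sum_univ_two, ha, hb]
      linear_combination (sq2_s17 * sq2_s17 / 2) * hz + (sq2_s17 * sq2_s17 / 4) * (z8 ^ n * z8 ^ (7 * n)) * hi
        + (1 / 2) * q2
    · rw [R4_pow]
      simp [vecMul, dotProduct, Fin.sum_univ_two, ha, hb]
      linear_combination -(sq2_s17 * sq2_s17 / 4) * (z8 ^ n * z8 ^ (7 * n)) * hi

lemma mem_of_root {v : Fin 4 → ℂ} (hv : v ∈ rootsG31) : reflMat v (-1) ∈ GG31 :=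
  Submonoid.subset_closure ⟨v, hv, rfl⟩

lemma root1 (p q : Fin 4) (k : ℕ) (h : p < q) (hk : k < 4) (v : Fin 4 → ℂ)
    (hv : v = (Pi.single p 1 : Fin 4 → ℂ) - I ^ k • (Pi.single q 1 : Fin 4 → ℂ)) :
    v ∈ rootsG31 := Or.inl (Or.inl ⟨p, q, k, h, hk, hv⟩)

lemma lift_R3 : ∃ M ∈ GG31, M * FF = FF * R3 := by
  refine ⟨reflMat ![1, 0, 0, -1] (-1) * reflMat ![1, -1, 1, 1] (-1), mul_mem ?_ ?_, ?_⟩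
  · refine mem_of_root (root1 0 3 0 (by decide) (by decide) _ ?_)
    ext j; fin_cases j <;> simp
  · refine mem_of_root (Or.inr ⟨![0, 2, 0, 0], by decide, ?_⟩)
    ext j; fin_cases j <;> simp
  · have e : reflMat ![1, 0, 0, -1] (-1) * reflMat ![1, -1, 1, 1] (-1) =
        (1 / 2 : ℂ) • !![-1, 1, -1, 1; 1, 1, 1, 1; -1, 1, 1, -1; 1, 1, -1, -1] := by
      ext i j
      fin_cases i <;> fin_cases j <;>
        simp [reflMat, herm, Matrix.mul_apply, Fin.sum_univ_four] <;> norm_num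
    have q2 : sq2_s17 ^ 2 = 2 := by rw [sq, sq2_sq]
    rw [e, R3_eq, FF, kk]
    ext i j
    fin_cases i <;> fin_cases j <;> simp [Matrix.mul_apply, Fin.sum_univ_four] <;> ring_nf <;>
      simp only [q2] <;> ring

lemma lift_R4 : ∃ M ∈ GG31, M * FF = FF * R4 := by
  refine ⟨reflMat ![0, 1, 0, -1] (-1) * reflMat ![0, 1, 0, -I] (-1) * reflMat ![0, 0, 0, 1] (-1),
    mul_mem (mul_mem ?_ ?_) ?_, ?_⟩
  · refine mem_of_root (root1 1 3 0 (by decide) (by decide) _ ?_)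
    ext j; fin_cases j <;> simp
  · refine mem_of_root (root1 1 3 1 (by decide) (by decide) _ ?_)
    ext j; fin_cases j <;> simp
  · refine mem_of_root (Or.inl (Or.inr ⟨3, ?_⟩))
    ext j; fin_cases j <;> simp
  · have e : reflMat ![0, 1, 0, -1] (-1) * reflMat ![0, 1, 0, -I] (-1) *
        reflMat ![0, 0, 0, 1] (-1) =
        !![1, 0, 0, 0; 0, I, 0, 0; 0, 0, 1, 0; 0, 0, 0, I] := by
      ext i j
      fin_cases i <;> fin_cases j <;>
        simp [reflMat, herm, Matrix.mul_apply, Fin.sum_univ_four] <;> norm_num <;> ring_nf <;> simp only [I_sq] <;> norm_num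
    rw [e, R4, FF]
    ext i j
    fin_cases i <;> fin_cases j <;> simp [Matrix.mul_apply, Fin.sum_univ_four, mul_comm]

lemma lift_G9 (A : Matrix (Fin 2) (Fin 2) ℂ) (hA : A ∈ GG9) : ∃ M ∈ GG31, M * FF = FF * A := by
  rw [GG9] at hA
  induction hA using Submonoid.closure_induction with
  | mem A h =>
    rcases h with rfl | rfl
    · exact lift_R3
    · exact lift_R4
  | one => exact ⟨1, one_mem _, by simp⟩
  | mul A B _ _ hA hB =>
    obtain ⟨M, hM, h1⟩ := hA
    obtain ⟨N, hN, h2⟩ := hB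
    exact ⟨M * N, mul_mem hM hN, by
      rw [Matrix.mul_assoc, h2, ← Matrix.mul_assoc, h1, Matrix.mul_assoc]⟩

/-- Every induced element lies in `G₉`. -/
lemma ind_mem {M : Matrix (Fin 4) (Fin 4) ℂ} {M' : Matrix (Fin 2) (Fin 2) ℂ}
    (hM : M ∈ GG31) (h : M * FF = FF * M') : M' ∈ GG9 := by
  obtain ⟨n, m, H⟩ := row_form hM h 2 0 InL_e0 (by simp only [map_ofNat, map_zero]; norm_num)
  have r0 : ∀ j, (![2, 0] ᵥ* M') j = 2 * M' 0 j := by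
    intro j; simp [vecMul, dotProduct, Fin.sum_univ_two]
  rw [r0, r0] at H
  obtain ⟨D, hD, D', hD', hDD, d0, d1⟩ := row_move _ _ n m H
  obtain ⟨N, hN, hN'⟩ := lift_G9 D hD
  have rr : ∀ j, (M' * D) 0 j = (![M' 0 0, M' 0 1] ᵥ* D) j := by
    intro j; simp [vecMul, dotProduct, Fin.sum_univ_two, Matrix.mul_apply]
  have key := fix_row (M := M * N) (M' := M' * D) (mul_mem hM hN)
    (by rw [Matrix.mul_assoc, hN', ← Matrix.mul_assoc, h, Matrix.mul_assoc])
    (by rw [rr, d0]) (by rw [rr, d1])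
  have : M' = M' * D * D' := by rw [mul_assoc, hDD, mul_one]
  rw [this]
  exact mul_mem key hD'

lemma FF_mulVec (t : Fin 2 → ℂ) : FF *ᵥ t = ![t 0, t 1, kk * t 0, kk * t 1] := by
  ext i; fin_cases i <;> simp [FF, mulVec, dotProduct, Fin.sum_univ_two]

set_option maxHeartbeats 2000000 in
/-- The cube of `g`. -/
lemma g_cube : (reflMat ![0, 0, 0, 1] (-1) * reflMat ![1, -1, 0, 0] (-1) *
      reflMat ![1, 0, 0, 1] (-1) *
      reflMat ![1, Complex.I, 1, -Complex.I] (-1) * reflMat ![1, 1, 1, 1] (-1)) ^ 3 =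
    (-(1 + I) / 2) • !![1, 0, 1, 0; 0, 1, 0, 1; 1, 0, -1, 0; 0, 1, 0, -1] := by
  have e1 : reflMat ![0, 0, 0, 1] (-1) * reflMat ![1, -1, 0, 0] (-1) =
      !![0, 1, 0, 0; 1, 0, 0, 0; 0, 0, 1, 0; 0, 0, 0, -1] := by
    ext i j
    fin_cases i <;> fin_cases j <;>
      simp [reflMat, herm, Matrix.mul_apply, Fin.sum_univ_four] <;> norm_num
  have e2 : reflMat ![1, 0, 0, 1] (-1) =
      !![0, 0, 0, -1; 0, 1, 0, 0; 0, 0, 1, 0; -1, 0, 0, 0] := by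
    ext i j
    fin_cases i <;> fin_cases j <;> simp [reflMat, herm, Fin.sum_univ_four] <;> norm_num
  have e3 : reflMat ![1, Complex.I, 1, -Complex.I] (-1) =
      (1 / 2 : ℂ) • !![1, I, -1, -I; -I, 1, -I, 1; -1, I, 1, -I; I, 1, I, 1] := by
    ext i j
    fin_cases i <;> fin_cases j <;> simp [reflMat, herm, Fin.sum_univ_four] <;> ring_nf <;>
      simp only [I_sq] <;> norm_num
  have e4 : reflMat ![1, 1, 1, 1] (-1) =
      (1 / 2 : ℂ) • !![1, -1, -1, -1; -1, 1, -1, -1; -1, -1, 1, -1; -1, -1, -1, 1] := by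
    ext i j
    fin_cases i <;> fin_cases j <;> simp [reflMat, herm, Fin.sum_univ_four] <;> norm_num
  have i3 : I ^ 3 = -I := I_pow_three
  have e5 : reflMat ![0, 0, 0, 1] (-1) * reflMat ![1, -1, 0, 0] (-1) *
      reflMat ![1, 0, 0, 1] (-1) *
      reflMat ![1, Complex.I, 1, -Complex.I] (-1) * reflMat ![1, 1, 1, 1] (-1) =
      (1 / 2 : ℂ) • !![-1, I, -1, I; 1, I, 1, I; -1, I, 1, -I; 1, I, -1, -I] := by
    rw [e1, e2, e3, e4]
    ext i j
    fin_cases i <;> fin_cases j <;> simp [Matrix.mul_apply, Fin.sum_univ_four] <;> ring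
  rw [e5, pow_succ, pow_two]
  ext i j
  fin_cases i <;> fin_cases j <;> simp [Matrix.mul_apply, Fin.sum_univ_four] <;> ring_nf <;>
    simp only [i3, I_sq] <;> ring

lemma zeta_cube : Complex.exp (Real.pi * Complex.I / 12) ^ 3 = z8 := by
  rw [← Complex.exp_nat_mul]
  have : ((3 : ℕ) : ℂ) * (Real.pi * Complex.I / 12) = ((Real.pi / 4 : ℝ) : ℂ) * I := by
    push_cast; ring
  rw [this, exp_mul_I, ← ofReal_cos, ← ofReal_sin, Real.cos_pi_div_four, Real.sin_pi_div_four,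
    z8, sq2_s17]
  push_cast; ring

theorem statement_17 (ζ : ℂ) (hζ : ζ = Complex.exp (Real.pi * Complex.I / 12))
    (G31 : Submonoid (Matrix (Fin 4) (Fin 4) ℂ))
    (hG31 : G31 = Submonoid.closure {M | ∃ v ∈ rootsG31, M = reflMat v (-1)})
    (g : Matrix (Fin 4) (Fin 4) ℂ)
    (hg : g = reflMat ![0, 0, 0, 1] (-1) * reflMat ![1, -1, 0, 0] (-1) *
      reflMat ![1, 0, 0, 1] (-1) *
      reflMat ![1, Complex.I, 1, -Complex.I] (-1) * reflMat ![1, 1, 1, 1] (-1))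
    (E : Submodule ℂ (Fin 4 → ℂ)) (hE : E = eigSpace (g ^ 3) (ζ ^ 3))
    (r₃ r₄ : Matrix (Fin 2) (Fin 2) ℂ)
    (hr₃ : r₃ = (1 / (Real.sqrt 2 : ℂ)) • !![1, -1; -1, -1])
    (hr₄ : r₄ = !![1, 0; 0, Complex.I])
    (G9 : Submonoid (Matrix (Fin 2) (Fin 2) ℂ))
    (hG9 : G9 = Submonoid.closure {r₃, r₄}) :
    Module.finrank ℂ E = 2 ∧
    ∃ Φ : (Fin 2 → ℂ) →ₗ[ℂ] (Fin 4 → ℂ), Function.Injective Φ ∧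
      LinearMap.range Φ = E ∧
      (G9 : Set (Matrix (Fin 2) (Fin 2) ℂ)) =
        {M' | ∃ M ∈ G31, (∀ v ∈ E, M.mulVec v ∈ E) ∧
          ∀ t : Fin 2 → ℂ, M.mulVec (Φ t) = Φ (M'.mulVec t)} := by
  have h31 : G31 = GG31 := hG31
  have h9 : G9 = GG9 := by rw [hG9, hr₃, hr₄]; rfl
  have hinj : Function.Injective FF.mulVecLin := by
    intro s t h
    simp only [mulVecLin_apply, FF_mulVec] at h
    have h0 := congrFun h 0
    have h1 := congrFun h 1
    ext j; fin_cases j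
    · simpa using h0
    · simpa using h1
  have hrange : LinearMap.range FF.mulVecLin = E := by
    rw [hE, hg, g_cube, hζ, zeta_cube, eigSpace]
    have hne : (1 : ℂ) + I ≠ 0 := by
      intro h0; have := congrArg re h0; simp at this
    ext v
    rw [Module.End.mem_eigenspace_iff, LinearMap.mem_range]
    constructor
    · rintro ⟨t, rfl⟩
      simp only [mulVecLin_apply, FF_mulVec]
      have q2 := sq2_sq
      ext j
      fin_cases j <;> simp [mulVec, dotProduct, Fin.sum_univ_four, z8, kk]
      · ring
      · ring
      · linear_combination (1 / 2) * (1 + I) * t 0 * q2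
      · linear_combination (1 / 2) * (1 + I) * t 1 * q2
    · intro h
      have h0 := congrFun h 0
      have h1 := congrFun h 1
      simp [mulVec, dotProduct, Fin.sum_univ_four, z8] at h0 h1
      refine ⟨![v 0, v 1], ?_⟩
      rw [mulVecLin_apply, FF_mulVec]
      have k0 : kk * v 0 = v 2 := by
        apply mul_left_cancel₀ hne
        rw [kk]; linear_combination 2 * h0
      have k1 : kk * v 1 = v 3 := by
        apply mul_left_cancel₀ hne
        rw [kk]; linear_combination 2 * h1
      ext j; fin_cases j <;> simp [k0, k1]
  refine ⟨?_, FF.mulVecLin, hinj, hrange, ?_⟩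
  · rw [← hrange, LinearMap.finrank_range_of_inj hinj]; simp
  · rw [h9, h31]
    ext M'
    simp only [SetLike.mem_coe, Set.mem_ofPred_eq, mulVecLin_apply]
    constructor
    · intro hM'
      obtain ⟨M, hM, h⟩ := lift_G9 M' hM'
      have ht : ∀ t : Fin 2 → ℂ, M *ᵥ FF *ᵥ t = FF *ᵥ M' *ᵥ t := by
        intro t; rw [mulVec_mulVec, mulVec_mulVec, h]
      refine ⟨M, hM, fun v hv => ?_, ht⟩
      rw [← hrange] at hv ⊢
      obtain ⟨t, rfl⟩ := hv
      exact ⟨M' *ᵥ t, (ht t).symm⟩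
    · rintro ⟨M, hM, -, ht⟩
      refine ind_mem hM ?_
      apply Matrix.ext_of_mulVec_single
      intro j
      rw [← mulVec_mulVec, ← mulVec_mulVec, ht]

end
end Paper
end

section
/- Let ζ = e^{πi/6}, let G_8 ⊂ GL_2(C) be generated by r_4 = [[1, 0], [0, i]] and r_4' = (1/2)·[[1+i, −1+i], [−1+i, 1+i]], and let g = r_4 r_4'. Then g has eigenvalues ζ and ζ^5 with respective eigenvectors q_1 = (1/√(6+2√3))·(1+√3, −1−i)^T and q_2 = (1/√(6−2√3))·(√3−1, 1+i)^T, the vector q_1 is a regular vector of G_8, and (g, ζ, q_1) is an admissible triplet of G_8. Moreover, with z = (z_1, z_2) the (g,ζ)-graded coordinate system dual to (q_1, q_2), the polynomials x_1 = (√3/16)·t_O and x_2 = (3/(8√2))·h_O, where t_O = u_1^{12} − 33 u_1^8 u_2^4 − 33 u_1^4 u_2^8 + u_2^{12} and h_O = u_1^8 + 14 u_1^4 u_2^4 + u_2^8, form a set of basic invariants of G_8 (of degrees 12 and 8) which is good with respect to (g, ζ, q_1) and compatible with z at q_1. -/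
open Matrix MvPolynomial

namespace Paper

noncomputable section

/-- The subalgebra of polynomials invariant under a set of matrices. -/
def matInvariantAlgebra {ι : Type*} [Fintype ι] (S : Set (Matrix ι ι ℂ)) :
    Subalgebra ℂ (MvPolynomial ι ℂ) where
  carrier := {P | ∀ M ∈ S, ∀ v : ι → ℂ, eval (M.mulVec v) P = eval v P}
  mul_mem' := by
    intro P Q hP hQ M hM v
    simp only [_root_.map_mul, hP M hM v, hQ M hM v]
  add_mem' := by
    intro P Q hP hQ M hM v
    simp only [_root_.map_add, hP M hM v, hQ M hM v]
  algebraMap_mem' := by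
    intro r M hM v
    simp [MvPolynomial.algebraMap_eq]

/-- `x` is a set of basic invariants with degrees `d` for the group of matrices `S`:
algebraically independent homogeneous invariant polynomials generating the invariant
ring. -/
structure IsBasicInvariantsMat {ι : Type*} [Fintype ι] (S : Set (Matrix ι ι ℂ)) (d : ι → ℕ)
    (x : ι → MvPolynomial ι ℂ) : Prop where
  homog : ∀ α, (x α).IsHomogeneous (d α)
  invariant : ∀ α, x α ∈ matInvariantAlgebra S
  indep : AlgebraicIndependent ℂ x
  gen : Algebra.adjoin ℂ (Set.range x) = matInvariantAlgebra S

/-- Directional derivative of a polynomial along the vector `w`; if `w = b β` for a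
basis `b` with dual coordinates `z`, this is `∂/∂z_β`. -/
def dirDeriv {n : ℕ} (w : Fin n → ℂ) (P : MvPolynomial (Fin n) ℂ) : MvPolynomial (Fin n) ℂ :=
  ∑ i, w i • pderiv i P

/-- Iterated derivative `∂^(a_1+...+a_n) / ∂z_1^(a_1) ... ∂z_n^(a_n)` in the coordinates
dual to the basis `b`. -/
def multiDeriv {n : ℕ} (b : Fin n → (Fin n → ℂ)) (a : Fin n → ℕ)
    (P : MvPolynomial (Fin n) ℂ) : MvPolynomial (Fin n) ℂ :=
  (List.finRange n).foldl (fun Q i => (fun R => dirDeriv (b i) R)^[a i] Q) P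

/-- The basic invariants `x` are compatible at `q` with the coordinates dual to `b`:
`∂x_α/∂z_β (q) = δ_{αβ}`. -/
def IsCompatible {n : ℕ} (b : Fin n → (Fin n → ℂ)) (q : Fin n → ℂ)
    (x : Fin n → MvPolynomial (Fin n) ℂ) : Prop :=
  ∀ α β, eval q (dirDeriv (b β) (x α)) = if α = β then 1 else 0

/-- The basic invariants `x` (with degrees `d`) are good with respect to the admissible
triplet, in the graded coordinates dual to `b`: all higher derivatives
`∂^a x_α/∂z^a (q)` with `Σ a_i d_i = d_α`, `Σ a_i ≥ 2` vanish at `q`. -/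
def IsGood {n : ℕ} (d : Fin n → ℕ) (b : Fin n → (Fin n → ℂ)) (q : Fin n → ℂ)
    (x : Fin n → MvPolynomial (Fin n) ℂ) : Prop :=
  ∀ α (a : Fin n → ℕ), (∑ i, a i * d i = d α) → 2 ≤ ∑ i, a i →
    eval q (multiDeriv b a (x α)) = 0
/-- A matrix is a reflection: it is nontrivial and fixes a hyperplane pointwise. -/
def IsReflection {n : ℕ} (M : Matrix (Fin n) (Fin n) ℂ) : Prop :=
  M ≠ 1 ∧ Module.finrank ℂ (LinearMap.ker (M - 1).mulVecLin) = n - 1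


/-! ### Generic facts -/

/-- Restriction of a polynomial to the line `u₁ = a u₂`. -/
def lineRes (a : ℂ) : MvPolynomial (Fin 2) ℂ →ₐ[ℂ] MvPolynomial (Fin 2) ℂ :=
  aeval ![C a * X 1, X 1]

theorem lineRes_dvd (a : ℂ) (P : MvPolynomial (Fin 2) ℂ) :
    (X 0 - C a * X 1) ∣ P - lineRes a P := by
  induction P using MvPolynomial.induction_on with
  | C c => simp [lineRes]
  | add p q hp hq =>
    rw [_root_.map_add, add_sub_add_comm]
    exact dvd_add hp hq
  | mul_X p i hp =>
    have hX : (X 0 - C a * X 1 : MvPolynomial (Fin 2) ℂ) ∣ X i - lineRes a (X i) := by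
      fin_cases i <;> simp [lineRes]
    rw [_root_.map_mul]
    have : p * X i - lineRes a p * lineRes a (X i)
        = (p - lineRes a p) * X i + lineRes a p * (X i - lineRes a (X i)) := by ring
    rw [this]
    exact dvd_add (hp.mul_right _) (hX.mul_left _)

theorem lineRes_peel (a : ℂ) (P : MvPolynomial (Fin 2) ℂ) (h : lineRes a P = 0) :
    ∃ Q, P = (X 0 - C a * X 1) * Q ∧ ∀ b, b ≠ a → lineRes b P = 0 → lineRes b Q = 0 := by
  have h1 := lineRes_dvd a P
  rw [h, sub_zero] at h1
  obtain ⟨Q, rfl⟩ := h1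
  refine ⟨Q, rfl, ?_⟩
  intro b hb h2
  rw [_root_.map_mul] at h2
  refine (mul_eq_zero.mp h2).resolve_left fun h3 => hb ?_
  have h4 := congrArg (eval ![0, 1]) h3
  simp [lineRes] at h4
  linear_combination h4

theorem eval_smul_of_homog {n : ℕ} {P : MvPolynomial (Fin 2) ℂ} (hP : P.IsHomogeneous n)
    (s : ℂ) (v : Fin 2 → ℂ) : eval (s • v) P = s ^ n * eval v P := by
  rw [eval_eq, eval_eq, Finset.mul_sum]
  refine Finset.sum_congr rfl fun d hd => ?_
  have hdeg : d.degree = n := by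
    by_contra hne
    exact (mem_support_iff.mp hd) (hP.coeff_eq_zero hne)
  simp only [Pi.smul_apply, smul_eq_mul, mul_pow, Finset.prod_mul_distrib]
  rw [Finset.prod_pow_eq_pow_sum]
  have : ∑ i ∈ d.support, d i = n := hdeg
  rw [this]; ring

theorem lineRes_eq_zero {n : ℕ} {P : MvPolynomial (Fin 2) ℂ} (hP : P.IsHomogeneous n)
    (a : ℂ) (h : eval ![a, 1] P = 0) : lineRes a P = 0 := by
  apply MvPolynomial.funext
  intro v
  have h1 : eval v (lineRes a P) = eval ((v 1) • ![a, 1]) P := by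
    have : (eval v).comp (lineRes a : MvPolynomial (Fin 2) ℂ →+* MvPolynomial (Fin 2) ℂ)
        = eval ((v 1) • ![a, 1]) := by
      apply MvPolynomial.ringHom_ext
      · intro r; simp [lineRes]
      · intro i; fin_cases i <;> simp [lineRes, mul_comm]
    exact congrArg (fun f => f P) this
  rw [h1, eval_smul_of_homog hP, h]; simp

/-- Linear substitution. -/
def linSub (M : Matrix (Fin 2) (Fin 2) ℂ) : MvPolynomial (Fin 2) ℂ →ₐ[ℂ] MvPolynomial (Fin 2) ℂ :=
  aeval fun i => ∑ j, C (M i j) * X j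

theorem eval_linSub (M : Matrix (Fin 2) (Fin 2) ℂ) (v : Fin 2 → ℂ) (P : MvPolynomial (Fin 2) ℂ) :
    eval v (linSub M P) = eval (M.mulVec v) P := by
  have : (eval v).comp (linSub M : MvPolynomial (Fin 2) ℂ →+* MvPolynomial (Fin 2) ℂ)
      = eval (M.mulVec v) := by
    apply MvPolynomial.ringHom_ext
    · intro r; simp [linSub]
    · intro i; fin_cases i <;> simp [linSub]
  exact congrArg (fun f => f P) this

theorem mem_inv_iff (S : Set (Matrix (Fin 2) (Fin 2) ℂ)) (P : MvPolynomial (Fin 2) ℂ) :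
    P ∈ matInvariantAlgebra S ↔ ∀ M ∈ S, linSub M P = P := by
  constructor
  · intro h M hM
    apply MvPolynomial.funext
    intro v
    rw [eval_linSub]; exact h M hM v
  · intro h M hM v
    rw [← eval_linSub, h M hM]

theorem comp_mem_inv (S : Set (Matrix (Fin 2) (Fin 2) ℂ)) (P : MvPolynomial (Fin 2) ℂ)
    (h : P ∈ matInvariantAlgebra S) (k : ℕ) : homogeneousComponent k P ∈ matInvariantAlgebra S := by
  rw [mem_inv_iff] at h ⊢
  intro M hM
  have hhom : ∀ (n : ℕ) (Q : MvPolynomial (Fin 2) ℂ), Q.IsHomogeneous n →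
      (linSub M Q).IsHomogeneous n := by
    intro n Q hQ
    have := hQ.aeval (fun i => ∑ j, C (M i j) * X j : Fin 2 → MvPolynomial (Fin 2) ℂ) (n := 1)
      (fun i => IsHomogeneous.sum _ _ _ fun j _ => isHomogeneous_C_mul_X _ _)
    simpa [linSub] using this
  have key : ∀ Q : MvPolynomial (Fin 2) ℂ,
      homogeneousComponent k (linSub M Q) = linSub M (homogeneousComponent k Q) := by
    intro Q
    conv_lhs => rw [← sum_homogeneousComponent Q]
    rw [_root_.map_sum, _root_.map_sum]
    have : ∀ i, homogeneousComponent k (linSub M (homogeneousComponent i Q))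
        = if k = i then linSub M (homogeneousComponent i Q) else 0 := fun i =>
      homogeneousComponent_of_mem (hhom i _ (homogeneousComponent_isHomogeneous i Q))
    simp only [this, Finset.sum_ite_eq, Finset.mem_range]
    split_ifs with hk
    · rfl
    · rw [homogeneousComponent_eq_zero k Q (by omega)]; simp
  rw [← key, h M hM]

theorem mem_inv_closure (S : Set (Matrix (Fin 2) (Fin 2) ℂ)) (P : MvPolynomial (Fin 2) ℂ)
    (h : P ∈ matInvariantAlgebra S) :
    P ∈ matInvariantAlgebra (Submonoid.closure S : Set (Matrix (Fin 2) (Fin 2) ℂ)) := by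
  intro M hM
  induction hM using Submonoid.closure_induction with
  | mem M hM => exact h M hM
  | one => intro v; simp
  | mul A B _ _ hA hB => intro v; rw [← Matrix.mulVec_mulVec, hA, hB]

theorem hasDerivAt_line {n : ℕ} (q w : Fin n → ℂ) (P : MvPolynomial (Fin n) ℂ) :
    HasDerivAt (fun s : ℂ => eval (q + s • w) P) (eval q (dirDeriv w P)) 0 := by
  induction P using MvPolynomial.induction_on with
  | C c => simpa [dirDeriv] using hasDerivAt_const (0 : ℂ) c
  | add p r hp hr =>
    have e : (fun s : ℂ => eval (q + s • w) (p + r))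
        = (fun s : ℂ => eval (q + s • w) p) + fun s : ℂ => eval (q + s • w) r := by
      funext s; simp
    rw [e]
    refine (hp.add hr).congr_deriv ?_
    simp [dirDeriv, Finset.sum_add_distrib]
  | mul_X p i hp =>
    have hX : HasDerivAt (fun s : ℂ => q i + s * w i) (w i) 0 := by
      simpa using ((hasDerivAt_id (0 : ℂ)).mul_const (w i)).const_add (q i)
    have e : (fun s : ℂ => eval (q + s • w) (p * X i))
        = (fun s : ℂ => eval (q + s • w) p) * fun s : ℂ => q i + s * w i := by
      funext s; simp
    rw [e]
    refine (hp.mul hX).congr_deriv ?_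
    simp [dirDeriv, pderiv_X, Pi.single_apply, Finset.sum_add_distrib, Finset.sum_mul]
    rw [add_comm]
    congr 1
    · ring
    · refine Finset.sum_congr rfl fun j _ => by ring

theorem fix_eq_one (S : Set (Matrix (Fin 2) (Fin 2) ℂ)) (x : Fin 2 → MvPolynomial (Fin 2) ℂ)
    (hx : ∀ α, x α ∈ matInvariantAlgebra S) (b : Fin 2 → Fin 2 → ℂ) (q : Fin 2 → ℂ)
    (hc : IsCompatible b q x) (M : Matrix (Fin 2) (Fin 2) ℂ) (hM : M ∈ S)
    (hq : M.mulVec q = q) : M = 1 := by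
  let A : Matrix (Fin 2) (Fin 2) ℂ := Matrix.of fun α i => eval q (pderiv i (x α))
  let B : Matrix (Fin 2) (Fin 2) ℂ := Matrix.of fun i β => b β i
  have hAw : ∀ α w, A.mulVec w α = eval q (dirDeriv w (x α)) := by
    intro α w
    simp [A, Matrix.mulVec, dotProduct, dirDeriv, mul_comm]
  have hAB : A * B = 1 := by
    ext α β
    have h1 := hc α β
    rw [← hAw] at h1
    rw [Matrix.one_apply, ← h1]
    rfl
  have hD : ∀ α w, eval q (dirDeriv (M.mulVec w) (x α)) = eval q (dirDeriv w (x α)) := by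
    intro α w
    refine (hasDerivAt_line q (M.mulVec w) (x α)).unique ?_
    have e : (fun s : ℂ => eval (q + s • M.mulVec w) (x α))
        = fun s : ℂ => eval (q + s • w) (x α) := by
      funext s
      rw [← hx α M hM (q + s • w), Matrix.mulVec_add, Matrix.mulVec_smul, hq]
    rw [e]
    exact hasDerivAt_line q w (x α)
  have hAM : A * M = A := by
    apply Matrix.ext_of_mulVec_single
    intro i
    rw [← Matrix.mulVec_mulVec]
    funext α
    rw [hAw, hAw, hD]
  have hBA : B * A = 1 := mul_eq_one_comm.mp hAB
  calc M = B * A * M := by rw [hBA, one_mul]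
    _ = B * (A * M) := by rw [mul_assoc]
    _ = 1 := by rw [hAM, hBA]

theorem algInd_of_line (x : Fin 2 → MvPolynomial (Fin 2) ℂ) (q : Fin 2 → ℂ) (c : ℂ) (hc : c ≠ 0)
    (h0 : ∀ s : ℂ, eval (s • q) (x 0) = c * s ^ 12) (h1 : ∀ s : ℂ, eval (s • q) (x 1) = 0)
    (hne : x 1 ≠ 0) : AlgebraicIndependent ℂ x := by
  rw [algebraicIndependent_iff]
  suffices H : ∀ n (F : MvPolynomial (Fin 2) ℂ), F.totalDegree ≤ n → aeval x F = 0 → F = 0 from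
    fun F hF => H _ F le_rfl hF
  intro n
  induction n with
  | zero =>
    intro F hF h
    rw [Nat.le_zero, totalDegree_eq_zero_iff_eq_C] at hF
    rw [hF] at h ⊢
    simpa using h
  | succ n ih =>
    intro F hF h
    have hdvd : ∀ P : MvPolynomial (Fin 2) ℂ, (X 1 : MvPolynomial (Fin 2) ℂ) ∣
        P - aeval ![X 0, (0 : MvPolynomial (Fin 2) ℂ)] P := by
      intro P
      induction P using MvPolynomial.induction_on with
      | C c => simp
      | add p q hp hq =>
        rw [_root_.map_add, add_sub_add_comm]
        exact dvd_add hp hq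
      | mul_X p i hp =>
        rw [_root_.map_mul]
        have hX : (X 1 : MvPolynomial (Fin 2) ℂ) ∣
            X i - aeval ![X 0, (0 : MvPolynomial (Fin 2) ℂ)] (X i : MvPolynomial (Fin 2) ℂ) := by
          fin_cases i <;> simp
        have : ∀ a b c d : MvPolynomial (Fin 2) ℂ,
          a * b - c * d = (a - c) * b + c * (b - d) := by intros; ring
        rw [this]
        exact dvd_add (hp.mul_right _) (hX.mul_left _)
    have hz : aeval ![X 0, (0 : MvPolynomial (Fin 2) ℂ)] F = 0 := by
      apply MvPolynomial.funext
      intro v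
      obtain ⟨s, hs⟩ := IsAlgClosed.exists_pow_nat_eq (v 0 / c) (n := 12) (by norm_num)
      have e1 : (eval v).comp ((aeval ![X 0, (0 : MvPolynomial (Fin 2) ℂ)] :
          MvPolynomial (Fin 2) ℂ →ₐ[ℂ] MvPolynomial (Fin 2) ℂ) :
          MvPolynomial (Fin 2) ℂ →+* MvPolynomial (Fin 2) ℂ)
          = (eval (s • q)).comp ((aeval x : MvPolynomial (Fin 2) ℂ →ₐ[ℂ] MvPolynomial (Fin 2) ℂ) :
          MvPolynomial (Fin 2) ℂ →+* MvPolynomial (Fin 2) ℂ) := by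
        apply MvPolynomial.ringHom_ext
        · intro r; simp
        · intro i
          fin_cases i
          · simp only [RingHom.comp_apply, RingHom.coe_coe, aeval_X, Fin.zero_eta]
            rw [h0, hs]; simp; field_simp
          · simp only [RingHom.comp_apply, RingHom.coe_coe, aeval_X, Fin.mk_one]
            rw [h1]; simp
      have e2 := congrArg (fun f => f F) e1
      simp only [RingHom.comp_apply, RingHom.coe_coe, h] at e2
      rw [e2]; simp
    have h2 := hdvd F
    rw [hz, sub_zero] at h2
    obtain ⟨Q, rfl⟩ := h2
    rw [_root_.map_mul, aeval_X] at h
    have hQ0 := (mul_eq_zero.mp h).resolve_left hne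
    by_cases hQ : Q = 0
    · simp [hQ]
    · rw [totalDegree_mul_of_isDomain (X_ne_zero 1) hQ, totalDegree_X] at hF
      rw [ih Q (by omega) hQ0]; simp

/-! ### The group `G₈` -/

/-- The generator `r₄`. -/
def gA : Matrix (Fin 2) (Fin 2) ℂ := !![1, 0; 0, Complex.I]

/-- The generator `r₄'`. -/
def gB : Matrix (Fin 2) (Fin 2) ℂ := (1 / 2 : ℂ) • !![1 + Complex.I, -1 + Complex.I;
      -1 + Complex.I, 1 + Complex.I]

/-- The invariant of degree 12. -/
def tPol : MvPolynomial (Fin 2) ℂ :=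
  X 0 ^ 12 - 33 * X 0 ^ 8 * X 1 ^ 4 - 33 * X 0 ^ 4 * X 1 ^ 8 + X 1 ^ 12

/-- The invariant of degree 8. -/
def hPol : MvPolynomial (Fin 2) ℂ := X 0 ^ 8 + 14 * X 0 ^ 4 * X 1 ^ 4 + X 1 ^ 8

theorem eval_tPol (v : Fin 2 → ℂ) : eval v tPol = v 0 ^ 12 - 33 * v 0 ^ 8 * v 1 ^ 4
    - 33 * v 0 ^ 4 * v 1 ^ 8 + v 1 ^ 12 := by simp [tPol]

theorem eval_hPol (v : Fin 2 → ℂ) :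
    eval v hPol = v 0 ^ 8 + 14 * v 0 ^ 4 * v 1 ^ 4 + v 1 ^ 8 := by simp [hPol]

theorem num_homog (n : ℕ) : (OfNat.ofNat (n + 2) : MvPolynomial (Fin 2) ℂ).IsHomogeneous 0 := by
  have : (OfNat.ofNat (n + 2) : MvPolynomial (Fin 2) ℂ) = C (OfNat.ofNat (n + 2) : ℂ) := by
    rw [map_ofNat]
  rw [this]; exact isHomogeneous_C _ _

theorem tPol_homog : tPol.IsHomogeneous 12 := by
  have h0 := fun n => isHomogeneous_X_pow (R := ℂ) (0 : Fin 2) n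
  have h1 := fun n => isHomogeneous_X_pow (R := ℂ) (1 : Fin 2) n
  exact (((h0 12).sub (((num_homog 31).mul (h0 8)).mul (h1 4))).sub
    (((num_homog 31).mul (h0 4)).mul (h1 8))).add (h1 12)

theorem hPol_homog : hPol.IsHomogeneous 8 := by
  have h0 := fun n => isHomogeneous_X_pow (R := ℂ) (0 : Fin 2) n
  have h1 := fun n => isHomogeneous_X_pow (R := ℂ) (1 : Fin 2) n
  exact ((h0 8).add (((num_homog 12).mul (h0 4)).mul (h1 4))).add (h1 8)

theorem hPol_ne_zero : hPol ≠ 0 := by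
  intro h
  have := eval_hPol ![1, 0]
  rw [h] at this
  simp at this

theorem gA_mulVec (v : Fin 2 → ℂ) : gA.mulVec v = ![v 0, Complex.I * v 1] := by
  funext i; fin_cases i <;> simp [gA, Matrix.vecHead, Matrix.vecTail]

theorem gB_mulVec (v : Fin 2 → ℂ) : gB.mulVec v =
    ![(1 / 2) * ((1 + Complex.I) * v 0 + (-1 + Complex.I) * v 1),
      (1 / 2) * ((-1 + Complex.I) * v 0 + (1 + Complex.I) * v 1)] := by
  funext i; fin_cases i <;> simp [gB, Matrix.vecHead, Matrix.vecTail] <;> ring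

theorem gB_pow (a b : ℂ) :
    ((1 / 2) * ((1 + Complex.I) * a + (-1 + Complex.I) * b)) ^ 4 =
      (-1 / 4) * ((a ^ 4 - 6 * a ^ 2 * b ^ 2 + b ^ 4)
        + Complex.I * (4 * a ^ 3 * b - 4 * a * b ^ 3)) := by
  have hI := Complex.I_sq
  have h1 : (1 / 2 : ℂ) * ((1 + Complex.I) * a + (-1 + Complex.I) * b)
      = ((1 + Complex.I) / 2) * (a + Complex.I * b) := by linear_combination (-b / 2) * hI
  have h2 : ((1 + Complex.I) / 2) ^ 4 = -1 / 4 := by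
    have : (1 + Complex.I) ^ 2 = 2 * Complex.I := by linear_combination hI
    linear_combination (1 / 16) * ((1 + Complex.I) ^ 2 + 2 * Complex.I) * this + (1 / 4) * hI
  have h3 : (a + Complex.I * b) ^ 2 = a ^ 2 - b ^ 2 + 2 * Complex.I * a * b := by
    linear_combination b ^ 2 * hI
  have h4 : (a + Complex.I * b) ^ 4 = ((a ^ 4 - 6 * a ^ 2 * b ^ 2 + b ^ 4)
        + Complex.I * (4 * a ^ 3 * b - 4 * a * b ^ 3)) := by
    linear_combination ((a + Complex.I * b) ^ 2 + (a ^ 2 - b ^ 2 + 2 * Complex.I * a * b)) * h3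
      + 4 * a ^ 2 * b ^ 2 * hI
  rw [h1, mul_pow, h2, h4]

theorem gB_pow' (a b : ℂ) :
    ((1 / 2) * ((-1 + Complex.I) * a + (1 + Complex.I) * b)) ^ 4 =
      (-1 / 4) * ((a ^ 4 - 6 * a ^ 2 * b ^ 2 + b ^ 4)
        - Complex.I * (4 * a ^ 3 * b - 4 * a * b ^ 3)) := by
  rw [add_comm, gB_pow]; ring

theorem pow4 {x y : ℂ} (h : x ^ 4 = y) : x ^ 8 = y ^ 2 ∧ x ^ 12 = y ^ 3 := by
  rw [← h]; constructor <;> ring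

theorem tPol_inv : tPol ∈ matInvariantAlgebra {gA, gB} := by
  have hI := Complex.I_sq
  intro M hM v
  rcases hM with rfl | hM
  · rw [gA_mulVec, eval_tPol, eval_tPol]
    have e := pow4 (show (Complex.I * v 1) ^ 4 = v 1 ^ 4 by simp [mul_pow])
    simp only [Matrix.cons_val_zero, Matrix.cons_val_one, e.1, e.2]
    simp [mul_pow]; ring
  · rw [Set.mem_singleton_iff.mp hM, gB_mulVec, eval_tPol, eval_tPol]
    have e1 := gB_pow (v 0) (v 1)
    have e2 := gB_pow' (v 0) (v 1)
    simp only [Matrix.cons_val_zero, Matrix.cons_val_one]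
    rw [(pow4 e1).1, (pow4 e1).2, (pow4 e2).1, (pow4 e2).2, e1, e2]
    linear_combination (-(9 / 8) * (v 0 ^ 4 - 6 * v 0 ^ 2 * v 1 ^ 2 + v 1 ^ 4)
      * (4 * v 0 ^ 3 * v 1 - 4 * v 0 * v 1 ^ 3) ^ 2) * hI

theorem hPol_inv : hPol ∈ matInvariantAlgebra {gA, gB} := by
  have hI := Complex.I_sq
  intro M hM v
  rcases hM with rfl | hM
  · rw [gA_mulVec, eval_hPol, eval_hPol]
    have e := pow4 (show (Complex.I * v 1) ^ 4 = v 1 ^ 4 by simp [mul_pow])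
    simp only [Matrix.cons_val_zero, Matrix.cons_val_one, e.1]
    simp [mul_pow]; ring
  · rw [Set.mem_singleton_iff.mp hM, gB_mulVec, eval_hPol, eval_hPol]
    have e1 := gB_pow (v 0) (v 1)
    have e2 := gB_pow' (v 0) (v 1)
    simp only [Matrix.cons_val_zero, Matrix.cons_val_one]
    rw [(pow4 e1).1, (pow4 e2).1, e1, e2]
    linear_combination (-(3 / 4) * (4 * v 0 ^ 3 * v 1 - 4 * v 0 * v 1 ^ 3) ^ 2) * hI

theorem quartet_dvd (a : ℂ) (ha : a ≠ 0) (P : MvPolynomial (Fin 2) ℂ)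
    (h0 : lineRes a P = 0) (h1 : lineRes (-Complex.I * a) P = 0) (h2 : lineRes (-a) P = 0)
    (h3 : lineRes (Complex.I * a) P = 0) : (X 0 ^ 4 - C (a ^ 4) * X 1 ^ 4) ∣ P := by
  have hI := Complex.I_sq
  have hre : ∀ x y : ℂ, x * a = y * a → x = y := fun x y h => mul_right_cancel₀ ha h
  have n1 : a ≠ -Complex.I * a := fun h => by
    have := congrArg Complex.re (hre 1 (-Complex.I) (by linear_combination h)); simp at this
  have n2 : a ≠ -a := fun h => by
    have := congrArg Complex.re (hre 1 (-1) (by linear_combination h)); norm_num at this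
  have n3 : a ≠ Complex.I * a := fun h => by
    have := congrArg Complex.re (hre 1 (Complex.I) (by linear_combination h)); simp at this
  have n4 : -Complex.I * a ≠ -a := fun h => by
    have := congrArg Complex.re (hre (-Complex.I) (-1) (by linear_combination h)); simp at this
  have n5 : -Complex.I * a ≠ Complex.I * a := fun h => by
    have := congrArg Complex.im (hre (-Complex.I) (Complex.I) (by linear_combination h))
    norm_num at this
  have n6 : -a ≠ Complex.I * a := fun h => by
    have := congrArg Complex.re (hre (-1) (Complex.I) (by linear_combination h)); simp at this
  obtain ⟨Q1, e1, k1⟩ := lineRes_peel a P h0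
  obtain ⟨Q2, e2, k2⟩ := lineRes_peel _ Q1 (k1 _ n1.symm h1)
  obtain ⟨Q3, e3, k3⟩ := lineRes_peel _ Q2 (k2 _ n4.symm (k1 _ n2.symm h2))
  obtain ⟨Q4, e4, _⟩ := lineRes_peel _ Q3 (k3 _ n6.symm (k2 _ n5.symm (k1 _ n3.symm h3)))
  refine ⟨Q4, ?_⟩
  rw [e1, e2, e3, e4]
  have hCI : (C Complex.I : MvPolynomial (Fin 2) ℂ) ^ 2 = -1 := by
    rw [← map_pow, hI]; simp
  simp only [_root_.map_mul, map_neg, map_pow]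
  linear_combination (- X 0 ^ 2 * C a ^ 2 * X 1 ^ 2 + C a ^ 4 * X 1 ^ 4) * Q4 * hCI

/-- The square root of three. -/
def w3 : ℂ := (Real.sqrt 3 : ℂ)

theorem w3_sq : w3 ^ 2 = 3 := by
  rw [w3, ← Complex.ofReal_pow, Real.sq_sqrt (by norm_num)]; norm_num

/-- The slope of the line through `q₁`. -/
def sA : ℂ := (1 + w3) * (-1 + Complex.I) / 2

/-- The slope of the line through `q₂`. -/
def sB : ℂ := (w3 - 1) * (1 - Complex.I) / 2

theorem sA_pow : sA ^ 4 = -7 - 4 * w3 := by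
  have hI := Complex.I_sq
  have hw := w3_sq
  have h1 : sA ^ 2 = (2 + w3) * (-Complex.I) := by
    rw [sA]; linear_combination (1 + w3) ^ 2 / 4 * hI - Complex.I / 2 * hw
  linear_combination (sA ^ 2 + (2 + w3) * (-Complex.I)) * h1 + (2 + w3) ^ 2 * hI - hw

theorem sB_pow : sB ^ 4 = -7 + 4 * w3 := by
  have hI := Complex.I_sq
  have hw := w3_sq
  have h1 : sB ^ 2 = (2 - w3) * (-Complex.I) := by
    rw [sB]; linear_combination (w3 - 1) ^ 2 / 4 * hI - Complex.I / 2 * hw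
  linear_combination (sB ^ 2 + (2 - w3) * (-Complex.I)) * h1 + (2 - w3) ^ 2 * hI - hw

theorem w3_ne : w3 ≠ 0 := fun h => by
  have := w3_sq; rw [h] at this; norm_num at this

theorem sA_ne : sA ≠ 0 := fun h => by
  have h1 := sA_pow
  have hw := w3_sq
  rw [h] at h1
  have : (1 : ℂ) = 0 := by linear_combination (7 - 4 * w3) * h1 + 16 * hw
  norm_num at this

theorem sB_ne : sB ≠ 0 := fun h => by
  have h1 := sB_pow
  have hw := w3_sq
  rw [h] at h1
  have : (1 : ℂ) = 0 := by linear_combination (7 + 4 * w3) * h1 + 16 * hw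
  norm_num at this

theorem hPol_dvd {k : ℕ} {P : MvPolynomial (Fin 2) ℂ} (hP : P.IsHomogeneous k)
    (hinv : P ∈ matInvariantAlgebra {gA, gB}) (h : eval ![sA, 1] P = 0) : hPol ∣ P := by
  have hI := Complex.I_sq
  have hw := w3_sq
  have rot : ∀ a : ℂ, eval ![a, 1] P = 0 → eval ![-Complex.I * a, 1] P = 0 := by
    intro a ha
    have e := hinv gA (by simp) ![a, 1]
    have e2 : gA.mulVec ![a, 1] = Complex.I • ![-Complex.I * a, 1] := by
      rw [gA_mulVec]
      funext i; fin_cases i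
      · simp; linear_combination a * hI
      · simp
    rw [e2, eval_smul_of_homog hP, ha] at e
    exact (mul_eq_zero.mp e).resolve_left (pow_ne_zero _ Complex.I_ne_zero)
  have four : ∀ a : ℂ, eval ![a, 1] P = 0 → eval ![-Complex.I * a, 1] P = 0 ∧
      eval ![-a, 1] P = 0 ∧ eval ![Complex.I * a, 1] P = 0 := by
    intro a ha
    have e1 := rot a ha
    have e2 := rot _ e1
    have e3 := rot _ e2
    have f2 : -Complex.I * (-Complex.I * a) = -a := by linear_combination a * hI
    rw [f2] at e2 e3
    have f3 : -Complex.I * (-a) = Complex.I * a := by ring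
    rw [f3] at e3
    exact ⟨e1, e2, e3⟩
  obtain ⟨hA1, hA2, hA3⟩ := four sA h
  have hB0 : eval ![sB, 1] P = 0 := by
    have e := hinv gB (by simp) ![-sA, 1]
    have e2 : gB.mulVec ![-sA, 1] = ((1 + Complex.I * (2 + w3)) / 2) • ![sB, 1] := by
      rw [gB_mulVec]
      funext i; fin_cases i
      · simp [sA, sB]; linear_combination (-(1 + w3) / 4 + (2 + w3) * (w3 - 1) / 4) * hI - (1 + Complex.I) / 4 * hw
      · simp [sA]; linear_combination (-(1 + w3) / 4) * hI
    rw [e2, eval_smul_of_homog hP, hA2] at e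
    refine (mul_eq_zero.mp e).resolve_left (pow_ne_zero _ ?_)
    intro h0
    have h1 : 8 + 4 * w3 = 0 := by
      linear_combination 2 * (1 - Complex.I * (2 + w3)) * h0 + (2 + w3) ^ 2 * hI - hw
    have : (1 : ℂ) = 0 := by linear_combination (8 - 4 * w3) / 16 * h1 + hw
    norm_num at this
  obtain ⟨hB1, hB2, hB3⟩ := four sB hB0
  have d1 := quartet_dvd sA sA_ne P (lineRes_eq_zero hP _ h) (lineRes_eq_zero hP _ hA1)
    (lineRes_eq_zero hP _ hA2) (lineRes_eq_zero hP _ hA3)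
  obtain ⟨Q, hQ⟩ := d1
  have res : ∀ b : ℂ, b ^ 4 = sB ^ 4 → lineRes b P = 0 → lineRes b Q = 0 := by
    intro b hb hz
    rw [hQ, _root_.map_mul] at hz
    refine (mul_eq_zero.mp hz).resolve_left fun h3 => ?_
    have h4 := congrArg (eval ![0, 1]) h3
    simp [lineRes] at h4
    rw [hb, sB_pow, sA_pow] at h4
    exact w3_ne (by linear_combination h4 / 8)
  have d2 := quartet_dvd sB sB_ne Q (res _ rfl (lineRes_eq_zero hP _ hB0))
    (res (-Complex.I * sB) (by linear_combination sB ^ 4 * Complex.I_pow_four) (lineRes_eq_zero hP _ hB1))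
    (res (-sB) (by ring) (lineRes_eq_zero hP _ hB2))
    (res (Complex.I * sB) (by simp [mul_pow]) (lineRes_eq_zero hP _ hB3))
  obtain ⟨Q', hQ'⟩ := d2
  refine ⟨Q', ?_⟩
  rw [hQ, hQ', ← mul_assoc]
  congr 1
  rw [sA_pow, sB_pow, hPol]
  have hC : (C w3 : MvPolynomial (Fin 2) ℂ) ^ 2 = 3 := by
    rw [← map_pow, hw, map_ofNat]
  simp only [_root_.map_add, _root_.map_sub, _root_.map_mul, map_neg, map_ofNat]
  linear_combination (-16 * X 1 ^ 8) * hC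

theorem heig : gA.mulVec (gB.mulVec ![sA, 1]) = ((w3 + Complex.I) / 2) • ![sA, 1] := by
  have hI := Complex.I_sq
  have hw := w3_sq
  rw [gB_mulVec, gA_mulVec]
  funext i; fin_cases i
  · simp [sA]; linear_combination ((1 - Complex.I) / 4) * hw
  · simp [sA]; linear_combination (-(1 + w3) / 2 + Complex.I * (1 + w3) / 4 + 1 / 2) * hI

theorem tPol_sA : eval ![sA, 1] tPol ≠ 0 := by
  have hw := w3_sq
  rw [eval_tPol]
  simp only [Matrix.cons_val_zero, Matrix.cons_val_one]
  rw [(pow4 sA_pow).1, (pow4 sA_pow).2, sA_pow]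
  intro h
  have h2 : 4320 + 2496 * w3 = 0 := by
    linear_combination -h - (64 * w3 + 864) * hw
  have : (27648 : ℂ) = 0 := by
    linear_combination (-4320 + 2496 * w3) * h2 - 2496 ^ 2 * hw
  norm_num at this

theorem gen_le (A : Subalgebra ℂ (MvPolynomial (Fin 2) ℂ)) (ht : tPol ∈ A) (hh : hPol ∈ A)
    (ζ : ℂ) (hζ : IsPrimitiveRoot ζ 12) (hζ2 : ζ = (w3 + Complex.I) / 2) :
    matInvariantAlgebra {gA, gB} ≤ A := by
  have htne := tPol_sA
  suffices H : ∀ n (P : MvPolynomial (Fin 2) ℂ), P.totalDegree < n →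
      P ∈ matInvariantAlgebra {gA, gB} → P ∈ A from fun P hP => H _ P (Nat.lt_succ_self _) hP
  intro n
  induction n with
  | zero => intro P h; omega
  | succ n ih =>
    intro P hPn hP
    rw [← sum_homogeneousComponent P]
    refine Subalgebra.sum_mem _ fun k hk => ?_
    have hkn : k ≤ n := by rw [Finset.mem_range] at hk; omega
    have hinv := comp_mem_inv _ P hP k
    have hhom := homogeneousComponent_isHomogeneous k P
    generalize homogeneousComponent k P = R at hinv hhom
    have hdiv : ∀ R : MvPolynomial (Fin 2) ℂ, R.IsHomogeneous k →
        R ∈ matInvariantAlgebra {gA, gB} → eval ![sA, 1] R = 0 → R ∈ A := by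
      intro R hR hRi h0
      obtain ⟨Q, rfl⟩ := hPol_dvd hR hRi h0
      by_cases hQ : Q = 0
      · simp [hQ]
      have hd := totalDegree_mul_of_isDomain hPol_ne_zero hQ
      rw [hR.totalDegree (mul_ne_zero hPol_ne_zero hQ), hPol_homog.totalDegree hPol_ne_zero] at hd
      refine A.mul_mem hh (ih Q (by omega) ?_)
      rw [mem_inv_iff] at hRi ⊢
      intro M hM
      have e1 := hRi M hM
      rw [_root_.map_mul, (mem_inv_iff _ _).mp hPol_inv M hM] at e1
      exact mul_left_cancel₀ hPol_ne_zero e1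
    by_cases h12 : 12 ∣ k
    · obtain ⟨m, rfl⟩ := h12
      have e := hdiv (R - C (eval ![sA, 1] R / (eval ![sA, 1] tPol) ^ m) * tPol ^ m)
        (hhom.sub ((tPol_homog.pow m).C_mul _))
        (Subalgebra.sub_mem _ hinv (Subalgebra.mul_mem _ (Subalgebra.algebraMap_mem _ _)
          (Subalgebra.pow_mem _ tPol_inv m)))
        (by
          simp only [_root_.map_sub, _root_.map_mul, eval_C, map_pow]
          field_simp
          simp)
      have e2 := A.add_mem e (A.mul_mem (A.algebraMap_mem
        (eval ![sA, 1] R / (eval ![sA, 1] tPol) ^ m)) (A.pow_mem ht m))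
      rw [MvPolynomial.algebraMap_eq, sub_add_cancel] at e2
      exact e2
    · refine hdiv R hhom hinv ?_
      have e1 : eval ((gA * gB).mulVec ![sA, 1]) R = eval ![sA, 1] R := by
        rw [← Matrix.mulVec_mulVec, hinv gA (by simp), hinv gB (by simp)]
      rw [← Matrix.mulVec_mulVec, heig, ← hζ2, eval_smul_of_homog hhom] at e1
      by_contra hne
      have e2 : ζ ^ k = 1 := by
        have := mul_right_cancel₀ hne (e1.trans (one_mul _).symm)
        exact this
      exact h12 (hζ.dvd_of_pow_eq_one k e2)

/-! ### Derivatives at `q₁` -/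

theorem eval_dir_tPol (v u : Fin 2 → ℂ) : eval v (dirDeriv u tPol) =
    u 0 * (12 * v 0 ^ 11 - 264 * v 0 ^ 7 * v 1 ^ 4 - 132 * v 0 ^ 3 * v 1 ^ 8)
    + u 1 * (- 132 * v 0 ^ 8 * v 1 ^ 3 - 264 * v 0 ^ 4 * v 1 ^ 7 + 12 * v 1 ^ 11) := by
  have e : ∀ n, pderiv n (33 : MvPolynomial (Fin 2) ℂ) = 0 := fun n => by
    rw [show (33 : MvPolynomial (Fin 2) ℂ) = C 33 by rw [map_ofNat], pderiv_C]
  simp [dirDeriv, tPol, pderiv_X, e, Derivation.leibniz_pow]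
  ring

theorem eval_dir_hPol (v u : Fin 2 → ℂ) : eval v (dirDeriv u hPol) =
    u 0 * (8 * v 0 ^ 7 + 56 * v 0 ^ 3 * v 1 ^ 4)
    + u 1 * (56 * v 0 ^ 4 * v 1 ^ 3 + 8 * v 1 ^ 7) := by
  have e : ∀ n, pderiv n (14 : MvPolynomial (Fin 2) ℂ) = 0 := fun n => by
    rw [show (14 : MvPolynomial (Fin 2) ℂ) = C 14 by rw [map_ofNat], pderiv_C]
  simp [dirDeriv, hPol, pderiv_X, e, Derivation.leibniz_pow]
  ring

theorem dirDeriv_C_mul (c : ℂ) (u v : Fin 2 → ℂ) (P : MvPolynomial (Fin 2) ℂ) :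
    eval v (dirDeriv u (C c * P)) = c * eval v (dirDeriv u P) := by
  simp [dirDeriv, Derivation.leibniz]; ring

theorem compat_aux (n m r2 : ℂ) (hn : n ^ 2 = (3 - w3) / 12) (hnm : n * m = r2 * w3 / 12)
    (hr : r2 ^ 2 = 2) (q₁ q₂ : Fin 2 → ℂ) (hq₁ : q₁ = n • ![1 + w3, -1 - Complex.I])
    (hq₂ : q₂ = m • ![w3 - 1, 1 + Complex.I]) (x : Fin 2 → MvPolynomial (Fin 2) ℂ)
    (hx1 : x 0 = C (w3 / 16) * tPol) (hx2 : x 1 = C (3 / (8 * r2)) * hPol) :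
    IsCompatible ![q₁, q₂] q₁ x := by
  have hI := Complex.I_sq
  have hw := w3_sq
  have hr0 : r2 ≠ 0 := fun h => by rw [h] at hr; norm_num at hr
  have hn4 : n ^ 4 = (2 - w3) / 24 := by
    linear_combination (n ^ 2 + (3 - w3) / 12) * hn + hw / 144
  have hn6 : n ^ 6 = (9 - 5 * w3) / 288 := by
    linear_combination n ^ 2 * hn4 + (2 - w3) / 24 * hn + hw / 288
  have hn8 : n ^ 8 = (7 - 4 * w3) / 576 := by
    linear_combination (n ^ 4 + (2 - w3) / 24) * hn4 + hw / 576
  have hn10 : n ^ 10 = (33 - 19 * w3) / 6912 := by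
    linear_combination n ^ 2 * hn8 + (7 - 4 * w3) / 576 * hn + 4 * hw / 6912
  have hn12 : n ^ 12 = (26 - 15 * w3) / 13824 := by
    linear_combination n ^ 4 * hn8 + (7 - 4 * w3) / 576 * hn4 + 4 * hw / 13824
  set a : ℂ := 1 + w3 with ha
  set b : ℂ := -1 - Complex.I with hb
  have a2 : a ^ 2 = 4 + 2 * w3 := by rw [ha]; linear_combination hw
  have a4 : a ^ 4 = 28 + 16 * w3 := by
    linear_combination (a ^ 2 + 4 + 2 * w3) * a2 + 4 * hw
  have a8 : a ^ 8 = 1552 + 896 * w3 := by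
    linear_combination (a ^ 4 + 28 + 16 * w3) * a4 + 256 * hw
  have a12 : a ^ 12 = 86464 + 49920 * w3 := by
    linear_combination a ^ 4 * a8 + (1552 + 896 * w3) * a4 + 896 * 16 * hw
  have b2 : b ^ 2 = 2 * Complex.I := by rw [hb]; linear_combination hI
  have b4 : b ^ 4 = -4 := by
    linear_combination (b ^ 2 + 2 * Complex.I) * b2 + 4 * hI
  have b8 : b ^ 8 = 16 := by linear_combination (b ^ 4 - 4) * b4
  have b12 : b ^ 12 = -64 := by linear_combination b ^ 4 * b8 + 16 * b4
  have hac : a * (w3 - 1) = 2 := by rw [ha]; linear_combination hw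
  have hbd : 1 + Complex.I = -b := by rw [hb]; ring
  have q10 : q₁ 0 = n * a := by rw [hq₁]; simp
  have q11 : q₁ 1 = n * b := by rw [hq₁]; simp
  have q20 : q₂ 0 = m * (w3 - 1) := by rw [hq₂]; simp
  have q21 : q₂ 1 = - (m * b) := by rw [hq₂, hbd]; simp
  intro α β
  fin_cases α <;> fin_cases β
  · simp [hx1, dirDeriv_C_mul, eval_dir_tPol, q10, q11]
    have e : a ^ 12 - 33 * a ^ 8 * b ^ 4 - 33 * a ^ 4 * b ^ 8 + b ^ 12
        = 276480 + 159744 * w3 := by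
      rw [a12, a8, a4, b12, b8, b4]; ring
    linear_combination (w3 / 16 * 12 * n ^ 12) * e
      + (w3 / 16 * 12) * (276480 + 159744 * w3) * hn12 + (1 / 3 - 130 * w3) * hw
  · simp [hx1, dirDeriv_C_mul, eval_dir_tPol, q10, q11, q20, q21]
    have e : (w3 - 1) * (12 * a ^ 11 - 264 * a ^ 7 * b ^ 4 - 132 * a ^ 3 * b ^ 8)
      - b * (- 132 * a ^ 8 * b ^ 3 - 264 * a ^ 4 * b ^ 7 + 12 * b ^ 11) = 0 := by
      have e' : (w3 - 1) * (12 * a ^ 11 - 264 * a ^ 7 * b ^ 4 - 132 * a ^ 3 * b ^ 8)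
        = 2 * (a ^ 2 * (12 * a ^ 8 - 264 * a ^ 4 * b ^ 4 - 132 * b ^ 8)) := by
        linear_combination (a ^ 2 * (12 * a ^ 8 - 264 * a ^ 4 * b ^ 4 - 132 * b ^ 8)) * hac
      have e2 : b * (- 132 * a ^ 8 * b ^ 3 - 264 * a ^ 4 * b ^ 7 + 12 * b ^ 11)
        = - 132 * a ^ 8 * b ^ 4 - 264 * a ^ 4 * b ^ 8 + 12 * b ^ 12 := by ring
      rw [e', e2, a2, a4, a8, b4, b8, b12]
      linear_combination 110592 * hw
    first
      | (right; linear_combination n ^ 11 * m * e)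
      | linear_combination w3 / 16 * n ^ 11 * m * e
  · simp [hx2, dirDeriv_C_mul, eval_dir_hPol, q10, q11]
    have e : a ^ 8 + 14 * a ^ 4 * b ^ 4 + b ^ 8 = 0 := by
      rw [a8, a4, b8, b4]; ring
    first
      | (right; linear_combination 8 * n ^ 8 * e)
      | linear_combination 3 / (8 * r2) * 8 * n ^ 8 * e
  · simp only [Fin.mk_one, Matrix.cons_val_one, Matrix.cons_val_fin_one, Matrix.cons_val_zero, hx2, dirDeriv_C_mul, eval_dir_hPol,
      q10, q11, q20, q21, if_true]
    have e : (w3 - 1) * (8 * a ^ 7 + 56 * a ^ 3 * b ^ 4)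
      - b * (56 * a ^ 4 * b ^ 3 + 8 * b ^ 7) = 7680 + 4608 * w3 := by
      have e' : (w3 - 1) * (8 * a ^ 7 + 56 * a ^ 3 * b ^ 4)
        = 2 * (a ^ 2 * (8 * a ^ 4 + 56 * b ^ 4)) := by
        linear_combination (a ^ 2 * (8 * a ^ 4 + 56 * b ^ 4)) * hac
      have e2 : b * (56 * a ^ 4 * b ^ 3 + 8 * b ^ 7) = 56 * a ^ 4 * b ^ 4 + 8 * b ^ 8 := by ring
      rw [e', e2, a2, a4, b4, b8]
      linear_combination 512 * hw
    have e3 : m * (w3 - 1) * (8 * (n * a) ^ 7 + 56 * (n * a) ^ 3 * (n * b) ^ 4)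
        + -(m * b) * (56 * (n * a) ^ 4 * (n * b) ^ 3 + 8 * (n * b) ^ 7) = 8 * r2 / 3 := by
      have : m * (w3 - 1) * (8 * (n * a) ^ 7 + 56 * (n * a) ^ 3 * (n * b) ^ 4)
        + -(m * b) * (56 * (n * a) ^ 4 * (n * b) ^ 3 + 8 * (n * b) ^ 7)
        = n ^ 6 * (n * m) * ((w3 - 1) * (8 * a ^ 7 + 56 * a ^ 3 * b ^ 4)
      - b * (56 * a ^ 4 * b ^ 3 + 8 * b ^ 7)) := by ring
      rw [this, e, hn6, hnm]
      linear_combination r2 * (8 / 9 - 20 / 3 * w3) * hw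
    rw [e3]
    field_simp

theorem mem_inv_gens {x : Fin 2 → MvPolynomial (Fin 2) ℂ} {c d : ℂ}
    (hx1 : x 0 = C c * tPol) (hx2 : x 1 = C d * hPol) (α : Fin 2) :
    x α ∈ matInvariantAlgebra {gA, gB} := by
  fin_cases α
  · rw [Fin.zero_eta, hx1]
    exact Subalgebra.mul_mem _ (Subalgebra.algebraMap_mem _ c) tPol_inv
  · rw [Fin.mk_one, hx2]
    exact Subalgebra.mul_mem _ (Subalgebra.algebraMap_mem _ d) hPol_inv

theorem basic_aux (x : Fin 2 → MvPolynomial (Fin 2) ℂ) (c d : ℂ) (hc : c ≠ 0) (hd : d ≠ 0)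
    (hx1 : x 0 = C c * tPol) (hx2 : x 1 = C d * hPol) (q : Fin 2 → ℂ)
    (hq0 : eval q tPol ≠ 0) (hq1 : eval q hPol = 0)
    (ζ : ℂ) (hζ : IsPrimitiveRoot ζ 12) (hζ2 : ζ = (w3 + Complex.I) / 2) :
    IsBasicInvariantsMat
      ((Submonoid.closure {gA, gB} : Submonoid (Matrix (Fin 2) (Fin 2) ℂ)) :
        Set (Matrix (Fin 2) (Fin 2) ℂ)) ![12, 8] x := by
  have hinv := fun α => mem_inv_closure _ _ (mem_inv_gens hx1 hx2 α)
  refine ⟨?_, hinv, ?_, ?_⟩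
  · intro α
    fin_cases α
    · simpa [hx1] using tPol_homog.C_mul c
    · simpa [hx2] using hPol_homog.C_mul d
  · refine algInd_of_line x q (c * eval q tPol) (mul_ne_zero hc hq0) ?_ ?_ ?_
    · intro s
      rw [hx1, _root_.map_mul, eval_C, eval_smul_of_homog tPol_homog]; ring
    · intro s
      rw [hx2, _root_.map_mul, eval_C, eval_smul_of_homog hPol_homog, hq1]; ring
    · rw [hx2]
      exact mul_ne_zero (by simpa using hd) hPol_ne_zero
  · apply le_antisymm
    · apply Algebra.adjoin_le
      rintro _ ⟨α, rfl⟩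
      exact hinv α
    · have hmem : ∀ α, x α ∈ Algebra.adjoin ℂ (Set.range x) :=
        fun α => Algebra.subset_adjoin ⟨α, rfl⟩
      have ht : tPol ∈ Algebra.adjoin ℂ (Set.range x) := by
        have := Subalgebra.mul_mem _ (Subalgebra.algebraMap_mem
          (Algebra.adjoin ℂ (Set.range x)) c⁻¹) (hmem 0)
        rwa [hx1, MvPolynomial.algebraMap_eq, ← mul_assoc, ← C_mul, inv_mul_cancel₀ hc, C_1,
          one_mul] at this
      have hh : hPol ∈ Algebra.adjoin ℂ (Set.range x) := by
        have := Subalgebra.mul_mem _ (Subalgebra.algebraMap_mem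
          (Algebra.adjoin ℂ (Set.range x)) d⁻¹) (hmem 1)
        rwa [hx2, MvPolynomial.algebraMap_eq, ← mul_assoc, ← C_mul, inv_mul_cancel₀ hd, C_1,
          one_mul] at this
      intro P hP
      refine gen_le _ ht hh ζ hζ hζ2 ?_
      intro M hM v
      exact hP M (Submonoid.subset_closure hM) v

/-- For `G₈ = ⟨r₄, r₄'⟩` with `g = r₄ r₄'` and `ζ = e^{πi/6}`:
`g` has eigenvalues `ζ, ζ^5` with the explicit eigenvectors `q₁, q₂`; `q₁` is a regular
vector; `(g, ζ, q₁)` is an admissible triplet of `G₈`; and, with `z` the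
`(g,ζ)`-graded coordinate system dual to `(q₁, q₂)`, the polynomials
`x₁ = (√3/16) t_O` and `x₂ = (3/(8√2)) h_O` form a set of basic invariants of `G₈`
(of degrees `12` and `8`) which is good with respect to `(g, ζ, q₁)` and compatible
with `z` at `q₁`. -/
theorem statement_19 (ζ : ℂ) (hζ : ζ = Complex.exp (Real.pi * Complex.I / 6))
    (r₄ r₄' : Matrix (Fin 2) (Fin 2) ℂ)
    (hr₄ : r₄ = !![1, 0; 0, Complex.I])
    (hr₄' : r₄' = (1 / 2 : ℂ) • !![1 + Complex.I, -1 + Complex.I;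
      -1 + Complex.I, 1 + Complex.I])
    (G8 : Submonoid (Matrix (Fin 2) (Fin 2) ℂ))
    (hG8 : G8 = Submonoid.closure {r₄, r₄'})
    (g : Matrix (Fin 2) (Fin 2) ℂ) (hg : g = r₄ * r₄')
    (q₁ q₂ : Fin 2 → ℂ)
    (hq₁ : q₁ = (1 / (Real.sqrt (6 + 2 * Real.sqrt 3) : ℂ)) •
      ![1 + (Real.sqrt 3 : ℂ), -1 - Complex.I])
    (hq₂ : q₂ = (1 / (Real.sqrt (6 - 2 * Real.sqrt 3) : ℂ)) •
      ![(Real.sqrt 3 : ℂ) - 1, 1 + Complex.I])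
    (tO hO : MvPolynomial (Fin 2) ℂ)
    (htO : tO = X 0 ^ 12 - 33 * X 0 ^ 8 * X 1 ^ 4 - 33 * X 0 ^ 4 * X 1 ^ 8 + X 1 ^ 12)
    (hhO : hO = X 0 ^ 8 + 14 * X 0 ^ 4 * X 1 ^ 4 + X 1 ^ 8)
    (x : Fin 2 → MvPolynomial (Fin 2) ℂ)
    (hx1 : x 0 = C ((Real.sqrt 3 : ℂ) / 16) * tO)
    (hx2 : x 1 = C (3 / (8 * (Real.sqrt 2 : ℂ))) * hO) :
    -- `ζ` is a primitive `12`-th root of unity and `g ∈ G₈`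
    IsPrimitiveRoot ζ 12 ∧ g ∈ G8 ∧
    -- `q₁, q₂` are eigenvectors of `g` with eigenvalues `ζ, ζ^5`
    g.mulVec q₁ = ζ • q₁ ∧ g.mulVec q₂ = ζ ^ 5 • q₂ ∧
    -- `q₁` is a regular vector of `G₈`, so `(g, ζ, q₁)` is an admissible triplet
    (∀ M ∈ G8, IsReflection M → M.mulVec q₁ ≠ q₁) ∧
    -- `x` is a set of basic invariants with degrees `12, 8`, good and compatible
    IsBasicInvariantsMat (G8 : Set (Matrix (Fin 2) (Fin 2) ℂ)) ![12, 8] x ∧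
    IsGood ![12, 8] ![q₁, q₂] q₁ x ∧
    IsCompatible ![q₁, q₂] q₁ x := by
  have hI := Complex.I_sq
  have hw := w3_sq
  have hζp : IsPrimitiveRoot ζ 12 := by
    have := Complex.isPrimitiveRoot_exp 12 (by norm_num)
    rw [hζ]
    convert this using 2
    push_cast; ring
  have hζ2 : ζ = (w3 + Complex.I) / 2 := by
    rw [hζ, show (Real.pi * Complex.I / 6 : ℂ) = ((Real.pi / 6 : ℝ) : ℂ) * Complex.I by
      push_cast; ring, Complex.exp_mul_I, ← Complex.ofReal_cos, ← Complex.ofReal_sin,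
      Real.cos_pi_div_six, Real.sin_pi_div_six, w3]
    push_cast; ring
  have hA : r₄ = gA := hr₄
  have hB : r₄' = gB := hr₄'
  have hT : tO = tPol := htO
  have hH : hO = hPol := hhO
  rw [hT] at hx1
  rw [hH] at hx2
  change x 0 = C (w3 / 16) * tPol at hx1
  obtain ⟨r2, hr2⟩ : ∃ r2 : ℂ, r2 = (Real.sqrt 2 : ℂ) := ⟨_, rfl⟩
  rw [← hr2] at hx2
  have hr : r2 ^ 2 = 2 := by
    rw [hr2, ← Complex.ofReal_pow, Real.sq_sqrt (by norm_num)]; norm_num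
  have hr0 : r2 ≠ 0 := fun h => by rw [h] at hr; norm_num at hr
  have hs3 : Real.sqrt 3 ^ 2 = 3 := Real.sq_sqrt (by norm_num)
  have hs3n := Real.sqrt_nonneg 3
  have hpos : 0 < 6 - 2 * Real.sqrt 3 := by nlinarith
  have hN1 : (Real.sqrt (6 + 2 * Real.sqrt 3) : ℂ) ^ 2 = 6 + 2 * w3 := by
    rw [← Complex.ofReal_pow, Real.sq_sqrt (by positivity), w3]; push_cast; ring
  have hN1' : (Real.sqrt (6 + 2 * Real.sqrt 3) : ℂ) ≠ 0 := by
    rw [Complex.ofReal_ne_zero]; positivity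
  have hN2' : (Real.sqrt (6 - 2 * Real.sqrt 3) : ℂ) ≠ 0 := by
    rw [Complex.ofReal_ne_zero]; exact (Real.sqrt_pos.mpr hpos).ne'
  have hN12 : (Real.sqrt (6 + 2 * Real.sqrt 3) : ℂ) * (Real.sqrt (6 - 2 * Real.sqrt 3) : ℂ)
      = 2 * r2 * w3 := by
    rw [hr2, w3, ← Complex.ofReal_mul, ← Real.sqrt_mul (by positivity),
      show (6 + 2 * Real.sqrt 3) * (6 - 2 * Real.sqrt 3) = 2 ^ 2 * (2 * 3) by nlinarith,
      Real.sqrt_mul (by norm_num), Real.sqrt_mul (by norm_num), Real.sqrt_sq (by norm_num)]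
    push_cast; ring
  generalize (Real.sqrt (6 + 2 * Real.sqrt 3) : ℂ) = N1 at hN1 hN1' hN12 hq₁
  generalize (Real.sqrt (6 - 2 * Real.sqrt 3) : ℂ) = N2 at hN2' hN12 hq₂
  obtain ⟨n, hn⟩ : ∃ n : ℂ, n = 1 / N1 := ⟨_, rfl⟩
  obtain ⟨m, hm⟩ : ∃ m : ℂ, m = 1 / N2 := ⟨_, rfl⟩
  rw [← hn] at hq₁
  rw [← hm] at hq₂
  change q₁ = n • ![1 + w3, -1 - Complex.I] at hq₁
  change q₂ = m • ![w3 - 1, 1 + Complex.I] at hq₂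
  have hn0 : n ≠ 0 := by rw [hn]; exact one_div_ne_zero hN1'
  have hn2 : n ^ 2 = (3 - w3) / 12 := by
    rw [hn, div_pow, hN1, one_pow]
    have : 6 + 2 * w3 ≠ 0 := by rw [← hN1]; exact pow_ne_zero _ hN1'
    rw [div_eq_div_iff this (by norm_num)]
    linear_combination 2 * hw
  have hnm : n * m = r2 * w3 / 12 := by
    rw [hn, hm, div_mul_div_comm, one_mul, hN12,
      div_eq_div_iff (by simp [hr0, w3_ne]) (by norm_num)]
    linear_combination (-2 * w3 ^ 2) * hr - 4 * hw
  have hcompat : IsCompatible ![q₁, q₂] q₁ x :=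
    compat_aux n m r2 hn2 hnm hr q₁ q₂ hq₁ hq₂ x hx1 hx2
  have hinv : ∀ α, x α ∈ matInvariantAlgebra (G8 : Set (Matrix (Fin 2) (Fin 2) ℂ)) := by
    intro α
    rw [hG8, hA, hB]
    exact mem_inv_closure _ _ (mem_inv_gens hx1 hx2 α)
  have hqs : q₁ = (n * (-1 - Complex.I)) • ![sA, 1] := by
    rw [hq₁]
    funext i; fin_cases i
    · simp [sA]; linear_combination (n * (1 + w3) / 2) * hI
    · simp
  have hgq : ∀ v, g.mulVec v = gA.mulVec (gB.mulVec v) := by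
    intro v; rw [hg, hA, hB, Matrix.mulVec_mulVec]
  refine ⟨hζp, ?_, ?_, ?_, ?_, ?_, ?_, hcompat⟩
  · rw [hg, hG8]
    exact Submonoid.mul_mem _ (Submonoid.subset_closure (by simp))
      (Submonoid.subset_closure (by simp))
  · rw [hgq, hqs, Matrix.mulVec_smul, Matrix.mulVec_smul, heig, hζ2, smul_comm]
  · rw [hgq, hq₂, Matrix.mulVec_smul, Matrix.mulVec_smul, smul_comm (ζ ^ 5), hζ2]
    congr 1
    rw [gB_mulVec, gA_mulVec]
    have h5 : ((w3 + Complex.I) / 2) ^ 5 = (-w3 + Complex.I) / 2 := by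
      have h2 : ((w3 + Complex.I) / 2) ^ 2 = (1 + w3 * Complex.I) / 2 := by
        linear_combination hw / 4 + hI / 4
      have h4 : ((w3 + Complex.I) / 2) ^ 4 = (-1 + w3 * Complex.I) / 2 := by
        linear_combination (((w3 + Complex.I) / 2) ^ 2 + (1 + w3 * Complex.I) / 2) * h2
          + Complex.I ^ 2 / 4 * hw + 3 / 4 * hI
      linear_combination ((w3 + Complex.I) / 2) * h4 + w3 / 4 * hI + Complex.I / 4 * hw
    rw [h5]
    funext i; fin_cases i
    · simp; linear_combination hI / 2 + hw / 2
    · simp; linear_combination (w3 / 2 + Complex.I / 2) * hI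
  · intro M hM hrefl hfix
    exact hrefl.1 (fix_eq_one _ x hinv _ q₁ hcompat M hM hfix)
  · rw [hG8, hA, hB]
    refine basic_aux x _ _ ?_ ?_ hx1 hx2 ![sA, 1] tPol_sA ?_ ζ hζp hζ2
    · exact div_ne_zero w3_ne (by norm_num)
    · exact div_ne_zero (by norm_num) (mul_ne_zero (by norm_num) hr0)
    · rw [eval_hPol]
      simp only [Matrix.cons_val_zero, Matrix.cons_val_one]
      rw [(pow4 sA_pow).1, sA_pow]
      linear_combination 16 * hw
  · intro α a h1 h2
    exfalso
    fin_cases α <;> simp [Fin.sum_univ_two] at h1 h2 <;> omega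

end
end Paper
end
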